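/- arXiv:0807.4334 — 13 statements merged into one kernel-verified Lean document; each statement's English description precedes it below -/
import Mathlib

section
/- Let R be a commutative ring, n ≥ 0 an integer, u_0,…,u_n, v_0,…,v_n, w elements of R, and ε ∈ {1,−1}. If in the polynomial ring R[Y] one has ∏_{i=0}^{n} (εY + w + v_i) = ε^{n+1} · ∏_{i=0}^{n} (Y + u_i), then ∏_{i=0}^{n} (1 + (εY + w + v_i)^2) = ∏_{i=0}^{n} (1 + (Y + u_i)^2) in R[Y]. -/
/-!
Let `i` be a formal square root of `-1`. Sending `P(Y)` to `P(Y + i) P(Y - i)`, the norm of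
`P(Y + i)` from `R[Y][i]` down to `R[Y]`, is multiplicative and sends the linear polynomial
`aY + b` to `a² + (aY + b)²`. Applying it to both sides of a relation between products of linear
polynomials gives the corresponding relation between products of sums of squares; signs disappear
because a constant `c` is sent to `c²`.
-/

section

open Polynomial

variable {R : Type*} [CommRing R]

/-- The multiplicative map `P(Y) ↦ P(Y + i) P(Y - i)` on `R[Y]`, where `i² = -1`: it turns a product
of formal Chern roots into the corresponding Pontrjagin product. It is encoded as the norm of
`P(Y + i)` from `R[Y][i]`, with `⟨X, 1⟩` standing for `Y + i`, so that its values lie in `R[Y]`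
by construction. -/
noncomputable def shiftNorm : R[X] →* R[X] :=
  (QuadraticAlgebra.norm (a := (-1 : R[X])) (b := 0)).comp
    (eval₂RingHom ((algebraMap R[X] (QuadraticAlgebra R[X] (-1) 0)).comp C) ⟨X, 1⟩)

theorem shiftNorm_C_mul_X_add_C (a b : R) :
    shiftNorm (C a * X + C b) = C a ^ 2 + (C a * X + C b) ^ 2 := by
  have h_shift : eval₂ ((algebraMap R[X] (QuadraticAlgebra R[X] (-1) 0)).comp C) ⟨X, 1⟩
      (C a * X + C b) = ⟨C a * X + C b, C a⟩ := by
    ext1 <;> simp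
  calc
    shiftNorm (C a * X + C b) = QuadraticAlgebra.norm ⟨C a * X + C b, C a⟩ :=
      congrArg QuadraticAlgebra.norm h_shift
    _ = C a ^ 2 + (C a * X + C b) ^ 2 := by
      rw [QuadraticAlgebra.norm_def]
      ring

theorem shiftNorm_X_add_C (b : R) : shiftNorm (X + C b) = 1 + (X + C b) ^ 2 := by
  simpa using shiftNorm_C_mul_X_add_C 1 b

theorem shiftNorm_C (c : R) : shiftNorm (C c) = C c ^ 2 := by
  simpa using shiftNorm_C_mul_X_add_C 0 c

theorem stmt0_general {ι κ : Type*} (s : Finset ι) (t : Finset κ) (a b : ι → R) (u : κ → R) (c : R)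
    (h : ∏ i ∈ s, (C (a i) * X + C (b i)) = C c * ∏ j ∈ t, (X + C (u j))) :
    ∏ i ∈ s, (C (a i) ^ 2 + (C (a i) * X + C (b i)) ^ 2) =
      C c ^ 2 * ∏ j ∈ t, (1 + (X + C (u j)) ^ 2) := by
  simpa only [map_prod, map_mul, shiftNorm_C_mul_X_add_C, shiftNorm_X_add_C, shiftNorm_C]
    using congrArg shiftNorm h

end

/-- If `∏ (εY + w + vᵢ) = ε^{n+1} ∏ (Y + uᵢ)` in `R[Y]` with `ε = ±1`,
then `∏ (1 + (εY + w + vᵢ)²) = ∏ (1 + (Y + uᵢ)²)` in `R[Y]`. -/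
theorem stmt0 (R : Type*) [CommRing R] (n : ℕ) (u v : Fin (n + 1) → R) (w ε : R)
    (hε : ε = 1 ∨ ε = -1)
    (h : ∏ i, (Polynomial.C ε * Polynomial.X + Polynomial.C (w + v i)) =
      Polynomial.C (ε ^ (n + 1)) * ∏ i, (Polynomial.X + Polynomial.C (u i))) :
    ∏ i, (1 + (Polynomial.C ε * Polynomial.X + Polynomial.C (w + v i)) ^ 2) =
      ∏ i, (1 + (Polynomial.X + Polynomial.C (u i)) ^ 2) := by
  have hε_sq : Polynomial.C ε ^ 2 = 1 := by rcases hε with rfl | rfl <;> simp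
  simpa only [map_pow, pow_right_comm _ (n + 1) 2, hε_sq, one_pow, one_mul]
    using stmt0_general Finset.univ Finset.univ (fun _ ↦ ε) (fun i ↦ w + v i) u (ε ^ (n + 1)) h
end

section
/- Let m ≥ 1, let n_1,…,n_m be positive integers, and let A_m be the generalized Bott ring determined by integers a^{(i)}_{l,j}. Consider the set S of all elements of the form b·ȳ_m + w̄, where b is a nonzero integer, w̄ lies in the ℤ-span of ȳ_1,…,ȳ_{m−1}, and (b·ȳ_m + w̄)^{n_m+1} = 0 in A_m. Then any two elements z, z′ of S are ℤ-linearly dependent: there exist integers s, t, not both zero, with s·z = t·z′ in A_m. (That is, S lies in a one-dimensional subspace of the degree-2 part of A_m.) -/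
/-!
Fix a stage `i` and some `k < i` with `0 < n k`. Setting `y_i = X`, `y_k = ε` with `ε² = 0`, and all
other variables to `0` kills every relation except `f_i`, which becomes
`X ^ (n i + 1) + ε A X ^ (n i)` with `A = ∑ l, a i l k`. If `(b ȳ_i + w̄) ^ (n i + 1) = 0`, this
element therefore divides `(b X + ε w_k) ^ (n i + 1)`. Comparing the two parts of the dual numbers
and cancelling `b ^ (n i)` gives `(n i + 1) w_k = b A`. As `ȳ_k = 0` whenever `n k = 0`, it follows
that `b` determines `w̄`: up to a rational factor, the only possible element is
`(n i + 1) ȳ_i + ∑ l, u_{i,l}`.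
-/

open MvPolynomial

/-- The defining relation `f_i = y_i ∏_{l=1}^{n_i} (y_i + ∑_{j<i} a^{(i)}_{l,j} y_j)`
of a generalized Bott tower. -/
noncomputable def bottRel (m : ℕ) (n : Fin m → ℕ)
    (a : (i : Fin m) → Fin (n i) → Fin m → ℤ) (i : Fin m) : MvPolynomial (Fin m) ℤ :=
  X i * ∏ l : Fin (n i),
    (X i + ∑ j ∈ Finset.univ.filter (fun j => j < i), C (a i l j) * X j)

/-- The generalized Bott ring `A_m = ℤ[y_1,…,y_m]/(f_1,…,f_m)`, the integral
cohomology ring of an `m`-stage generalized Bott manifold. -/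
abbrev BottRing (m : ℕ) (n : Fin m → ℕ)
    (a : (i : Fin m) → Fin (n i) → Fin m → ℤ) : Type :=
  MvPolynomial (Fin m) ℤ ⧸ Ideal.span (Set.range (bottRel m n a))

/-- `ȳ_i`, the class of `y_i` in the generalized Bott ring. -/
noncomputable def ybar (m : ℕ) (n : Fin m → ℕ)
    (a : (i : Fin m) → Fin (n i) → Fin m → ℤ) (i : Fin m) : BottRing m n a :=
  Ideal.Quotient.mk _ (X i)

open TrivSqZeroExt
open scoped Polynomial DualNumber

lemma map_dvd_map_of_mem_span_range {R S F ι : Type*} [CommSemiring R] [CommSemiring S]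
    [FunLike F R S] [RingHomClass F R S] (φ : F) {f : ι → R} {i : ι}
    (hf : ∀ j ≠ i, φ (f j) = 0) {p : R} (hp : p ∈ Ideal.span (Set.range f)) :
    φ (f i) ∣ φ p := by
  have hle : Ideal.span (Set.range f) ≤ (Ideal.span {φ (f i)}).comap φ := by
    rw [Ideal.span_le, Set.range_subset_iff]
    intro j
    rw [SetLike.mem_coe, Ideal.mem_comap, Ideal.mem_span_singleton]
    obtain rfl | hj := eq_or_ne j i
    · exact dvd_rfl
    · exact hf j hj ▸ dvd_zero _
  exact Ideal.mem_span_singleton.mp (hle hp)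

section DualNumber

variable {R ι : Type*} [CommSemiring R]

lemma inl_mul_prod_inl_add_inr (x : R) (c : ι → R) (s : Finset ι) :
    (inl x * ∏ l ∈ s, (inl x + inr (c l)) : R[ε]) =
      inl (x ^ (s.card + 1)) + inr ((∑ l ∈ s, c l) * x ^ s.card) := by
  classical
  induction s using Finset.induction_on with
  | empty => simp
  | insert l s hl ih =>
    rw [Finset.prod_insert hl, Finset.sum_insert hl, Finset.card_insert_of_notMem hl,
      mul_left_comm, ih]
    ext
    · simp [pow_succ']
    · simp only [snd_mul, snd_add, snd_inl, snd_inr, fst_add, fst_inl, fst_inr, smul_eq_mul,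
        op_smul_eq_smul]
      ring

lemma inl_add_inr_pow_succ (x c : R) (N : ℕ) :
    (inl x + inr c : R[ε]) ^ (N + 1) = inl (x ^ (N + 1)) + inr ((N + 1) * x ^ N * c) := by
  ext
  · simp
  · simp [mul_assoc]

lemma eq_mul_of_inl_add_inr_dvd {N : ℕ} {α β γ : R}
    (h : (inl (Polynomial.X ^ (N + 1)) + inr (Polynomial.C α * Polynomial.X ^ N) : R[X][ε]) ∣
      inl (Polynomial.C β * Polynomial.X ^ (N + 1)) + inr (Polynomial.C γ * Polynomial.X ^ N)) :
    γ = β * α := by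
  obtain ⟨q, hq⟩ := h
  have hfst : q.fst = Polynomial.C β := by
    have h := congrArg fst hq
    simp only [fst_add, fst_inl, fst_inr, fst_mul, add_zero, Polynomial.X_pow_mul] at h
    exact ((Polynomial.isRegular_X_pow (N + 1)).right h).symm
  have hsnd := congrArg (fun z : R[X][ε] => z.snd.coeff N) hq
  simpa [hfst, Polynomial.coeff_X_pow_mul', Polynomial.coeff_X_pow, mul_assoc, mul_comm β α]
    using hsnd

end DualNumber

section TriangularForm

variable {R σ : Type*} [CommSemiring R] [DecidableEq σ]

/-- The substitution `y_i = X`, `y_k = ε`, and `y_j = 0` for all other `j`, with values in the dual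
numbers over `R[X]`; it records a polynomial in `y_i` and `y_k` up to first order in `y_k`. -/
noncomputable def firstOrderEval (i k : σ) : MvPolynomial σ R →ₐ[R] R[X][ε] :=
  aeval fun j => if j = i then inl Polynomial.X else if j = k then ε else 0

lemma firstOrderEval_X_self (i k : σ) :
    firstOrderEval i k (X i : MvPolynomial σ R) = inl Polynomial.X := by
  simp [firstOrderEval]

lemma firstOrderEval_X_right {i k : σ} (h : k ≠ i) :
    firstOrderEval i k (X k : MvPolynomial σ R) = ε := by
  simp [firstOrderEval, h]

lemma firstOrderEval_X_of_ne {i j k : σ} (hi : j ≠ i) (hk : j ≠ k) :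
    firstOrderEval i k (X j : MvPolynomial σ R) = 0 := by
  simp [firstOrderEval, hi, hk]

lemma firstOrderEval_C (i k : σ) (r : R) :
    firstOrderEval i k (C r) = inl (Polynomial.C r) := by
  simp [firstOrderEval, algebraMap_eq_inl']

variable [Fintype σ] [Preorder σ] [DecidableLT σ]

/-- The linear form `b y_i + ∑_{j<i} w_j y_j`. Both the elements considered in the theorem and, with
`b = 1`, the factors of the relations of a generalized Bott ring have this shape. -/
noncomputable def triangularForm (i : σ) (b : R) (w : σ → R) : MvPolynomial σ R :=
  C b * X i + ∑ j ∈ Finset.univ.filter (fun j => j < i), C (w j) * X j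

lemma firstOrderEval_triangularForm {i k : σ} (hk : k < i) (b : R) (w : σ → R) :
    firstOrderEval i k (triangularForm i b w) =
      inl (Polynomial.C b * Polynomial.X) + inr (Polynomial.C (w k)) := by
  have hsum : ∑ j ∈ Finset.univ.filter (fun j => j < i),
      firstOrderEval i k (C (w j) * X j) = inr (Polynomial.C (w k)) := by
    rw [Finset.sum_eq_single_of_mem k (by simp [hk])]
    · rw [map_mul, firstOrderEval_C, firstOrderEval_X_right hk.ne, DualNumber.eps, inl_mul_inr,
        smul_eq_mul, mul_one]
    · intro j hj hjk
      have hji : j ≠ i := (Finset.mem_filter.mp hj).2.ne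
      rw [map_mul, firstOrderEval_X_of_ne hji hjk, mul_zero]
  rw [triangularForm, map_add, map_sum, hsum, map_mul, firstOrderEval_C, firstOrderEval_X_self,
    inl_mul]

lemma firstOrderEval_triangularForm_right {i k : σ} (hk : k < i) (b : R) (w : σ → R) :
    firstOrderEval i k (triangularForm k b w) = inr (Polynomial.C b) := by
  have hsum : ∑ j ∈ Finset.univ.filter (fun j => j < k),
      firstOrderEval i k (C (w j) * X j) = 0 := by
    refine Finset.sum_eq_zero fun j hj => ?_
    have hjk : j < k := (Finset.mem_filter.mp hj).2
    rw [map_mul, firstOrderEval_X_of_ne (hjk.trans hk).ne hjk.ne, mul_zero]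
  rw [triangularForm, map_add, map_sum, hsum, map_mul, firstOrderEval_C,
    firstOrderEval_X_right hk.ne, DualNumber.eps, inl_mul_inr, smul_eq_mul, mul_one, add_zero]

end TriangularForm

section BottRing

variable {m : ℕ} {n : Fin m → ℕ} {a : (i : Fin m) → Fin (n i) → Fin m → ℤ} {i k : Fin m}

lemma bottRel_eq_X_mul_prod_triangularForm (i : Fin m) :
    bottRel m n a i = X i * ∏ l, triangularForm i 1 (a i l) := by
  simp [bottRel, triangularForm]

lemma mk_triangularForm (i : Fin m) (b : ℤ) (w : Fin m → ℤ) :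
    (Ideal.Quotient.mk _ (triangularForm i b w) : BottRing m n a) =
      b • ybar m n a i + ∑ j ∈ Finset.univ.filter (fun j => j < i), w j • ybar m n a j := by
  simp [triangularForm, ybar]

lemma ybar_eq_zero_of_eq_zero (hi : n i = 0) : ybar m n a i = 0 := by
  have : IsEmpty (Fin (n i)) := hi ▸ Fin.isEmpty
  have hrel : bottRel m n a i = X i := by simp [bottRel]
  exact Ideal.Quotient.eq_zero_iff_mem.mpr (Ideal.subset_span ⟨i, hrel⟩)

lemma firstOrderEval_bottRel (hk : k < i) :
    firstOrderEval i k (bottRel m n a i) = inl (Polynomial.X ^ (n i + 1)) +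
      inr (Polynomial.C (∑ l, a i l k) * Polynomial.X ^ n i) := by
  simp only [bottRel_eq_X_mul_prod_triangularForm, map_mul, map_prod, firstOrderEval_X_self,
    firstOrderEval_triangularForm hk, map_one, one_mul, inl_mul_prod_inl_add_inr,
    Finset.card_univ, Fintype.card_fin, map_sum]

lemma firstOrderEval_bottRel_of_ne (hk : k < i) (hn : 0 < n k) {j : Fin m} (hj : j ≠ i) :
    firstOrderEval i k (bottRel m n a j) = 0 := by
  rw [bottRel_eq_X_mul_prod_triangularForm, map_mul]
  obtain rfl | hjk := eq_or_ne j k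
  · have hprod : firstOrderEval i j (∏ l, triangularForm j 1 (a j l)) = ε ^ n j := by
      simp [firstOrderEval_triangularForm_right hk]
    rw [hprod, firstOrderEval_X_right hj, ← pow_succ']
    exact pow_eq_zero_of_le (by lia : 2 ≤ n j + 1) DualNumber.eps_pow_two
  · rw [firstOrderEval_X_of_ne hj hjk, zero_mul]

lemma succ_mul_coeff_eq_mul_sum_of_pow_eq_zero (hk : k < i) (hn : 0 < n k) {b : ℤ} (hb : b ≠ 0)
    {w : Fin m → ℤ}
    (h : (b • ybar m n a i +
      ∑ j ∈ Finset.univ.filter (fun j => j < i), w j • ybar m n a j) ^ (n i + 1) = 0) :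
    (n i + 1) * w k = b * ∑ l, a i l k := by
  have hmem : triangularForm i b w ^ (n i + 1) ∈ Ideal.span (Set.range (bottRel m n a)) := by
    rwa [← Ideal.Quotient.eq_zero_iff_mem, map_pow, mk_triangularForm]
  have hpow : firstOrderEval i k (triangularForm i b w ^ (n i + 1)) =
      inl (Polynomial.C (b ^ (n i + 1)) * Polynomial.X ^ (n i + 1)) +
        inr (Polynomial.C ((n i + 1) * b ^ n i * w k) * Polynomial.X ^ n i) := by
    rw [map_pow, firstOrderEval_triangularForm hk, inl_add_inr_pow_succ]
    simp only [mul_pow, map_mul, map_add, map_pow, map_natCast, map_one]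
    ring_nf
  have hdvd := map_dvd_map_of_mem_span_range (firstOrderEval i k)
    (fun _ hj => firstOrderEval_bottRel_of_ne hk hn hj) hmem
  rw [firstOrderEval_bottRel hk, hpow] at hdvd
  refine mul_left_cancel₀ (pow_ne_zero (n i) hb) ?_
  linear_combination eq_mul_of_inl_add_inr_dvd hdvd

theorem stmt1_general {b b' : ℤ} (hb : b ≠ 0) (hb' : b' ≠ 0) {w w' : Fin m → ℤ}
    (h : (b • ybar m n a i +
      ∑ j ∈ Finset.univ.filter (fun j => j < i), w j • ybar m n a j) ^ (n i + 1) = 0)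
    (h' : (b' • ybar m n a i +
      ∑ j ∈ Finset.univ.filter (fun j => j < i), w' j • ybar m n a j) ^ (n i + 1) = 0) :
    b' • (b • ybar m n a i + ∑ j ∈ Finset.univ.filter (fun j => j < i), w j • ybar m n a j) =
      b • (b' • ybar m n a i +
        ∑ j ∈ Finset.univ.filter (fun j => j < i), w' j • ybar m n a j) := by
  have hcoeff {j : Fin m} (hj : j < i) (hn : 0 < n j) : b' * w j = b * w' j := by
    have hw := succ_mul_coeff_eq_mul_sum_of_pow_eq_zero hj hn hb h
    have hw' := succ_mul_coeff_eq_mul_sum_of_pow_eq_zero hj hn hb' h'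
    refine mul_left_cancel₀ (by positivity : (n i + 1 : ℤ) ≠ 0) ?_
    linear_combination b' * hw - b * hw'
  simp only [smul_add, Finset.smul_sum, smul_smul, mul_comm b' b]
  congr 1
  refine Finset.sum_congr rfl fun j hj => ?_
  obtain hn | hn := (n j).eq_zero_or_pos
  · rw [ybar_eq_zero_of_eq_zero hn, smul_zero, smul_zero]
  · rw [hcoeff (Finset.mem_filter.mp hj).2 hn]

end BottRing

/-- Lemma 3.1: the set of elements `b ȳ_m + w̄` with `b ≠ 0`,
`w̄` in the ℤ-span of `ȳ_1,…,ȳ_{m-1}` and `(b ȳ_m + w̄)^{n_m+1} = 0` lies in a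
one-dimensional subspace: any two of its elements are ℤ-linearly dependent. -/
theorem stmt1 (m : ℕ) (n : Fin (m + 1) → ℕ) (hn : ∀ i, 0 < n i)
    (a : (i : Fin (m + 1)) → Fin (n i) → Fin (m + 1) → ℤ)
    (b b' : ℤ) (hb : b ≠ 0) (hb' : b' ≠ 0) (w w' : Fin (m + 1) → ℤ)
    (h : (b • ybar (m + 1) n a (Fin.last m) +
        ∑ j ∈ Finset.univ.filter (fun j => j < Fin.last m), w j • ybar (m + 1) n a j) ^
          (n (Fin.last m) + 1) = 0)
    (h' : (b' • ybar (m + 1) n a (Fin.last m) +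
        ∑ j ∈ Finset.univ.filter (fun j => j < Fin.last m), w' j • ybar (m + 1) n a j) ^
          (n (Fin.last m) + 1) = 0) :
    ∃ s t : ℤ, (s ≠ 0 ∨ t ≠ 0) ∧
      s • (b • ybar (m + 1) n a (Fin.last m) +
          ∑ j ∈ Finset.univ.filter (fun j => j < Fin.last m), w j • ybar (m + 1) n a j) =
      t • (b' • ybar (m + 1) n a (Fin.last m) +
          ∑ j ∈ Finset.univ.filter (fun j => j < Fin.last m), w' j • ybar (m + 1) n a j) :=
  ⟨b', b, Or.inl hb', stmt1_general hb hb' h h'⟩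
end

section
/- Let m ≥ 1, let n_1,…,n_m be positive integers, and let A_m be the generalized Bott ring determined by integers a^{(i)}_{l,j}. Suppose b is a nonzero integer and w_1,…,w_{m−1} are integers such that (b·ȳ_m + Σ_{j=1}^{m−1} w_j ȳ_j)^{n_m+1} = 0 in A_m. Then (n_m+1)·Σ_{j=1}^{m−1} w_j ȳ_j = b · Σ_{l=1}^{n_m} ū_{m,l} in A_m, where ū_{m,l} = Σ_{j=1}^{m−1} a^{(m)}_{l,j} ȳ_j; equivalently, (n_m+1)·w_j = b·Σ_{l=1}^{n_m} a^{(m)}_{l,j} for every j = 1,…,m−1. -/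
open MvPolynomial

/-!
The claim is a comparison of subleading coefficients: if `X ∏ (X + c_l)` divides
`(b X + w)^(N + 1)`, the quotient is the constant `b^(N + 1)`, and the coefficients of `X^N` give
`(N + 1) b^N w = b^(N + 1) ∑ c_l`. The relation in the Bott ring is brought to this form by keeping
`y_i` as the variable `X`, sending `y_j` to `v_j ε` in the dual numbers for `j < i`, and killing the
later variables. Every other relation dies: for `k > i` because `y_k` does, and for `k < i` because
two of its factors become multiples of `ε`. The element `ε` remembers exactly the linear forms in
the `y_j`, so varying `v` recovers their coefficients.
-/

section LinearPow

open scoped Polynomial DualNumber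

variable {R : Type*} [CommRing R]

theorem coeff_C_mul_X_add_C_pow_succ (b w : R) (N : ℕ) :
    ((Polynomial.C b * Polynomial.X + Polynomial.C w) ^ (N + 1)).coeff N =
      (N + 1) * b ^ N * w := by
  have hlin : Polynomial.C b * Polynomial.X + Polynomial.C w =
      (Polynomial.X + Polynomial.C w).comp (Polynomial.C b * Polynomial.X) := by simp
  rw [hlin, ← Polynomial.pow_comp, Polynomial.comp_C_mul_X_coeff,
    Polynomial.coeff_X_add_C_pow, Nat.add_sub_cancel_left, Nat.choose_succ_self_right]
  push_cast
  ring

theorem mul_pow_mul_eq_pow_mul_nextCoeff_of_dvd {f : R[X]} (hf : f.Monic) {N : ℕ}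
    (hN : f.natDegree = N + 1) {b w : R}
    (h : f ∣ (Polynomial.C b * Polynomial.X + Polynomial.C w) ^ (N + 1)) :
    (N + 1) * b ^ N * w = b ^ (N + 1) * f.nextCoeff := by
  set g : R[X] := (Polynomial.C b * Polynomial.X + Polynomial.C w) ^ (N + 1)
  have hdeg : g.natDegree ≤ N + 1 := by
    simpa using Polynomial.natDegree_pow_le_of_le (N + 1)
      (Polynomial.natDegree_linear_le (a := b) (b := w))
  have hg : g = Polynomial.C g.leadingCoeff * f :=
    Polynomial.eq_leadingCoeff_mul_of_monic_of_dvd_of_natDegree_le hf h (hN ▸ hdeg)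
  have htop : b ^ (N + 1) = g.leadingCoeff := by
    have hb : g.coeff (N + 1) = b ^ (N + 1) := by
      simpa using Polynomial.coeff_pow_of_natDegree_le
        (Polynomial.natDegree_linear_le (a := b) (b := w)) (m := N + 1)
    rw [← hb, hg, Polynomial.coeff_C_mul, ← hN, hf.coeff_natDegree, mul_one, ← hg]
  calc (N + 1) * b ^ N * w = g.coeff N := (coeff_C_mul_X_add_C_pow_succ b w N).symm
    _ = (Polynomial.C g.leadingCoeff * f).coeff N := congrArg (Polynomial.coeff · N) hg
    _ = b ^ (N + 1) * f.nextCoeff := by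
      rw [Polynomial.coeff_C_mul, htop,
        Polynomial.nextCoeff_of_natDegree_pos (hN ▸ N.succ_pos), hN, Nat.add_sub_cancel]

theorem mul_pow_mul_eq_pow_mul_sum_of_X_mul_prod_dvd {ι : Type*} [Fintype ι] (c : ι → R) {b w : R}
    (h : Polynomial.X * ∏ l, (Polynomial.X + Polynomial.C (c l)) ∣
      (Polynomial.C b * Polynomial.X + Polynomial.C w) ^ (Fintype.card ι + 1)) :
    (Fintype.card ι + 1) * b ^ Fintype.card ι * w = b ^ (Fintype.card ι + 1) * ∑ l, c l := by
  nontriviality R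
  have hfactor : ∀ l ∈ Finset.univ, (Polynomial.X + Polynomial.C (c l)).Monic :=
    fun l _ ↦ Polynomial.monic_X_add_C (c l)
  have hprod : (∏ l, (Polynomial.X + Polynomial.C (c l))).Monic :=
    Polynomial.monic_prod_of_monic _ _ hfactor
  have hdeg : (Polynomial.X * ∏ l, (Polynomial.X + Polynomial.C (c l))).natDegree =
      Fintype.card ι + 1 := by
    rw [Polynomial.monic_X.natDegree_mul hprod, Polynomial.natDegree_prod_of_monic _ _ hfactor]
    simp [add_comm]
  have hnext : (Polynomial.X * ∏ l, (Polynomial.X + Polynomial.C (c l))).nextCoeff =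
      ∑ l, c l := by
    have hX : (Polynomial.X : R[X]).nextCoeff = 0 := by
      simpa using Polynomial.nextCoeff_X_add_C (0 : R)
    rw [Polynomial.monic_X.nextCoeff_mul hprod, Polynomial.Monic.nextCoeff_prod _ _ hfactor, hX]
    simp only [Polynomial.nextCoeff_X_add_C, zero_add]
  rw [← hnext]
  exact mul_pow_mul_eq_pow_mul_nextCoeff_of_dvd (Polynomial.monic_X.mul hprod) hdeg h

open TrivSqZeroExt in
theorem mul_eq_mul_sum_of_X_mul_prod_inr_dvd {ι : Type*} [Fintype ι] (c : ι → R) {b w : R}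
    (hb : b ∈ nonZeroDivisors R)
    (h : Polynomial.X * ∏ l, (Polynomial.X + Polynomial.C (inr (c l) : R[ε])) ∣
      (Polynomial.C (inl b) * Polynomial.X + Polynomial.C (inr w)) ^ (Fintype.card ι + 1)) :
    (Fintype.card ι + 1) * w = b * ∑ l, c l := by
  have heps : (inr (((Fintype.card ι + 1) * b ^ Fintype.card ι) • w) : R[ε]) =
      inr (b ^ (Fintype.card ι + 1) • ∑ l, c l) := by
    simpa only [← inl_mul_inr, inl_mul, inl_add, inl_natCast, inl_one, inl_pow, inr_sum] using
      mul_pow_mul_eq_pow_mul_sum_of_X_mul_prod_dvd (fun l ↦ (inr (c l) : R[ε])) h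
  have hmul : b ^ Fintype.card ι * ((Fintype.card ι + 1) * w) =
      b ^ Fintype.card ι * (b * ∑ l, c l) := by
    simpa only [smul_eq_mul, pow_succ, mul_assoc, mul_comm, mul_left_comm] using inr_injective heps
  exact (mul_cancel_left_mem_nonZeroDivisors (pow_mem hb _)).1 hmul

end LinearPow

section DualNumber

open scoped Polynomial DualNumber

variable {m : ℕ} (i : Fin m) (v : Fin m → ℤ)

/-- Evaluation at a first-order point of the `i`-th stage: `y_i` becomes the polynomial variable,
`y_k` becomes `v_k ε` for `k < i`, and the variables of the later stages vanish. The element `v_k ε`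
of the dual numbers is written `TrivSqZeroExt.inr (v k)`. -/
noncomputable def dualEval : MvPolynomial (Fin m) ℤ →ₐ[ℤ] ℤ[ε][X] :=
  aeval fun k ↦
    if k = i then Polynomial.X else if k < i then Polynomial.C (TrivSqZeroExt.inr (v k)) else 0

variable {i}

theorem dualEval_X_self : dualEval i v (X i) = Polynomial.X := by
  simp [dualEval]

theorem dualEval_X_of_lt {k : Fin m} (hk : k < i) :
    dualEval i v (X k) = Polynomial.C (TrivSqZeroExt.inr (v k)) := by
  simp [dualEval, hk, hk.ne]

theorem dualEval_X_of_gt {k : Fin m} (hk : i < k) : dualEval i v (X k) = 0 := by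
  simp [dualEval, hk.ne', hk.not_gt]

theorem dualEval_sum_lt {k : Fin m} (hk : k ≤ i) (c : Fin m → ℤ) :
    dualEval i v (∑ j with j < k, C (c j) * X j) =
      Polynomial.C (TrivSqZeroExt.inr (∑ j with j < k, c j * v j)) := by
  rw [map_sum, TrivSqZeroExt.inr_sum, map_sum]
  refine Finset.sum_congr rfl fun j hj ↦ ?_
  have hji : j < i := (Finset.mem_filter.1 hj).2.trans_le hk
  rw [← smul_eq_C_mul, map_smul, dualEval_X_of_lt v hji, Polynomial.smul_C,
    ← TrivSqZeroExt.inr_smul, smul_eq_mul]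

theorem dualEval_bottRel_self (n : Fin m → ℕ) (a : (i : Fin m) → Fin (n i) → Fin m → ℤ) :
    dualEval i v (bottRel m n a i) =
      Polynomial.X * ∏ l, (Polynomial.X +
        Polynomial.C (TrivSqZeroExt.inr (∑ j with j < i, a i l j * v j))) := by
  simp only [bottRel, map_mul, map_prod, map_add, dualEval_X_self, dualEval_sum_lt v le_rfl]

theorem dualEval_bottRel_of_lt {n : Fin m → ℕ} (a : (i : Fin m) → Fin (n i) → Fin m → ℤ)
    {k : Fin m} (hk : k < i) (hn : 0 < n k) : dualEval i v (bottRel m n a k) = 0 := by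
  simp only [bottRel, map_mul, map_prod, map_add, dualEval_X_of_lt v hk, dualEval_sum_lt v hk.le]
  -- `y_k` and the factor `l = 0` are both multiples of `ε`.
  rw [← Finset.mul_prod_erase _ _ (Finset.mem_univ ⟨0, hn⟩), ← mul_assoc, ← Polynomial.C_add,
    ← TrivSqZeroExt.inr_add, ← Polynomial.C_mul, TrivSqZeroExt.inr_mul_inr, Polynomial.C_0,
    zero_mul]

theorem dualEval_bottRel_of_gt (n : Fin m → ℕ) (a : (i : Fin m) → Fin (n i) → Fin m → ℤ)
    {k : Fin m} (hk : i < k) : dualEval i v (bottRel m n a k) = 0 := by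
  rw [bottRel, map_mul, dualEval_X_of_gt v hk, zero_mul]

theorem dualEval_bottRel_dvd_of_mem_span {n : Fin m → ℕ} (hn : ∀ k < i, 0 < n k)
    (a : (i : Fin m) → Fin (n i) → Fin m → ℤ) {p : MvPolynomial (Fin m) ℤ}
    (hp : p ∈ Ideal.span (Set.range (bottRel m n a))) :
    dualEval i v (bottRel m n a i) ∣ dualEval i v p := by
  suffices hle : Ideal.span (Set.range (bottRel m n a)) ≤
      (Ideal.span {dualEval i v (bottRel m n a i)}).comap (dualEval i v) from
    Ideal.mem_span_singleton.1 (hle hp)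
  rw [Ideal.span_le]
  rintro _ ⟨k, rfl⟩
  rw [SetLike.mem_coe, Ideal.mem_comap, Ideal.mem_span_singleton]
  rcases lt_trichotomy k i with hk | rfl | hk
  · exact dualEval_bottRel_of_lt v a hk (hn k hk) ▸ dvd_zero _
  · exact dvd_rfl
  · exact dualEval_bottRel_of_gt v n a hk ▸ dvd_zero _

end DualNumber

section BottRing

variable {m : ℕ} {n : Fin m → ℕ} (a : (i : Fin m) → Fin (n i) → Fin m → ℤ)

theorem mk_C_mul_X_add_sum_lt (i : Fin m) (b : ℤ) (w : Fin m → ℤ) :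
    (Ideal.Quotient.mk _ (C b * X i + ∑ j with j < i, C (w j) * X j) : BottRing m n a) =
      b • ybar m n a i + ∑ j with j < i, w j • ybar m n a j := by
  simp [ybar, zsmul_eq_mul]

theorem mul_sum_lt_eq_mul_sum_of_pow_eq_zero {i : Fin m} (hn : ∀ k < i, 0 < n k) {b : ℤ}
    (hb : b ≠ 0) (w v : Fin m → ℤ)
    (h : (b • ybar m n a i + ∑ j with j < i, w j • ybar m n a j) ^ (n i + 1) = 0) :
    ((n i : ℤ) + 1) * ∑ j with j < i, w j * v j =
      b * ∑ l : Fin (n i), ∑ j with j < i, a i l j * v j := by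
  have hdvd : dualEval i v (bottRel m n a i) ∣
      dualEval i v ((C b * X i + ∑ j with j < i, C (w j) * X j) ^ (n i + 1)) := by
    rw [← mk_C_mul_X_add_sum_lt, ← map_pow, Ideal.Quotient.eq_zero_iff_mem] at h
    exact dualEval_bottRel_dvd_of_mem_span v hn a h
  have hb_eval : dualEval i v (C b) = Polynomial.C (TrivSqZeroExt.inl b) :=
    (dualEval i v).commutes b
  rw [dualEval_bottRel_self, map_pow, map_add, map_mul, hb_eval, dualEval_X_self,
    dualEval_sum_lt v le_rfl] at hdvd
  simpa using mul_eq_mul_sum_of_X_mul_prod_inr_dvd (ι := Fin (n i)) _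
    (mem_nonZeroDivisors_of_ne_zero hb) (by rwa [Fintype.card_fin])

end BottRing

theorem stmt2_general (m : ℕ) (n : Fin m → ℕ) (a : (i : Fin m) → Fin (n i) → Fin m → ℤ)
    (i : Fin m) (hn : ∀ k < i, 0 < n k) (b : ℤ) (hb : b ≠ 0) (w : Fin m → ℤ)
    (h : (b • ybar m n a i + ∑ j with j < i, w j • ybar m n a j) ^ (n i + 1) = 0) :
    (((n i : ℤ) + 1) • ∑ j with j < i, w j • ybar m n a j =
      b • ∑ l : Fin (n i), ∑ j with j < i, a i l j • ybar m n a j) ∧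
    ∀ j : Fin m, j < i → ((n i : ℤ) + 1) * w j = b * ∑ l : Fin (n i), a i l j := by
  have hcoord : ∀ j < i, ((n i : ℤ) + 1) * w j = b * ∑ l : Fin (n i), a i l j := fun j hj ↦ by
    simpa [Pi.single_apply, hj] using
      mul_sum_lt_eq_mul_sum_of_pow_eq_zero a hn hb w (Pi.single j 1) h
  refine ⟨?_, hcoord⟩
  rw [Finset.sum_comm, Finset.smul_sum, Finset.smul_sum]
  refine Finset.sum_congr rfl fun j hj ↦ ?_
  rw [← Finset.sum_smul, smul_smul, smul_smul, hcoord j (Finset.mem_filter.1 hj).2]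

/-- key computation in Lemma 3.1: if `(b ȳ_m + ∑_{j<m} w_j ȳ_j)^{n_m+1} = 0`
in the generalized Bott ring with `b ≠ 0`, then `(n_m+1) ∑ w_j ȳ_j = b ∑_l ū_{m,l}`, and
equivalently `(n_m+1) w_j = b ∑_l a^{(m)}_{l,j}` for every `j < m`. -/
theorem stmt2 (m : ℕ) (n : Fin (m + 1) → ℕ) (hn : ∀ i, 0 < n i)
    (a : (i : Fin (m + 1)) → Fin (n i) → Fin (m + 1) → ℤ)
    (b : ℤ) (hb : b ≠ 0) (w : Fin (m + 1) → ℤ)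
    (h : (b • ybar (m + 1) n a (Fin.last m) +
        ∑ j ∈ Finset.univ.filter (fun j => j < Fin.last m), w j • ybar (m + 1) n a j) ^
          (n (Fin.last m) + 1) = 0) :
    (((n (Fin.last m) : ℤ) + 1) •
        ∑ j ∈ Finset.univ.filter (fun j => j < Fin.last m), w j • ybar (m + 1) n a j =
      b • ∑ l : Fin (n (Fin.last m)),
        ∑ j ∈ Finset.univ.filter (fun j => j < Fin.last m),
          a (Fin.last m) l j • ybar (m + 1) n a j) ∧
    ∀ j : Fin (m + 1), j < Fin.last m →
      ((n (Fin.last m) : ℤ) + 1) * w j = b * ∑ l : Fin (n (Fin.last m)), a (Fin.last m) l j := by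
  exact stmt2_general (m + 1) n a (Fin.last m) (fun k _ ↦ hn k) b hb w h
end

section
/- Let m ≥ 1, let n_1,…,n_m be positive integers, and let A_m be the generalized Bott ring determined by integers a^{(i)}_{l,j}. Let b_1,…,b_m be integers and suppose b_j ≠ 0 for some index j. Then (Σ_{i=1}^{m} b_i ȳ_i)^{n_j} ≠ 0 in A_m. -/
open MvPolynomial

/-!
Setting every generator except `y_j` to zero kills `f_i` for `i ≠ j`, because `y_i` divides `f_i`,
and turns `f_j` into `y_j ^ (n_j + 1)`, because the linear forms `u_{j,l}` only involve variables of
smaller index. This gives a ring homomorphism `A_m → ℤ[t]/(t ^ (n_j + 1))`, the cohomology of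
`ℂP^{n_j}`, under which `∑ b_i ȳ_i` goes to `b_j t`; and `(b_j t) ^ n_j = b_j ^ n_j t ^ n_j` is
nonzero since `t ^ n_j` belongs to a `ℤ`-basis of the target.
-/

theorem smul_root_X_pow_pow_eq_zero_iff {R : Type*} [CommRing R] {d k : ℕ} (hk : k < d) (c : R) :
    c • AdjoinRoot.root ((Polynomial.X : Polynomial R) ^ d) ^ k = 0 ↔ c = 0 := by
  refine ⟨fun h ↦ ?_, fun hc ↦ by rw [hc, zero_smul]⟩
  have hdvd : (Polynomial.X : Polynomial R) ^ d ∣ c • Polynomial.X ^ k := by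
    rwa [← AdjoinRoot.mk_X, ← map_pow, AdjoinRoot.smul_mk, AdjoinRoot.mk_eq_zero] at h
  simpa using Polynomial.X_pow_dvd_iff.mp hdvd k hk

theorem root_X_pow_pow_self {R : Type*} [CommRing R] (d : ℕ) :
    AdjoinRoot.root ((Polynomial.X : Polynomial R) ^ d) ^ d = 0 := by
  rw [← AdjoinRoot.mk_X, ← map_pow, AdjoinRoot.mk_self]

section

variable {m : ℕ} {n : Fin m → ℕ} {a : (i : Fin m) → Fin (n i) → Fin m → ℤ}
  {S : Type*} [CommRing S]

theorem aeval_single_bottRel_of_ne {i j : Fin m} (hij : i ≠ j) (t : S) :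
    aeval (Pi.single j t) (bottRel m n a i) = 0 := by
  rw [bottRel, map_mul, aeval_X, Pi.single_eq_of_ne hij, zero_mul]

theorem aeval_single_bottRel_self (j : Fin m) (t : S) :
    aeval (Pi.single j t) (bottRel m n a j) = t ^ (n j + 1) := by
  have aeval_lower (l : Fin (n j)) : aeval (Pi.single j t)
      (∑ k ∈ Finset.univ.filter (fun k => k < j), C (a j l k) * X k) = 0 := by
    rw [map_sum]
    refine Finset.sum_eq_zero fun k hk ↦ ?_
    rw [map_mul, aeval_X, Pi.single_eq_of_ne (Finset.mem_filter.mp hk).2.ne, mul_zero]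
  simp only [bottRel, map_mul, map_prod, map_add, aeval_X, aeval_lower, Pi.single_eq_same,
    add_zero, Finset.prod_const, Finset.card_univ, Fintype.card_fin, pow_succ']

theorem span_bottRel_le_ker_aeval_single {j : Fin m} {t : S} (ht : t ^ (n j + 1) = 0) :
    Ideal.span (Set.range (bottRel m n a)) ≤
      RingHom.ker (aeval (Pi.single j t) : MvPolynomial (Fin m) ℤ →ₐ[ℤ] S) := by
  rw [Ideal.span_le]
  rintro _ ⟨i, rfl⟩
  obtain rfl | hij := eq_or_ne i j
  · exact (aeval_single_bottRel_self i t).trans ht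
  · exact aeval_single_bottRel_of_ne hij t

namespace BottRing

/-- The homomorphism out of the generalized Bott ring that sends `ȳ_j` to an element `t` with
`t ^ (n_j + 1) = 0` and every other generator to `0`. For `t` the generator of
`ℤ[t]/(t ^ (n_j + 1))` it is the analogue of restricting cohomology classes to a copy of
`ℂP^{n_j}`. -/
noncomputable def evalSingle (j : Fin m) (t : S) (ht : t ^ (n j + 1) = 0) :
    BottRing m n a →+* S :=
  Ideal.Quotient.lift _ (aeval (Pi.single j t) : MvPolynomial (Fin m) ℤ →ₐ[ℤ] S).toRingHom
    fun _ hp ↦ span_bottRel_le_ker_aeval_single ht hp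

theorem evalSingle_ybar (j : Fin m) (t : S) (ht : t ^ (n j + 1) = 0) (i : Fin m) :
    evalSingle j t ht (ybar m n a i) = (Pi.single j t : Fin m → S) i :=
  aeval_X _ i

theorem evalSingle_sum_smul_ybar (j : Fin m) (t : S) (ht : t ^ (n j + 1) = 0) (b : Fin m → ℤ) :
    evalSingle j t ht (∑ i, b i • ybar m n a i) = b j • t := by
  simp only [map_sum, map_zsmul, evalSingle_ybar]
  rw [Fintype.sum_eq_single j fun i hij ↦ by rw [Pi.single_eq_of_ne hij, smul_zero],
    Pi.single_eq_same]

end BottRing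

end

/-- Lemma 3.2: if `x = ∑ b_i ȳ_i` with `b_j ≠ 0` for some `j`, then
`x^{n_j} ≠ 0` in the generalized Bott ring. -/
theorem stmt3 (m : ℕ) (n : Fin (m + 1) → ℕ) (hn : ∀ i, 0 < n i)
    (a : (i : Fin (m + 1)) → Fin (n i) → Fin (m + 1) → ℤ)
    (b : Fin (m + 1) → ℤ) (j : Fin (m + 1)) (hj : b j ≠ 0) :
    (∑ i, b i • ybar (m + 1) n a i) ^ (n j) ≠ 0 := by
  intro h
  have ht := root_X_pow_pow_self (R := ℤ) (n j + 1)
  have h_image := congrArg (BottRing.evalSingle j _ ht) h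
  rw [map_pow, map_zero, BottRing.evalSingle_sum_smul_ybar, smul_pow,
    smul_root_X_pow_pow_eq_zero_iff (Nat.lt_succ_self (n j))] at h_image
  exact pow_ne_zero _ hj h_image
end

section
/- Let m ≥ 1 and n ≥ 1 be integers, and let A_m be the generalized Bott ring determined by integers a^{(i)}_{l,j} in which every fiber dimension n_i equals n. Let D = (d_{ij}) be an m×m integer matrix with determinant ±1 such that (Σ_{j=1}^{m} d_{ij} ȳ_j)^{n+1} = 0 in A_m for every i = 1,…,m. Then there is exactly one index r ∈ {1,…,m} with d_{rm} ≠ 0, and for this r one has d_{rm} = ±1. -/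
open MvPolynomial

/-! Work modulo the square of the ideal generated by all variables except the last one, `y`. There
every relation but the last vanishes, and the last one becomes `y ^ n * (y + U)`, where `U` is the
sum of its linear forms `u_l` and `n` its fiber dimension. This is monic of degree `n + 1`, so it
divides `(d * y + v) ^ (n + 1) = d ^ (n + 1) * y ^ (n + 1) + (n + 1) * d ^ n * y ^ n * v`, where `v`
is a linear form in the other variables, only if `(n + 1) * v = d * U` or `d = 0`. Hence two rows of
`D` with nonzero last entries are proportional, which is impossible when `det D ≠ 0`; the only
nonzero entry of the last column then divides `det D`. -/

section CommSemiring

variable {R ι : Type*} [CommSemiring R]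

theorem mul_prod_add_of_pairwise_mul_eq_zero {s : Finset ι} {v : ι → R}
    (hv : (s : Set ι).Pairwise fun i j => v i * v j = 0) (x : R) :
    x * ∏ i ∈ s, (x + v i) = x ^ s.card * (x + ∑ i ∈ s, v i) := by
  classical
  induction s using Finset.induction_on with
  | empty => simp
  | insert i s hi ih =>
    have hvi : v i * ∑ j ∈ s, v j = 0 := by
      rw [Finset.mul_sum]
      refine Finset.sum_eq_zero fun j hj => hv (by simp) (by simp [hj]) ?_
      rintro rfl
      exact hi hj
    rw [Finset.prod_insert hi, Finset.sum_insert hi, Finset.card_insert_of_notMem hi]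
    calc x * ((x + v i) * ∏ j ∈ s, (x + v j))
        = (x + v i) * (x * ∏ j ∈ s, (x + v j)) := by ring
      _ = (x + v i) * (x ^ s.card * (x + ∑ j ∈ s, v j)) := by
        rw [ih (hv.mono (by simp))]
      _ = x ^ (s.card + 1) * (x + (v i + ∑ j ∈ s, v j))
            + x ^ s.card * (v i * ∑ j ∈ s, v j) := by ring
      _ = x ^ (s.card + 1) * (x + (v i + ∑ j ∈ s, v j)) := by rw [hvi, mul_zero, add_zero]

theorem add_pow_succ_of_sq_eq_zero (x : R) {y : R} (hy : y ^ 2 = 0) (n : ℕ) :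
    (x + y) ^ (n + 1) = x ^ (n + 1) + (n + 1) * x ^ n * y := by
  obtain ⟨k, hk⟩ := Polynomial.powAddExpansion x y (n + 1)
  simpa [hy] using hk

end CommSemiring

theorem pow_mul_eq_of_X_pow_mul_X_add_C_dvd {R : Type*} [CommRing R] {u a b : R}
    (hb : b ^ 2 = 0) {n : ℕ}
    (h : Polynomial.X ^ n * (Polynomial.X + Polynomial.C u) ∣
      (Polynomial.C a * Polynomial.X + Polynomial.C b) ^ (n + 1)) :
    a ^ n * ((n + 1) * b) = a ^ n * (a * u) := by
  obtain ⟨q, hq⟩ := h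
  have hCb : Polynomial.C b ^ 2 = 0 := by rw [← map_pow, hb, map_zero]
  have hcancel : Polynomial.C a ^ (n + 1) * Polynomial.X
      + ((n : Polynomial R) + 1) * Polynomial.C a ^ n * Polynomial.C b
        = (Polynomial.X + Polynomial.C u) * q := by
    apply (Polynomial.monic_X_pow n).isRegular.left
    rw [add_pow_succ_of_sq_eq_zero _ hCb] at hq
    linear_combination hq
  have heval := congrArg (Polynomial.eval (-u)) hcancel
  simp only [Polynomial.eval_add, Polynomial.eval_mul, Polynomial.eval_pow, Polynomial.eval_C,
    Polynomial.eval_X, Polynomial.eval_natCast, Polynomial.eval_one] at heval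
  linear_combination heval

section Det

variable {ι R : Type*} [Fintype ι] [DecidableEq ι] [CommRing R]

theorem det_eq_zero_of_smul_row_eq_smul_row [NoZeroDivisors R] {M : Matrix ι ι R}
    {i r : ι} (hir : i ≠ r) {b c : R} (hb : b ≠ 0) (h : b • M i = c • M r) : M.det = 0 := by
  have hdet : b * M.det = 0 := calc
    b * M.det = (M.updateRow i (b • M i)).det := by
      rw [Matrix.det_updateRow_smul, Matrix.updateRow_eq_self]
    _ = c * (M.updateRow i (M r)).det := by rw [h, Matrix.det_updateRow_smul]
    _ = 0 := by rw [Matrix.det_updateRow_eq_zero hir.symm, mul_zero]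
  exact (mul_eq_zero.1 hdet).resolve_left hb

theorem dvd_det_of_forall_dvd_col {M : Matrix ι ι R} {c : R} (j : ι) (h : ∀ i, c ∣ M i j) :
    c ∣ M.det := by
  rw [Matrix.det_eq_sum_mul_adjugate_col M j]
  exact Finset.dvd_sum fun i _ => (h i).mul_right _

end Det

section FirstOrder

variable (R : Type*) [CommSemiring R] (m : ℕ)

/-- Reduction of polynomials in `y_0, …, y_m` modulo the square of the ideal
`(y_0, …, y_{m-1})`, used to isolate the last defining relation of a generalized Bott ring. The
quotient is modelled as polynomials in `y_m` over the trivial square-zero extension of `R` by the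
free module on `y_0, …, y_{m-1}`. -/
noncomputable def firstOrder :
    MvPolynomial (Fin (m + 1)) R →ₐ[R] Polynomial (TrivSqZeroExt R (Fin m → R)) :=
  aeval (Fin.snoc (α := fun _ => Polynomial (TrivSqZeroExt R (Fin m → R)))
    (fun i => Polynomial.C (TrivSqZeroExt.inr (Pi.single i 1))) Polynomial.X)

variable {R m}

@[simp]
theorem firstOrder_X_last : firstOrder R m (X (Fin.last m)) = Polynomial.X := by
  simp [firstOrder]

@[simp]
theorem firstOrder_X_castSucc (i : Fin m) :
    firstOrder R m (X i.castSucc) = Polynomial.C (TrivSqZeroExt.inr (Pi.single i 1)) := by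
  simp [firstOrder]

@[simp]
theorem firstOrder_C (r : R) :
    firstOrder R m (C r) = Polynomial.C (TrivSqZeroExt.inl r) := by
  rw [← MvPolynomial.algebraMap_eq, AlgHom.commutes]
  rfl

theorem firstOrder_sum_C_mul_X (c : Fin (m + 1) → R) :
    firstOrder R m (∑ j, C (c j) * X j) =
      Polynomial.C (TrivSqZeroExt.inl (c (Fin.last m))) * Polynomial.X +
        Polynomial.C (TrivSqZeroExt.inr (Fin.init c)) := by
  have hinit : Fin.init c = ∑ j : Fin m, c j.castSucc • Pi.single j (1 : R) :=
    pi_eq_sum_univ' _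
  simp only [Fin.sum_univ_castSucc, map_add, map_sum, map_mul, firstOrder_C, firstOrder_X_last,
    firstOrder_X_castSucc, ← Polynomial.C_mul, TrivSqZeroExt.inl_mul_inr, hinit,
    TrivSqZeroExt.inr_sum]
  rw [add_comm]

theorem firstOrder_sum_lt (i : Fin (m + 1)) (c : Fin (m + 1) → R) :
    firstOrder R m (∑ j ∈ Finset.univ.filter (fun j => j < i), C (c j) * X j) =
      Polynomial.C (TrivSqZeroExt.inr (Fin.init fun j => if j < i then c j else 0)) := by
  have h := firstOrder_sum_C_mul_X fun j => if j < i then c j else 0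
  rw [if_neg (Fin.le_last i).not_gt] at h
  simpa [Finset.sum_filter, apply_ite, ite_mul] using h

end FirstOrder

section BottRing

theorem sum_smul_ybar {m : ℕ} {n : Fin m → ℕ} (a : (i : Fin m) → Fin (n i) → Fin m → ℤ)
    (d : Fin m → ℤ) :
    ∑ j, d j • ybar m n a j = Ideal.Quotient.mk _ (∑ j, C (d j) * X j) := by
  simp only [ybar, map_sum, ← map_zsmul, MvPolynomial.smul_eq_C_mul]

variable {m : ℕ} {n : Fin (m + 1) → ℕ} (a : (i : Fin (m + 1)) → Fin (n i) → Fin (m + 1) → ℤ)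

theorem firstOrder_bottRel_castSucc {i : Fin m} (hi : 0 < n i.castSucc) :
    firstOrder ℤ m (bottRel (m + 1) n a i.castSucc) = 0 := by
  have hfactor (c : Fin (m + 1) → ℤ) : firstOrder ℤ m (X i.castSucc) *
      firstOrder ℤ m (X i.castSucc +
        ∑ j ∈ Finset.univ.filter (fun j => j < i.castSucc), C (c j) * X j) = 0 := by
    rw [map_add, firstOrder_sum_lt, firstOrder_X_castSucc, mul_add, ← Polynomial.C_mul,
      ← Polynomial.C_mul, TrivSqZeroExt.inr_mul_inr, TrivSqZeroExt.inr_mul_inr, map_zero, add_zero]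
  rw [bottRel, ← Finset.mul_prod_erase _ _ (Finset.mem_univ ⟨0, hi⟩), map_mul, map_mul,
    ← mul_assoc, hfactor, zero_mul]

theorem firstOrder_bottRel_last :
    firstOrder ℤ m (bottRel (m + 1) n a (Fin.last m)) =
      Polynomial.X ^ n (Fin.last m) * (Polynomial.X +
        Polynomial.C (TrivSqZeroExt.inr (∑ l, Fin.init (a (Fin.last m) l)))) := by
  have hinit (c : Fin (m + 1) → ℤ) :
      Fin.init (fun j => if j < Fin.last m then c j else 0) = Fin.init c := by
    ext j
    simp [Fin.init, Fin.castSucc_lt_last]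
  simp only [bottRel, map_mul, map_prod, map_add, firstOrder_X_last, firstOrder_sum_lt, hinit]
  rw [mul_prod_add_of_pairwise_mul_eq_zero, Finset.card_fin, TrivSqZeroExt.inr_sum, map_sum]
  intro l _ l' _ _
  rw [← Polynomial.C_mul, TrivSqZeroExt.inr_mul_inr, map_zero]

theorem firstOrder_bottRel_last_dvd (hn : ∀ i : Fin m, 0 < n i.castSucc)
    {p : MvPolynomial (Fin (m + 1)) ℤ}
    (hp : p ∈ Ideal.span (Set.range (bottRel (m + 1) n a))) :
    firstOrder ℤ m (bottRel (m + 1) n a (Fin.last m)) ∣ firstOrder ℤ m p := by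
  rw [← Ideal.mem_span_singleton, ← Ideal.mem_comap]
  refine Ideal.span_le.2 ?_ hp
  rintro _ ⟨i, rfl⟩
  rw [SetLike.mem_coe, Ideal.mem_comap, Ideal.mem_span_singleton]
  cases i using Fin.lastCases with
  | last => exact dvd_rfl
  | cast i => simp [firstOrder_bottRel_castSucc a (hn i)]

theorem succ_smul_init_eq_of_pow_eq_zero (hn : ∀ i : Fin m, 0 < n i.castSucc)
    {d : Fin (m + 1) → ℤ}
    (hd : (∑ j, d j • ybar (m + 1) n a j) ^ (n (Fin.last m) + 1) = 0)
    (hlast : d (Fin.last m) ≠ 0) :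
    (n (Fin.last m) + 1 : ℤ) • Fin.init d =
      d (Fin.last m) • ∑ l, Fin.init (a (Fin.last m) l) := by
  rw [sum_smul_ybar, ← map_pow, Ideal.Quotient.eq_zero_iff_mem] at hd
  have hdvd := firstOrder_bottRel_last_dvd a hn hd
  rw [firstOrder_bottRel_last, map_pow, firstOrder_sum_C_mul_X] at hdvd
  have htsze := pow_mul_eq_of_X_pow_mul_X_add_C_dvd (by rw [sq, TrivSqZeroExt.inr_mul_inr]) hdvd
  have hcast : (n (Fin.last m) + 1 : TrivSqZeroExt ℤ (Fin m → ℤ)) =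
      TrivSqZeroExt.inl (n (Fin.last m) + 1 : ℤ) := by simp
  rw [hcast, TrivSqZeroExt.inl_pow] at htsze
  simp only [TrivSqZeroExt.inl_mul_inr] at htsze
  exact smul_right_injective _ (pow_ne_zero _ hlast) (TrivSqZeroExt.inr_injective htsze)

theorem smul_eq_smul_of_pow_eq_zero (hn : ∀ i : Fin m, 0 < n i.castSucc)
    {d e : Fin (m + 1) → ℤ}
    (hd : (∑ j, d j • ybar (m + 1) n a j) ^ (n (Fin.last m) + 1) = 0)
    (he : (∑ j, e j • ybar (m + 1) n a j) ^ (n (Fin.last m) + 1) = 0)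
    (hdlast : d (Fin.last m) ≠ 0) (helast : e (Fin.last m) ≠ 0) :
    e (Fin.last m) • d = d (Fin.last m) • e := by
  have hn1 : (n (Fin.last m) + 1 : ℤ) ≠ 0 := by positivity
  have hinit : e (Fin.last m) • Fin.init d = d (Fin.last m) • Fin.init e := by
    apply smul_right_injective _ hn1
    simp only [smul_comm (n (Fin.last m) + 1 : ℤ), succ_smul_init_eq_of_pow_eq_zero a hn hd hdlast,
      succ_smul_init_eq_of_pow_eq_zero a hn he helast]
    rw [smul_comm]
  ext j
  cases j using Fin.lastCases with
  | last => exact mul_comm _ _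
  | cast j => exact congrFun hinit j

end BottRing

theorem stmt4_general {m : ℕ} {n : Fin (m + 1) → ℕ} (hn : ∀ i : Fin m, 0 < n i.castSucc)
    (a : (i : Fin (m + 1)) → Fin (n i) → Fin (m + 1) → ℤ)
    (D : Fin (m + 1) → Fin (m + 1) → ℤ) (hdet : (Matrix.of D).det ≠ 0)
    (hD : ∀ i, (∑ j, D i j • ybar (m + 1) n a j) ^ (n (Fin.last m) + 1) = 0) :
    ∃ r, D r (Fin.last m) ∣ (Matrix.of D).det ∧ ∀ i, i ≠ r → D i (Fin.last m) = 0 := by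
  obtain ⟨r, hr⟩ : ∃ r, D r (Fin.last m) ≠ 0 := by
    by_contra! hcol
    exact hdet (Matrix.det_eq_zero_of_column_eq_zero (Fin.last m) hcol)
  have huniq : ∀ i, i ≠ r → D i (Fin.last m) = 0 := by
    intro i hir
    by_contra hi
    exact hdet (det_eq_zero_of_smul_row_eq_smul_row hir hr
      (smul_eq_smul_of_pow_eq_zero a hn (hD i) (hD r) hi hr))
  refine ⟨r, dvd_det_of_forall_dvd_col (Fin.last m) fun i => ?_, huniq⟩
  rcases eq_or_ne i r with rfl | hir
  · exact dvd_rfl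
  · rw [Matrix.of_apply, huniq i hir]
    exact dvd_zero _

/-- Case 1 in the proof of Lemma 4.1: in a generalized Bott ring with all
fiber dimensions equal to `n`, if `D` is a unimodular integer matrix with
`(∑_j d_{ij} ȳ_j)^{n+1} = 0` for all `i`, then exactly one entry of the last column of `D`
is nonzero, and that entry is `±1`. -/
theorem stmt4 (m : ℕ) (n : ℕ) (hn : 0 < n)
    (a : (i : Fin (m + 1)) → Fin n → Fin (m + 1) → ℤ)
    (D : Fin (m + 1) → Fin (m + 1) → ℤ)
    (hdet : (Matrix.of D).det = 1 ∨ (Matrix.of D).det = -1)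
    (hD : ∀ i, (∑ j, D i j • ybar (m + 1) (fun _ => n) a j) ^ (n + 1) = 0) :
    ∃ r, (D r (Fin.last m) = 1 ∨ D r (Fin.last m) = -1) ∧
      ∀ i, i ≠ r → D i (Fin.last m) = 0 := by
  have hunit := Int.isUnit_iff.2 hdet
  obtain ⟨r, hdvd, huniq⟩ := stmt4_general (fun _ => hn) a D hunit.ne_zero hD
  exact ⟨r, Int.isUnit_iff.1 (isUnit_of_dvd_unit hdvd hunit), huniq⟩
end

section
/- Let m ≥ 1, let n_1,…,n_m be positive integers, and let A_m be the generalized Bott ring on variables y_1,…,y_m determined by integers a^{(i)}_{l,j}; let A_{m−1} denote the generalized Bott ring on y_1,…,y_{m−1} with relations f_1,…,f_{m−1}. Suppose there exists a ring isomorphism φ : ℤ[x_1,…,x_m]/(x_1^{n_1+1},…,x_m^{n_m+1}) → A_m such that each φ(x_i) lies in the ℤ-span of ȳ_1,…,ȳ_m. Then there exists a ring isomorphism ℤ[x_1,…,x_{m−1}]/(x_1^{n_1+1},…,x_{m−1}^{n_{m−1}+1}) → A_{m−1}. -/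
open MvPolynomial

/-- The ideal `(x_1^{n_1+1}, …, x_k^{n_k+1})` of `ℤ[x_1,…,x_k]`. -/
noncomputable def truncIdeal (k : ℕ) (n : Fin k → ℕ) : Ideal (MvPolynomial (Fin k) ℤ) :=
  Ideal.span (Set.range fun i => X i ^ (n i + 1))

/-- `ℤ[x_1,…,x_k]/(x_1^{n_1+1},…,x_k^{n_k+1})`, the integral cohomology ring of
`∏ᵢ ℂP^{nᵢ}`. -/
abbrev TruncRing (k : ℕ) (n : Fin k → ℕ) : Type :=
  MvPolynomial (Fin k) ℤ ⧸ truncIdeal k n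

/-!
Write `N = n_m` and let `d_i` be the `ȳ_m`-coordinate of `φ(x_i)`, so that `d_i = 0` when `n_i < N`,
because `φ(x_i) ^ (n_i + 1) = 0`. The last relation writes `0` as a product of `N + 1` linear forms
in the `ȳ_j`, one of them `ȳ_m` itself, all with `ȳ_m`-coordinate `1`. Pulled back along `φ`, they
become linear forms `c_l` in the `x_i` with `c_l(d) = 1` whose product lies in
`(x_i ^ (n_i + 1))_i`; once the variables with `n_i < N` are set to `0`, that product is a diagonal
form `∑ D_i x_i ^ (N + 1)`. Evaluating at `d` yields a `k` with `D_k d_k ≠ 0`, and the derivative at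
the `k`-th basis vector in the direction `d` gives `∑_l 1 / c_{l,k} = (N + 1) d_k`; as the `c_{l,k}`
are nonzero integers, `c_{l,k} d_k = 1` for all `l`. So `n_k = N` and `x_k` enters `ȳ_m` with a unit
coefficient: modulo `ȳ_m`, the remaining `x_i` generate `A_{m-1}`, and a surjection between free
abelian groups of the same finite rank is bijective.
-/

/-! ### Products of linear forms in a truncation ideal -/

theorem mul_eq_one_of_sum_inv_eq {ι : Type*} [Fintype ι] {c : ι → ℤ} {d : ℤ} (hd : d ≠ 0)
    (hc : ∀ l, c l ≠ 0) (h : ∑ l, (c l : ℚ)⁻¹ = Fintype.card ι * d) (l : ι) : c l * d = 1 := by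
  -- Each `(c l)⁻¹ * d` is at most `d ^ 2`, which is also their average.
  have inv_mul_le (l : ι) : (c l : ℚ)⁻¹ * d ≤ d * d := by
    have hcl : |(c l : ℚ)⁻¹| ≤ 1 := by
      rw [abs_inv]
      exact inv_le_one_of_one_le₀ (by exact_mod_cast Int.one_le_abs (hc l))
    have hd_abs : (1 : ℚ) ≤ |(d : ℚ)| := by exact_mod_cast Int.one_le_abs hd
    calc (c l : ℚ)⁻¹ * d ≤ |(c l : ℚ)⁻¹| * |(d : ℚ)| := (le_abs_self _).trans_eq (abs_mul _ _)
      _ ≤ |(d : ℚ)| * |(d : ℚ)| := mul_le_mul_of_nonneg_right (hcl.trans hd_abs) (abs_nonneg _)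
      _ = d * d := abs_mul_abs_self _
  have sum_eq : ∑ l, (c l : ℚ)⁻¹ * d = ∑ _l : ι, (d * d : ℚ) := by
    rw [← Finset.sum_mul, h, Finset.sum_const, Finset.card_univ, nsmul_eq_mul, mul_assoc]
  have inv_mul_eq : (c l : ℚ)⁻¹ * d = d * d :=
    (Finset.sum_eq_sum_iff_of_le fun l _ => inv_mul_le l).1 sum_eq l (Finset.mem_univ l)
  have inv_eq : (c l : ℚ)⁻¹ = d := mul_right_cancel₀ (by exact_mod_cast hd) inv_mul_eq
  have : (c l : ℚ) * d = 1 := by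
    rw [← inv_eq, mul_inv_cancel₀ (by exact_mod_cast hc l)]
  exact_mod_cast this

theorem sum_prod_erase_eq_of_prod_eq_diagonal {σ ι R : Type*} [Fintype σ] [Fintype ι]
    [DecidableEq ι] [Nontrivial ι] [CommRing R] {c : ι → σ → R} {d D : σ → R}
    (hprod : ∏ l, ∑ i, C (c l i) * X i = ∑ i, C (D i) * X i ^ Fintype.card ι)
    (hd : ∀ l, ∑ i, c l i * d i = 1) (k : σ) :
    ∑ l, ∏ l' ∈ Finset.univ.erase l, c l' k = D k * (Fintype.card ι * d k) := by
  -- Differentiate at the origin of the line through the `k`-th basis vector in the direction `d`.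
  classical
  let v : σ → Polynomial R := fun i =>
    (Pi.single k 1 : σ → Polynomial R) i + Polynomial.C (d i) * Polynomial.X
  have linear_eval (l : ι) :
      ∑ i, Polynomial.C (c l i) * v i = Polynomial.C (c l k) + Polynomial.X := by
    have hdl : ∑ i, Polynomial.C (c l i) * Polynomial.C (d i) = 1 := by
      simpa using congrArg Polynomial.C (hd l)
    simp [v, mul_add, Finset.sum_add_distrib, ← mul_assoc, ← Finset.sum_mul, hdl, Pi.single_apply]
  have prod_eval : ∏ l, (Polynomial.C (c l k) + Polynomial.X) =
      ∑ i, Polynomial.C (D i) * v i ^ Fintype.card ι := by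
    simpa [-coe_eval₂Hom, linear_eval] using congrArg (eval₂Hom Polynomial.C v) hprod
  have card_sub_one_ne_zero : Fintype.card ι - 1 ≠ 0 :=
    Nat.sub_ne_zero_of_lt Fintype.one_lt_card
  have eval_single (i : σ) :
      ((Pi.single k 1 : σ → Polynomial R) i).eval 0 = if i = k then 1 else 0 := by
    rw [Pi.single_apply]; split_ifs <;> simp
  have derivative_single (i : σ) :
      Polynomial.derivative ((Pi.single k 1 : σ → Polynomial R) i) = 0 := by
    rw [Pi.single_apply]; split_ifs <;> simp
  simpa [v, Polynomial.derivative_prod_finset, Polynomial.eval_finsetSum, Polynomial.eval_prod,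
    Polynomial.derivative_pow, eval_single, derivative_single, ite_pow,
    card_sub_one_ne_zero] using congrArg (fun p => (Polynomial.derivative p).eval 0) prod_eval

theorem exists_mul_eq_one_of_prod_eq_diagonal {σ ι : Type*} [Fintype σ] [Fintype ι] [Nontrivial ι]
    {c : ι → σ → ℤ} {d D : σ → ℤ}
    (hprod : ∏ l, ∑ i, C (c l i) * X i = ∑ i, C (D i) * X i ^ Fintype.card ι)
    (hd : ∀ l, ∑ i, c l i * d i = 1) : ∃ k, D k ≠ 0 ∧ ∀ l, c l k * d k = 1 := by
  classical
  have eval_d : ∑ i, D i * d i ^ Fintype.card ι = 1 := by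
    simpa [hd] using (congrArg (eval d) hprod).symm
  obtain ⟨k, -, hk⟩ := Finset.exists_ne_zero_of_sum_ne_zero (eval_d.trans_ne one_ne_zero)
  have hDk : D k ≠ 0 := left_ne_zero_of_mul hk
  have hdk : d k ≠ 0 := ne_zero_pow Fintype.card_ne_zero (right_ne_zero_of_mul hk)
  have prod_coeff : ∏ l, c l k = D k := by
    simpa [Pi.single_apply, ite_pow] using congrArg (eval (Pi.single k 1)) hprod
  have hck (l : ι) : c l k ≠ 0 :=
    Finset.prod_ne_zero_iff.1 (prod_coeff.trans_ne hDk) l (Finset.mem_univ l)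
  refine ⟨k, hDk, mul_eq_one_of_sum_inv_eq hdk hck ?_⟩
  have prod_erase (l : ι) :
      ((∏ l' ∈ Finset.univ.erase l, c l' k : ℤ) : ℚ) = D k * (c l k : ℚ)⁻¹ := by
    rw [eq_mul_inv_iff_mul_eq₀ (by exact_mod_cast hck l)]
    exact_mod_cast (Finset.prod_erase_mul _ _ (Finset.mem_univ l)).trans prod_coeff
  have hsum := congrArg (Int.cast : ℤ → ℚ) (sum_prod_erase_eq_of_prod_eq_diagonal hprod hd k)
  rw [Int.cast_sum, Finset.sum_congr rfl fun l _ => prod_erase l, ← Finset.mul_sum] at hsum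
  refine mul_left_cancel₀ (Int.cast_ne_zero.2 hDk) (hsum.trans ?_)
  push_cast
  rfl

theorem exists_lt_of_mem_truncIdeal {k : ℕ} {n : Fin k → ℕ} {P : MvPolynomial (Fin k) ℤ}
    (hP : P ∈ truncIdeal k n) {s : Fin k →₀ ℕ} (hs : s ∈ P.support) : ∃ i, n i < s i := by
  have truncIdeal_eq : truncIdeal k n = Ideal.span ((fun s => monomial s (1 : ℤ)) ''
      Set.range fun i => Finsupp.single i (n i + 1)) := by
    simp only [truncIdeal, X_pow_eq_monomial, ← Set.range_comp, Function.comp_def]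
  rw [truncIdeal_eq, mem_ideal_span_monomial_image] at hP
  obtain ⟨_, ⟨i, rfl⟩, hi⟩ := hP s hs
  exact ⟨i, Finsupp.single_le_iff.1 hi⟩

theorem eq_single_of_degree_le_apply {σ : Type*} {s : σ →₀ ℕ} {i : σ} (h : s.degree ≤ s i) :
    s = Finsupp.single i s.degree := by
  have degree_split : s.degree = s i + (s.erase i).degree := by
    conv_lhs => rw [← Finsupp.single_add_erase i s, map_add, Finsupp.degree_single]
  have erase_eq_zero : s.erase i = 0 := (Finsupp.degree_eq_zero_iff _).1 (by omega)
  have single_eq : Finsupp.single i (s i) = s := by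
    simpa [erase_eq_zero] using Finsupp.single_add_erase i s
  rw [le_antisymm h (Finsupp.le_degree i s), single_eq]

theorem exists_eq_single_of_mem_truncIdeal {k : ℕ} {n : Fin k → ℕ} {P : MvPolynomial (Fin k) ℤ}
    (hP : P ∈ truncIdeal k n) {N : ℕ} (hhom : P.IsHomogeneous (N + 1)) {s : Fin k →₀ ℕ}
    (hs : s ∈ P.support) (hsN : ∀ i, n i < N → s i = 0) :
    ∃ i, s = Finsupp.single i (N + 1) := by
  obtain ⟨i, hi⟩ := exists_lt_of_mem_truncIdeal hP hs
  have hNi : N ≤ n i := not_lt.1 fun h => by have := hsN i h; omega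
  have hdeg : s.degree = N + 1 := by
    rw [Finsupp.degree_eq_weight_one]
    exact hhom (mem_support_iff.1 hs)
  exact ⟨i, by rw [← hdeg]; exact eq_single_of_degree_le_apply (by omega)⟩

theorem eval₂Hom_eq_sum_of_mem_truncIdeal {k : ℕ} {n : Fin k → ℕ} {P : MvPolynomial (Fin k) ℤ}
    (hP : P ∈ truncIdeal k n) {N : ℕ} (hhom : P.IsHomogeneous (N + 1)) {R : Type*} [CommRing R]
    {v : Fin k → R} (hv : ∀ i, n i < N → v i = 0) :
    eval₂Hom (Int.castRingHom R) v P =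
      ∑ i, ((coeff (Finsupp.single i (N + 1)) P : ℤ) : R) * v i ^ (N + 1) := by
  have prod_single (i : Fin k) : ∏ j, v j ^ Finsupp.single i (N + 1) j = v i ^ (N + 1) := by
    rw [Finset.prod_eq_single i (fun j _ hj => by rw [Finsupp.single_eq_of_ne hj, pow_zero])
      (fun hi => absurd (Finset.mem_univ i) hi), Finsupp.single_eq_same]
  rw [coe_eval₂Hom, eval₂_eq', eq_comm]
  refine Finset.sum_bij_ne_zero (fun i _ _ => Finsupp.single i (N + 1)) ?_ ?_ ?_ ?_
  · intro i _ hi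
    refine mem_support_iff.2 fun h => hi ?_
    rw [h, Int.cast_zero, zero_mul]
  · intro i _ _ j _ _ hij
    exact Finsupp.single_left_injective N.succ_ne_zero hij
  · intro s hs hs0
    have hsN (i : Fin k) (hi : n i < N) : s i = 0 := by
      by_contra hsi
      refine hs0 (mul_eq_zero_of_right _ (Finset.prod_eq_zero (Finset.mem_univ i) ?_))
      rw [hv i hi, zero_pow hsi]
    obtain ⟨i, rfl⟩ := exists_eq_single_of_mem_truncIdeal hP hhom hs hsN
    exact ⟨i, Finset.mem_univ i, by simpa only [prod_single, eq_intCast] using hs0, rfl⟩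
  · intro i _ _
    rw [prod_single, eq_intCast]

theorem isHomogeneous_prod_linear {σ ι R : Type*} [Fintype σ] [Fintype ι] [CommSemiring R]
    (c : ι → σ → R) :
    (∏ l, ∑ i, C (c l i) * X i : MvPolynomial σ R).IsHomogeneous (Fintype.card ι) := by
  rw [← Finset.card_univ, Finset.card_eq_sum_ones]
  exact IsHomogeneous.prod _ _ _ fun l _ => IsHomogeneous.sum _ _ _ fun i _ =>
    isHomogeneous_C_mul_X (c l i) i

theorem exists_mul_eq_one_of_prod_mem_truncIdeal {m N : ℕ} {n : Fin m → ℕ} {ι : Type*} [Fintype ι]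
    [Nontrivial ι] (hι : Fintype.card ι = N + 1) {c : ι → Fin m → ℤ} {d : Fin m → ℤ}
    (hd : ∀ i, n i < N → d i = 0) (hcd : ∀ l, ∑ i, c l i * d i = 1)
    (hP : ∏ l, ∑ i, C (c l i) * X i ∈ truncIdeal m n) :
    ∃ k, n k = N ∧ ∀ l, c l k * d k = 1 := by
  -- Setting `X i = 0` whenever `n i < N` leaves only the monomials `X i ^ (N + 1)`.
  let P : MvPolynomial (Fin m) ℤ := ∏ l, ∑ i, C (c l i) * X i
  let c' : ι → Fin m → ℤ := fun l i => if n i < N then 0 else c l i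
  let D : Fin m → ℤ := fun i => if n i < N then 0 else coeff (Finsupp.single i (N + 1)) P
  have prod_eq_diagonal :
      ∏ l, ∑ i, C (c' l i) * X i = ∑ i, C (D i) * X i ^ Fintype.card ι := by
    have h := eval₂Hom_eq_sum_of_mem_truncIdeal hP (hι ▸ isHomogeneous_prod_linear c)
      (v := fun i => if n i < N then (0 : MvPolynomial (Fin m) ℤ) else X i)
      fun i hi => if_pos hi
    rw [hι]
    simpa [-coe_eval₂Hom, c', D, P, ite_pow, apply_ite] using h
  have hcd' (l : ι) : ∑ i, c' l i * d i = 1 := by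
    rw [← hcd l]
    refine Finset.sum_congr rfl fun i _ => ?_
    by_cases hi : n i < N
    · simp [hd i hi]
    · simp [c', hi]
  obtain ⟨k, hDk, hk⟩ := exists_mul_eq_one_of_prod_eq_diagonal prod_eq_diagonal hcd'
  have hNk : N ≤ n k := not_lt.1 fun h => hDk (if_pos h)
  have coeff_ne_zero : coeff (Finsupp.single k (N + 1)) P ≠ 0 := by
    simpa [D, hNk.not_gt] using hDk
  obtain ⟨i, hi⟩ := exists_lt_of_mem_truncIdeal hP (mem_support_iff.2 coeff_ne_zero)
  obtain rfl : k = i := by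
    by_contra h
    simp [h] at hi
  refine ⟨k, hNk.antisymm' ?_, fun l => by simpa [c', hNk.not_gt] using hk l⟩
  simpa [Nat.lt_succ_iff] using hi

/-! ### Generalized Bott rings as iterated extensions -/

theorem truncIdeal_eq_span_bottRel (k : ℕ) (n : Fin k → ℕ) :
    truncIdeal k n = Ideal.span (Set.range (bottRel k n fun _ _ _ => 0)) := by
  rw [truncIdeal]
  congr 2
  ext1 i
  simp [bottRel, pow_succ']

namespace TruncRing

variable {k : ℕ} {n : Fin k → ℕ} {R : Type*} [CommRing R]

/-- The ring homomorphism from the truncated polynomial ring sending `x_i` to `v i`. -/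
noncomputable def lift (v : Fin k → R)
    (hv : ∀ i, v i ^ (n i + 1) = 0) : TruncRing k n →+* R :=
  Ideal.Quotient.lift (truncIdeal k n) (eval₂Hom (Int.castRingHom R) v) fun p hp => by
    refine (Ideal.span_le (I := RingHom.ker (eval₂Hom (Int.castRingHom R) v))).2 ?_ hp
    rintro _ ⟨i, rfl⟩
    simp [hv]

theorem lift_mk_X (v : Fin k → R)
    (hv : ∀ i, v i ^ (n i + 1) = 0) (i : Fin k) :
    lift v hv (Ideal.Quotient.mk (truncIdeal k n) (X i)) = v i :=
  (Ideal.Quotient.lift_mk _ _ _).trans (eval₂Hom_X' _ _ _)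

theorem mk_X_pow_eq_zero (i : Fin k) :
    Ideal.Quotient.mk (truncIdeal k n) (X i) ^ (n i + 1) = 0 := by
  rw [← map_pow, Ideal.Quotient.eq_zero_iff_mem]
  exact Ideal.subset_span ⟨i, rfl⟩

theorem closure_range_mk_X (k : ℕ) (n : Fin k → ℕ) :
    Subring.closure (Set.range fun i => Ideal.Quotient.mk (truncIdeal k n) (X i)) = ⊤ := by
  rw [eq_top_iff]
  rintro x -
  obtain ⟨q, rfl⟩ := Ideal.Quotient.mk_surjective x
  induction q using MvPolynomial.induction_on with
  | C r => rw [eq_intCast C, map_intCast]; exact intCast_mem _ r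
  | add p q hp hq => rw [map_add]; exact add_mem hp hq
  | mul_X p i hp => rw [map_mul]; exact mul_mem hp (Subring.subset_closure ⟨i, rfl⟩)

theorem closure_range_map_mk_X {f : TruncRing k n →+* R}
    (hf : Function.Surjective f) :
    Subring.closure (Set.range fun i => f (Ideal.Quotient.mk (truncIdeal k n) (X i))) = ⊤ := by
  rw [Set.range_comp' f, ← RingHom.map_closure, closure_range_mk_X, ← RingHom.range_eq_map,
    RingHom.range_eq_top.2 hf]

/-- The truncated polynomial ring is the generalized Bott ring of the trivial tower, all of whose
parameters `a^{(i)}_{l,j}` vanish. -/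
noncomputable def equivBottRing (k : ℕ) (n : Fin k → ℕ) :
    TruncRing k n ≃+* BottRing k n fun _ _ _ => 0 :=
  Ideal.quotEquivOfEq (truncIdeal_eq_span_bottRel k n)

end TruncRing

namespace BottRing

section Lift

variable {m : ℕ} {n : Fin m → ℕ} {a : (i : Fin m) → Fin (n i) → Fin m → ℤ}
  {R : Type*} [CommRing R]

theorem eval₂Hom_bottRel (v : Fin m → R) (i : Fin m) :
    eval₂Hom (Int.castRingHom R) v (bottRel m n a i) = v i * ∏ l, (v i +
      ∑ j ∈ Finset.univ.filter (fun j => j < i), (a i l j : R) * v j) := by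
  simp [-coe_eval₂Hom, bottRel]

theorem eval₂Hom_bottRel_eq_zero (f : BottRing m n a →+* R) (i : Fin m) :
    eval₂Hom (Int.castRingHom R) (fun j => f (ybar m n a j)) (bottRel m n a i) = 0 := by
  have eval_eq : eval₂Hom (Int.castRingHom R) (fun j => f (ybar m n a j)) =
      f.comp (Ideal.Quotient.mk _) :=
    MvPolynomial.ringHom_ext (fun r => by simp) fun j => by simp [ybar]
  rw [eval_eq, RingHom.comp_apply,
    Ideal.Quotient.eq_zero_iff_mem.2 (Ideal.subset_span (Set.mem_range_self i)), map_zero]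

/-- The ring homomorphism from the generalized Bott ring sending `ȳ_i` to `v i`. -/
noncomputable def lift (v : Fin m → R)
    (hv : ∀ i, eval₂Hom (Int.castRingHom R) v (bottRel m n a i) = 0) : BottRing m n a →+* R :=
  Ideal.Quotient.lift _ (eval₂Hom (Int.castRingHom R) v) fun p hp => by
    refine (Ideal.span_le (I := RingHom.ker (eval₂Hom (Int.castRingHom R) v))).2 ?_ hp
    rintro _ ⟨i, rfl⟩
    exact hv i

@[simp]
theorem lift_ybar (v : Fin m → R)
    (hv : ∀ i, eval₂Hom (Int.castRingHom R) v (bottRel m n a i) = 0) (i : Fin m) :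
    lift v hv (ybar m n a i) = v i :=
  (Ideal.Quotient.lift_mk _ _ _).trans (eval₂Hom_X' _ _ _)

theorem hom_ext {f g : BottRing m n a →+* R} (h : ∀ i, f (ybar m n a i) = g (ybar m n a i)) :
    f = g :=
  Ideal.Quotient.ringHom_ext (MvPolynomial.ringHom_ext (fun r => by simp) h)

end Lift

section Tower

/-- The generalized Bott ring `A_{m-1}` of the tower obtained by forgetting the last stage. -/
abbrev Base {m : ℕ} (n : Fin (m + 1) → ℕ) (a : (i : Fin (m + 1)) → Fin (n i) → Fin (m + 1) → ℤ) :
    Type :=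
  BottRing m (fun i => n i.castSucc) (fun i l j => a i.castSucc l j.castSucc)

variable {m : ℕ} {n : Fin (m + 1) → ℕ} {a : (i : Fin (m + 1)) → Fin (n i) → Fin (m + 1) → ℤ}

theorem eval₂Hom_bottRel_castSucc {R : Type*} [CommRing R] (v : Fin (m + 1) → R) (i : Fin m) :
    eval₂Hom (Int.castRingHom R) v (bottRel (m + 1) n a i.castSucc) =
      eval₂Hom (Int.castRingHom R) (fun j => v j.castSucc)
        (bottRel m (fun i => n i.castSucc) (fun i l j => a i.castSucc l j.castSucc) i) := by
  simp [eval₂Hom_bottRel, Finset.sum_filter, Fin.sum_univ_castSucc, not_lt.2 (Fin.le_last _)]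

theorem eval₂Hom_bottRel_last {R : Type*} [CommRing R] (v : Fin (m + 1) → R) :
    eval₂Hom (Int.castRingHom R) v (bottRel (m + 1) n a (Fin.last m)) =
      v (Fin.last m) * ∏ l, (v (Fin.last m) +
        ∑ j : Fin m, (a (Fin.last m) l j.castSucc : R) * v j.castSucc) := by
  simp [eval₂Hom_bottRel, Finset.sum_filter, Fin.sum_univ_castSucc, Fin.castSucc_lt_last]

variable (n a)

/-- The inclusion `A_{m-1} → A_m`. -/
noncomputable def ofBase : Base n a →+* BottRing (m + 1) n a :=
  lift (fun j => ybar (m + 1) n a j.castSucc) fun i => by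
    rw [← eval₂Hom_bottRel_castSucc]
    exact eval₂Hom_bottRel_eq_zero (RingHom.id _) i.castSucc

/-- The retraction `A_m → A_{m-1}` killing the last generator. -/
noncomputable def toBase : BottRing (m + 1) n a →+* Base n a :=
  lift (Fin.lastCases 0 (ybar m _ _)) fun i => by
    induction i using Fin.lastCases with
    | last => simp [eval₂Hom_bottRel_last]
    | cast i =>
      rw [eval₂Hom_bottRel_castSucc]
      simp only [Fin.lastCases_castSucc]
      exact eval₂Hom_bottRel_eq_zero (RingHom.id _) i

theorem toBase_ybar_last : toBase n a (ybar (m + 1) n a (Fin.last m)) = 0 := by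
  simp [toBase]

theorem toBase_surjective : Function.Surjective (toBase n a) := by
  have toBase_comp_ofBase : (toBase n a).comp (ofBase n a) = RingHom.id _ :=
    hom_ext fun i => by simp [toBase, ofBase]
  exact fun x => ⟨ofBase n a x, congrArg (· x) toBase_comp_ofBase⟩

/-- The last relation of `A_m`, as a monic polynomial over `A_{m-1}` in the last generator. -/
noncomputable def lastRel : Polynomial (Base n a) :=
  Polynomial.X * ∏ l : Fin (n (Fin.last m)), (Polynomial.X +
    Polynomial.C (∑ j : Fin m, (a (Fin.last m) l j.castSucc : Base n a) * ybar m _ _ j))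

theorem monic_lastRel : (lastRel n a).Monic :=
  Polynomial.monic_X.mul (Polynomial.monic_prod_of_monic _ _ fun _ _ => Polynomial.monic_X_add_C _)

theorem natDegree_lastRel [Nontrivial (Base n a)] :
    (lastRel n a).natDegree = n (Fin.last m) + 1 := by
  have monic_factor (l : Fin (n (Fin.last m))) := Polynomial.monic_X_add_C
    (∑ j : Fin m, (a (Fin.last m) l j.castSucc : Base n a) * ybar m _ _ j)
  rw [lastRel, Polynomial.monic_X.natDegree_mul
    (Polynomial.monic_prod_of_monic _ _ fun l _ => monic_factor l),
    Polynomial.natDegree_prod_of_monic _ _ fun l _ => monic_factor l]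
  simp only [Polynomial.natDegree_X, Polynomial.natDegree_X_add_C, Finset.sum_const,
    Finset.card_univ, Fintype.card_fin, smul_eq_mul, mul_one, add_comm]

theorem eval₂_lastRel {R : Type*} [CommRing R] (f : Base n a →+* R) (y : R) :
    (lastRel n a).eval₂ f y = eval₂Hom (Int.castRingHom R)
      (Fin.lastCases y fun j => f (ybar m _ _ j)) (bottRel (m + 1) n a (Fin.last m)) := by
  simp only [eval₂Hom_bottRel_last, lastRel, Polynomial.eval₂_mul, Polynomial.eval₂_X,
    Polynomial.eval₂_finsetProd, Polynomial.eval₂_add, Polynomial.eval₂_C, Fin.lastCases_last,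
    Fin.lastCases_castSucc]
  simp only [map_sum, map_mul, map_intCast]

/-- `A_m` is obtained from `A_{m-1}` by adjoining a root of `lastRel`. -/
noncomputable def equivAdjoinRoot : BottRing (m + 1) n a ≃+* AdjoinRoot (lastRel n a) :=
  RingEquiv.ofRingHom
    (lift (Fin.lastCases (AdjoinRoot.root _) fun j => AdjoinRoot.of _ (ybar m _ _ j)) fun i => by
      induction i using Fin.lastCases with
      | last => rw [← eval₂_lastRel, AdjoinRoot.eval₂_root]
      | cast i =>
        rw [eval₂Hom_bottRel_castSucc]
        simpa only [Fin.lastCases_castSucc] using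
          eval₂Hom_bottRel_eq_zero (AdjoinRoot.of (lastRel n a)) i)
    (AdjoinRoot.lift (ofBase n a) (ybar (m + 1) n a (Fin.last m)) <| by
      have lastCases_eq : (Fin.lastCases (ybar (m + 1) n a (Fin.last m))
          fun j => ofBase n a (ybar m _ _ j)) = ybar (m + 1) n a := by
        ext j
        induction j using Fin.lastCases <;> simp [ofBase]
      rw [eval₂_lastRel, lastCases_eq]
      exact eval₂Hom_bottRel_eq_zero (RingHom.id _) (Fin.last m))
    (AdjoinRoot.ringHom_ext (hom_ext fun i => by simp [ofBase]) (by simp))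
    (hom_ext fun i => by induction i using Fin.lastCases <;> simp [ofBase])

end Tower

section Rank

/-- The generalized Bott ring of the empty tower is `ℤ`. -/
noncomputable def equivInt (n : Fin 0 → ℕ) (a : (i : Fin 0) → Fin (n i) → Fin 0 → ℤ) :
    BottRing 0 n a ≃+* ℤ :=
  (Ideal.quotEquivOfEq (by rw [Set.range_eq_empty, Ideal.span_empty])).trans
    ((RingEquiv.quotientBot _).trans (isEmptyRingEquiv ℤ (Fin 0)))

instance free (m : ℕ) (n : Fin m → ℕ) (a : (i : Fin m) → Fin (n i) → Fin m → ℤ) :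
    Module.Free ℤ (BottRing m n a) := by
  induction m with
  | zero => exact Module.Free.of_equiv (equivInt n a).symm.toAddEquiv.toIntLinearEquiv
  | succ m ih =>
    have base_free : Module.Free ℤ (Base n a) := ih _ _
    have adjoinRoot_free := (monic_lastRel n a).free_adjoinRoot
    have := Module.Free.trans (R := ℤ) (S := Base n a) (M := AdjoinRoot (lastRel n a))
    exact Module.Free.of_equiv (equivAdjoinRoot n a).symm.toAddEquiv.toIntLinearEquiv

instance finite (m : ℕ) (n : Fin m → ℕ) (a : (i : Fin m) → Fin (n i) → Fin m → ℤ) :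
    Module.Finite ℤ (BottRing m n a) := by
  induction m with
  | zero => exact Module.Finite.equiv (equivInt n a).symm.toAddEquiv.toIntLinearEquiv
  | succ m ih =>
    have base_finite : Module.Finite ℤ (Base n a) := ih _ _
    have adjoinRoot_finite := (monic_lastRel n a).finite_adjoinRoot
    have := Module.Finite.trans (R := ℤ) (Base n a) (AdjoinRoot (lastRel n a))
    exact Module.Finite.equiv (equivAdjoinRoot n a).symm.toAddEquiv.toIntLinearEquiv

theorem finrank_eq (m : ℕ) (n : Fin m → ℕ) (a : (i : Fin m) → Fin (n i) → Fin m → ℤ) :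
    Module.finrank ℤ (BottRing m n a) = ∏ i, (n i + 1) := by
  induction m with
  | zero => simp [(equivInt n a).toAddEquiv.toIntLinearEquiv.finrank_eq]
  | succ m ih =>
    have base_finrank : Module.finrank ℤ (Base n a) = ∏ i : Fin m, (n i.castSucc + 1) := ih _ _
    have base_nontrivial : Nontrivial (Base n a) := by
      refine Module.nontrivial_of_finrank_pos (R := ℤ) ?_
      rw [base_finrank]
      exact Finset.prod_pos fun i _ => Nat.succ_pos _
    have adjoinRoot_free := (monic_lastRel n a).free_adjoinRoot
    rw [(equivAdjoinRoot n a).toAddEquiv.toIntLinearEquiv.finrank_eq,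
      ← Module.finrank_mul_finrank ℤ (Base n a), base_finrank,
      (AdjoinRoot.powerBasis' (monic_lastRel n a)).finrank, AdjoinRoot.powerBasis'_dim,
      natDegree_lastRel, Fin.prod_univ_castSucc]

theorem bijective_of_surjective {m : ℕ} {n : Fin m → ℕ}
    {a b : (i : Fin m) → Fin (n i) → Fin m → ℤ} (f : BottRing m n a →+* BottRing m n b)
    (hf : Function.Surjective f) : Function.Bijective f :=
  OrzechProperty.bijective_of_surjective_of_finrank_le f.toAddMonoidHom.toIntLinearMap hf
    ((finrank_eq m n a).trans (finrank_eq m n b).symm).le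

end Rank

end BottRing

theorem TruncRing.bijective_of_surjective {k : ℕ} {n : Fin k → ℕ}
    {a : (i : Fin k) → Fin (n i) → Fin k → ℤ} (f : TruncRing k n →+* BottRing k n a)
    (hf : Function.Surjective f) : Function.Bijective f := by
  let e := (equivBottRing k n).symm
  have comp_bijective : Function.Bijective (f ∘ e) :=
    BottRing.bijective_of_surjective (f.comp e.toRingHom) (hf.comp e.surjective)
  exact (Function.Bijective.of_comp_iff f e.bijective).1 comp_bijective

/-! ### Linear parts -/

namespace BottRing

section LinearPart

variable {m : ℕ} {n : Fin m → ℕ} {a : (i : Fin m) → Fin (n i) → Fin m → ℤ}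

/-- The reduction of the generalized Bott ring modulo the products of two generators, as a ring
homomorphism to the trivial square-zero extension of `ℤ` by `ℤ^m`. -/
noncomputable def jet (hn : ∀ i, 0 < n i) : BottRing m n a →+* TrivSqZeroExt ℤ (Fin m → ℤ) :=
  lift (fun i => TrivSqZeroExt.inr (Pi.single i 1)) fun i => by
    let factor (l : Fin (n i)) : TrivSqZeroExt ℤ (Fin m → ℤ) := TrivSqZeroExt.inr (Pi.single i 1) +
      ∑ j ∈ Finset.univ.filter (fun j => j < i),
        (a i l j : TrivSqZeroExt ℤ (Fin m → ℤ)) * TrivSqZeroExt.inr (Pi.single j 1)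
    have fst_factor (l : Fin (n i)) : (factor l).fst = 0 := by
      simp [factor, TrivSqZeroExt.fst_sum]
    have fst_prod : (∏ l, factor l).fst = 0 :=
      (map_prod (TrivSqZeroExt.fstHom ℤ ℤ (Fin m → ℤ)) factor _).trans
        (Finset.prod_eq_zero (Finset.mem_univ ⟨0, hn i⟩) (fst_factor _))
    rw [eval₂Hom_bottRel]
    ext <;> simp [factor, fst_prod]

/-- The coordinates in `ȳ_1, …, ȳ_m` of the degree one component of an element. -/
noncomputable def linearPart (hn : ∀ i, 0 < n i) : BottRing m n a →ₗ[ℤ] (Fin m → ℤ) :=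
  ((TrivSqZeroExt.sndHom ℤ (Fin m → ℤ)).toAddMonoidHom.comp
    (jet hn).toAddMonoidHom).toIntLinearMap

theorem linearPart_apply (hn : ∀ i, 0 < n i) (z : BottRing m n a) :
    linearPart hn z = (jet hn z).snd :=
  rfl

theorem linearPart_ybar (hn : ∀ i, 0 < n i) (j : Fin m) :
    linearPart hn (ybar m n a j) = Pi.single j 1 := by
  simp [linearPart_apply, jet]

theorem linearPart_sum_smul_ybar (hn : ∀ i, 0 < n i) (u : Fin m → ℤ) :
    linearPart hn (∑ j, u j • ybar m n a j) = u := by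
  rw [map_sum]
  simp only [map_zsmul, linearPart_ybar]
  exact (pi_eq_sum_univ' u).symm

theorem sum_linearPart_smul_ybar (hn : ∀ i, 0 < n i) {w : BottRing m n a}
    (hw : w ∈ Submodule.span ℤ (Set.range (ybar m n a))) :
    ∑ j, linearPart hn w j • ybar m n a j = w := by
  obtain ⟨u, rfl⟩ := (Submodule.mem_span_range_iff_exists_fun ℤ).1 hw
  rw [linearPart_sum_smul_ybar]

theorem injOn_linearPart (hn : ∀ i, 0 < n i) :
    Set.InjOn (linearPart hn)
      (Submodule.span ℤ (Set.range (ybar m n a)) : Set (BottRing m n a)) := fun w hw z hz h => by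
  rw [← sum_linearPart_smul_ybar hn hw, h, sum_linearPart_smul_ybar hn hz]

theorem map_linearPart_span_eq_top (hn : ∀ i, 0 < n i) {s : Set (BottRing m n a)}
    (hs : Subring.closure s = ⊤) : (Submodule.span ℤ s).map (linearPart hn) = ⊤ := by
  have linearPart_mem (z : BottRing m n a) :
      linearPart hn z ∈ (Submodule.span ℤ s).map (linearPart hn) := by
    have hz : z ∈ Subring.closure s := hs ▸ Subring.mem_top z
    induction hz using Subring.closure_induction with
    | mem x hx => exact Submodule.mem_map_of_mem (Submodule.subset_span hx)
    | zero => rw [map_zero]; exact zero_mem _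
    | one =>
      rw [linearPart_apply, map_one, TrivSqZeroExt.snd_one]
      exact zero_mem _
    | add x y _ _ hx hy => rw [map_add]; exact add_mem hx hy
    | neg x _ hx => rw [map_neg]; exact neg_mem hx
    | mul x y _ _ hx hy =>
      rw [linearPart_apply, map_mul, TrivSqZeroExt.snd_mul, op_smul_eq_smul]
      exact add_mem (Submodule.smul_mem _ _ hy) (Submodule.smul_mem _ _ hx)
  exact eq_top_iff.2 fun u _ => linearPart_sum_smul_ybar (a := a) hn u ▸ linearPart_mem _

theorem span_ybar_le_span (hn : ∀ i, 0 < n i) {s : Set (BottRing m n a)}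
    (hs : Subring.closure s = ⊤) (hsy : s ⊆ Submodule.span ℤ (Set.range (ybar m n a))) :
    Submodule.span ℤ (Set.range (ybar m n a)) ≤ Submodule.span ℤ s := fun w hw => by
  obtain ⟨z, hz, hzw⟩ : linearPart hn w ∈ (Submodule.span ℤ s).map (linearPart hn) :=
    map_linearPart_span_eq_top hn hs ▸ Submodule.mem_top
  exact injOn_linearPart hn (Submodule.span_le.2 hsy hz) hw hzw ▸ hz

/-- The quotient of the generalized Bott ring by all generators but `ȳ_j`. -/
noncomputable def toAxis (j : Fin m) :
    BottRing m n a →+* AdjoinRoot (Polynomial.X ^ (n j + 1) : Polynomial ℤ) :=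
  lift (Pi.single j (AdjoinRoot.root _)) fun i => by
    rw [eval₂Hom_bottRel]
    obtain rfl | hij := eq_or_ne i j
    · have root_pow :
          AdjoinRoot.root (Polynomial.X ^ (n i + 1) : Polynomial ℤ) ^ (n i + 1) = 0 := by
        simpa using AdjoinRoot.eval₂_root (Polynomial.X ^ (n i + 1) : Polynomial ℤ)
      have tail_eq_zero (l : Fin (n i)) : ∑ j ∈ Finset.univ.filter (fun j => j < i), (a i l j :
          AdjoinRoot (Polynomial.X ^ (n i + 1) : Polynomial ℤ)) *
            (Pi.single i (AdjoinRoot.root _) : Fin m → AdjoinRoot _) j = 0 :=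
        Finset.sum_eq_zero fun j hj => by
          rw [Pi.single_eq_of_ne (Finset.mem_filter.1 hj).2.ne, mul_zero]
      simpa [tail_eq_zero, ← pow_succ'] using root_pow
    · rw [Pi.single_eq_of_ne hij, zero_mul]

theorem linearPart_eq_zero_of_pow_eq_zero (hn : ∀ i, 0 < n i) {w : BottRing m n a}
    (hw : w ∈ Submodule.span ℤ (Set.range (ybar m n a))) {r : ℕ} {j : Fin m} (hr : r ≤ n j)
    (hwr : w ^ r = 0) : linearPart hn w j = 0 := by
  let c := linearPart hn w j
  have toAxis_eq : toAxis j w =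
      AdjoinRoot.mk (Polynomial.X ^ (n j + 1)) (Polynomial.C c * Polynomial.X) := by
    rw [← sum_linearPart_smul_ybar hn hw]
    simp [toAxis, Pi.single_apply, c]
  have mk_eq_zero : AdjoinRoot.mk (Polynomial.X ^ (n j + 1))
      (Polynomial.C (c ^ r) * Polynomial.X ^ r) = 0 := by
    rw [Polynomial.C_pow, ← mul_pow, map_pow, ← toAxis_eq, ← map_pow, hwr, map_zero]
  have coeff_eq_zero := Polynomial.X_pow_dvd_iff.1 (AdjoinRoot.mk_eq_zero.1 mk_eq_zero) r
    (Nat.lt_succ_of_le hr)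
  rw [Polynomial.coeff_C_mul_X_pow, if_pos rfl] at coeff_eq_zero
  exact eq_zero_of_pow_eq_zero coeff_eq_zero

end LinearPart
end BottRing

/-! ### Elimination of a generator -/

theorem closure_image_compl_singleton_eq_top {ι S : Type*} [Fintype ι] [Ring S]
    {z : ι → S} (hz : Subring.closure (Set.range z) = ⊤) {c : ι → ℤ} (hsum : ∑ i, c i • z i = 0)
    {k : ι} (hk : IsUnit (c k)) : Subring.closure (z '' {k}ᶜ) = ⊤ := by
  classical
  obtain ⟨u, hu⟩ := hk
  have mem_of_ne {i : ι} (hi : i ≠ k) : z i ∈ Subring.closure (z '' {k}ᶜ) :=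
    Subring.subset_closure ⟨i, hi, rfl⟩
  have zk_eq : z k = -((↑u⁻¹ : ℤ) • ∑ i ∈ Finset.univ.erase k, c i • z i) := by
    rw [eq_neg_iff_add_eq_zero, ← smul_zero (↑u⁻¹ : ℤ), ← hsum,
      ← Finset.add_sum_erase _ _ (Finset.mem_univ k), smul_add, ← hu, smul_smul, Units.inv_mul,
      one_smul]
  rw [eq_top_iff, ← hz, Subring.closure_le]
  rintro _ ⟨i, rfl⟩
  obtain rfl | hi := eq_or_ne i k
  · rw [zk_eq]
    exact neg_mem (zsmul_mem (sum_mem fun i hi =>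
      zsmul_mem (mem_of_ne (Finset.ne_of_mem_erase hi)) _) _)
  · exact mem_of_ne hi

theorem TruncRing.nonempty_ringEquiv_of_closure_image_compl_eq_top {m : ℕ} {n : Fin (m + 1) → ℕ}
    {a : (i : Fin m) → Fin (n i.castSucc) → Fin m → ℤ}
    {z : Fin (m + 1) → BottRing m (fun i => n i.castSucc) a} (hz : ∀ i, z i ^ (n i + 1) = 0)
    {k : Fin (m + 1)} (hk : n k = n (Fin.last m)) (hclosure : Subring.closure (z '' {k}ᶜ) = ⊤) :
    Nonempty (TruncRing m (fun i => n i.castSucc) ≃+* BottRing m (fun i => n i.castSucc) a) := by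
  let σ := Equiv.swap k (Fin.last m)
  let f : TruncRing m (fun i => n i.castSucc) →+* BottRing m (fun i => n i.castSucc) a :=
    lift (fun i => z (σ i.castSucc)) fun i => by
      rw [← Equiv.apply_swap_eq_self hk i.castSucc]
      exact hz _
  have range_eq_top : f.range = ⊤ := by
    rw [eq_top_iff, ← hclosure, Subring.closure_le]
    rintro _ ⟨j, hj, rfl⟩
    obtain ⟨i, hi⟩ : ∃ i : Fin m, i.castSucc = σ j := by
      refine Fin.exists_castSucc_eq.2 fun h => hj ?_
      rwa [Equiv.swap_apply_eq_iff, Equiv.swap_apply_right] at h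
    exact ⟨Ideal.Quotient.mk _ (X i), by rw [lift_mk_X, hi, Equiv.swap_apply_self]⟩
  exact ⟨RingEquiv.ofBijective f (bijective_of_surjective f (RingHom.range_eq_top.1 range_eq_top))⟩

namespace BottRing

section LastFactor

variable {m : ℕ} (n : Fin (m + 1) → ℕ) (a : (i : Fin (m + 1)) → Fin (n i) → Fin (m + 1) → ℤ)

/-- The linear factors of the last relation of `A_m`: the factor `ȳ_m` itself is indexed by `none`
and `ȳ_m + ∑_{j<m} a^{(m)}_{l,j} ȳ_j` by `some l`. -/
noncomputable def lastFactor : Option (Fin (n (Fin.last m))) → BottRing (m + 1) n a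
  | none => ybar (m + 1) n a (Fin.last m)
  | some l => ybar (m + 1) n a (Fin.last m) +
      ∑ j : Fin m, a (Fin.last m) l j.castSucc • ybar (m + 1) n a j.castSucc

theorem prod_lastFactor : ∏ o, lastFactor n a o = 0 := by
  have h := eval₂Hom_bottRel_eq_zero (RingHom.id (BottRing (m + 1) n a)) (Fin.last m)
  simpa only [eval₂Hom_bottRel_last, Fintype.prod_option, lastFactor, zsmul_eq_mul,
    RingHom.id_apply] using h

theorem lastFactor_mem_span (o : Option (Fin (n (Fin.last m)))) :
    lastFactor n a o ∈ Submodule.span ℤ (Set.range (ybar (m + 1) n a)) := by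
  have ybar_mem (j : Fin (m + 1)) :
      ybar (m + 1) n a j ∈ Submodule.span ℤ (Set.range (ybar (m + 1) n a)) :=
    Submodule.subset_span ⟨j, rfl⟩
  cases o with
  | none => exact ybar_mem _
  | some l => exact add_mem (ybar_mem _) (sum_mem fun j _ => Submodule.smul_mem _ _ (ybar_mem _))

theorem linearPart_lastFactor_last (hn : ∀ i, 0 < n i) (o : Option (Fin (n (Fin.last m)))) :
    linearPart hn (lastFactor n a o) (Fin.last m) = 1 := by
  cases o <;> simp [-zsmul_eq_mul, lastFactor, linearPart_ybar, Fin.castSucc_ne_last]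

end LastFactor

theorem exists_ybar_last_eq_sum {m : ℕ} {n : Fin (m + 1) → ℕ} (hn : ∀ i, 0 < n i)
    {a : (i : Fin (m + 1)) → Fin (n i) → Fin (m + 1) → ℤ}
    (φ : TruncRing (m + 1) n ≃+* BottRing (m + 1) n a)
    (hφ : ∀ i, φ (Ideal.Quotient.mk (truncIdeal (m + 1) n) (X i)) ∈
      Submodule.span ℤ (Set.range (ybar (m + 1) n a))) :
    ∃ k : Fin (m + 1), n k = n (Fin.last m) ∧ ∃ c : Fin (m + 1) → ℤ, IsUnit (c k) ∧
      ∑ i, c i • φ (Ideal.Quotient.mk (truncIdeal (m + 1) n) (X i)) =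
        ybar (m + 1) n a (Fin.last m) := by
  let x := fun i => φ (Ideal.Quotient.mk (truncIdeal (m + 1) n) (X i))
  have closure_range_x : Subring.closure (Set.range x) = ⊤ :=
    TruncRing.closure_range_map_mk_X (f := φ.toRingHom) φ.surjective
  have lastFactor_mem (o) : lastFactor n a o ∈ Submodule.span ℤ (Set.range x) :=
    span_ybar_le_span hn closure_range_x (Set.range_subset_iff.2 hφ) (lastFactor_mem_span n a o)
  choose c hc using fun o => (Submodule.mem_span_range_iff_exists_fun ℤ).1 (lastFactor_mem o)
  have prod_mem : ∏ o, ∑ i, C (c o i) * X i ∈ truncIdeal (m + 1) n := by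
    rw [← Ideal.Quotient.eq_zero_iff_mem, ← map_eq_zero_iff φ φ.injective, ← prod_lastFactor n a]
    simp [← hc, x]
  have coeff_eq_zero (i : Fin (m + 1)) (hi : n i < n (Fin.last m)) :
      linearPart hn (x i) (Fin.last m) = 0 :=
    linearPart_eq_zero_of_pow_eq_zero hn (hφ i) hi <| by
      rw [← map_pow, TruncRing.mk_X_pow_eq_zero, map_zero]
  have sum_coeff_eq_one (o) : ∑ i, c o i * linearPart hn (x i) (Fin.last m) = 1 := by
    rw [← linearPart_lastFactor_last n a hn o, ← hc]
    simp [-zsmul_eq_mul]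
  have : Nontrivial (Option (Fin (n (Fin.last m)))) := by
    have : Nonempty (Fin (n (Fin.last m))) := ⟨⟨0, hn _⟩⟩
    infer_instance
  obtain ⟨k, hk, hck⟩ := exists_mul_eq_one_of_prod_mem_truncIdeal (by simp) coeff_eq_zero
    sum_coeff_eq_one prod_mem
  exact ⟨k, hk, c none, .of_mul_eq_one _ (hck none), hc none⟩

end BottRing

/-- Lemma 4.2: if the generalized Bott ring `A_m` is isomorphic to
`ℤ[x_1,…,x_m]/(x_i^{n_i+1})` by a graded ring isomorphism (each `φ(x_i)` lies in the
ℤ-span of the `ȳ_j`), then `A_{m-1}` is isomorphic to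
`ℤ[x_1,…,x_{m-1}]/(x_i^{n_i+1})`. -/
theorem stmt5 (m : ℕ) (n : Fin (m + 1) → ℕ) (hn : ∀ i, 0 < n i)
    (a : (i : Fin (m + 1)) → Fin (n i) → Fin (m + 1) → ℤ)
    (φ : TruncRing (m + 1) n ≃+* BottRing (m + 1) n a)
    (hφ : ∀ i : Fin (m + 1), φ (Ideal.Quotient.mk (truncIdeal (m + 1) n) (X i)) ∈
      Submodule.span ℤ (Set.range (ybar (m + 1) n a))) :
    Nonempty (TruncRing m (fun i => n i.castSucc) ≃+*
      BottRing m (fun i => n i.castSucc) (fun i l j => a i.castSucc l j.castSucc)) := by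
  obtain ⟨k, hk, c, hck, hc⟩ := BottRing.exists_ybar_last_eq_sum hn φ hφ
  let ψ := (BottRing.toBase n a).comp φ.toRingHom
  let z := fun i => ψ (Ideal.Quotient.mk _ (X i))
  have sum_eq_zero : ∑ i, c i • z i = 0 := by
    rw [← BottRing.toBase_ybar_last n a, ← hc, map_sum]
    simp only [map_zsmul]
    rfl
  have closure_range_z : Subring.closure (Set.range z) = ⊤ :=
    TruncRing.closure_range_map_mk_X (f := ψ)
      ((BottRing.toBase_surjective n a).comp φ.surjective)
  have z_pow (i : Fin (m + 1)) : z i ^ (n i + 1) = 0 := by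
    rw [← map_pow, TruncRing.mk_X_pow_eq_zero, map_zero]
  exact TruncRing.nonempty_ringEquiv_of_closure_image_compl_eq_top z_pow hk
    (closure_image_compl_singleton_eq_top closure_range_z sum_eq_zero hck)
end

section
/- Let n, k be integers with 1 ≤ n < k, and let a_{ij} (1 ≤ i ≤ n, 1 ≤ j ≤ k) be integers such that ∏_{i=1}^{n} (1 + Σ_{j=1}^{k} a_{ij} x̄_j) = 1 in the ring ℤ[x_1,…,x_k]/(x_1²,…,x_k²). Then there exists an index j ∈ {1,…,k} such that a_{ij} = 0 for every i = 1,…,n. -/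
open MvPolynomial

/-- The ideal `(x_1², …, x_k²)` of `ℤ[x_1,…,x_k]`. -/
noncomputable def sqIdeal (k : ℕ) : Ideal (MvPolynomial (Fin k) ℤ) :=
  Ideal.span (Set.range fun j => X j ^ 2)

/-!
Sending all but two of the variables to `0` (restriction to two of the `ℂP¹` factors) and those
two to the generators `u`, `v` of `R[u, v]/(u², v²)` turns the relation into
`∏ (1 + aᵢ u + bᵢ v) = 1`. Since `1 + a u + b v = (1 + a u) (1 + b v) (1 - a b u v)`, the left side
is `(1 + (∑ aᵢ) u) (1 + (∑ bᵢ) v) (1 - (∑ aᵢ bᵢ) u v)`, so `∑ aᵢ bᵢ = 0`. Hence the `k` columns are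
pairwise orthogonal vectors of a space of dimension `n < k`, and one of them must vanish.
-/

open scoped DualNumber Matrix

section SquareZero

variable {R A ι : Type*} [CommRing R] [CommRing A] [Algebra R A] {u v : A}

theorem prod_one_add_smul_of_mul_self_eq_zero (hu : u * u = 0) (a : ι → R) (s : Finset ι) :
    ∏ i ∈ s, (1 + a i • u) = 1 + (∑ i ∈ s, a i) • u := by
  induction s using Finset.cons_induction with
  | empty => simp
  | cons i s hi ih =>
    have h_cross : (a i • u) * ((∑ j ∈ s, a j) • u) = 0 := by
      rw [smul_mul_smul_comm, hu, smul_zero]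
    rw [Finset.prod_cons, Finset.sum_cons, ih, add_smul]
    linear_combination h_cross

theorem one_add_smul_add_smul_eq_mul (hu : u * u = 0) (hv : v * v = 0) (a b : R) :
    1 + (a • u + b • v) = (1 + a • u) * (1 + b • v) * (1 + (-(a * b)) • (u * v)) := by
  simp only [Algebra.smul_def, map_neg, map_mul]
  generalize algebraMap R A a = α, algebraMap R A b = β
  linear_combination (α ^ 2 * β * v + α ^ 2 * β ^ 2 * v ^ 2) * hu + α * β ^ 2 * u * hv

theorem prod_one_add_smul_add_smul (hu : u * u = 0) (hv : v * v = 0) (a b : ι → R)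
    (s : Finset ι) :
    ∏ i ∈ s, (1 + (a i • u + b i • v)) =
      (1 + (∑ i ∈ s, a i) • u) * (1 + (∑ i ∈ s, b i) • v) *
        (1 + (-∑ i ∈ s, a i * b i) • (u * v)) := by
  have huv : u * v * (u * v) = 0 := by rw [mul_mul_mul_comm, hu, zero_mul]
  simp_rw [one_add_smul_add_smul_eq_mul hu hv, Finset.prod_mul_distrib,
    prod_one_add_smul_of_mul_self_eq_zero hu, prod_one_add_smul_of_mul_self_eq_zero hv,
    prod_one_add_smul_of_mul_self_eq_zero huv, Finset.sum_neg_distrib]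

end SquareZero

section IteratedDualNumber

/-- The first generator of `R[ε][ε]`, which models `R[u, v]/(u², v²)`; the second is `ε`. -/
def innerEps (R : Type*) [Semiring R] : R[ε][ε] :=
  TrivSqZeroExt.inl ε

theorem innerEps_mul_innerEps {R : Type*} [Semiring R] : innerEps R * innerEps R = 0 := by
  rw [innerEps, ← TrivSqZeroExt.inl_mul, DualNumber.eps_mul_eps, TrivSqZeroExt.inl_zero]

theorem sum_mul_eq_zero_of_prod_one_add_smul_eps_eq_one {R ι : Type*} [CommRing R]
    {a b : ι → R} {s : Finset ι}
    (h : ∏ i ∈ s, (1 + (a i • innerEps R + b i • (ε : R[ε][ε]))) = 1) :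
    ∑ i ∈ s, a i * b i = 0 := by
  have h_factored : (1 + (∑ i ∈ s, a i) • innerEps R) * (1 + (∑ i ∈ s, b i) • (ε : R[ε][ε])) *
      (1 + (-∑ i ∈ s, a i * b i) • (innerEps R * ε)) = 1 :=
    (prod_one_add_smul_add_smul (A := R[ε][ε]) innerEps_mul_innerEps DualNumber.eps_mul_eps
      a b s).symm.trans h
  have h_inner : ∑ i ∈ s, a i = 0 := by
    simpa [innerEps] using congrArg (fun x => x.fst.snd) h_factored
  simpa [innerEps, h_inner] using congrArg (fun x => x.snd.snd) h_factored

end IteratedDualNumber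

section Quotient

/-- The ideal of `R[x_j : j ∈ σ]` generated by the squares of all variables. It extends `sqIdeal` to
arbitrary coefficients and index types; `variableSquaresIdeal (Fin k) ℤ` is `sqIdeal k`. -/
noncomputable def variableSquaresIdeal (σ R : Type*) [CommSemiring R] : Ideal (MvPolynomial σ R) :=
  Ideal.span (Set.range fun j => X j ^ 2)

theorem variableSquaresIdeal_le_ker_aeval {R σ A : Type*} [CommSemiring R] [CommSemiring A]
    [Algebra R A] {x : σ → A} (hx : ∀ j, x j * x j = 0) :
    variableSquaresIdeal σ R ≤ RingHom.ker (aeval (R := R) x) := by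
  rw [variableSquaresIdeal, Ideal.span_le, Set.range_subset_iff]
  intro j
  rw [SetLike.mem_coe, RingHom.mem_ker, map_pow, aeval_X, sq, hx]

variable {R σ ι : Type*} [CommRing R] [Fintype σ] [Fintype ι] {a : ι → σ → R}

theorem prod_one_add_sum_smul_eq_one {A : Type*} [CommRing A] [Algebra R A] {x : σ → A}
    (hx : ∀ j, x j * x j = 0)
    (h : ∏ i, Ideal.Quotient.mk (variableSquaresIdeal σ R) (1 + ∑ j, C (a i j) * X j) = 1) :
    ∏ i, (1 + ∑ j, a i j • x j) = 1 := by
  have h_lift := congrArg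
    (Ideal.Quotient.lift _ (aeval x : MvPolynomial σ R →ₐ[R] A).toRingHom
      (variableSquaresIdeal_le_ker_aeval hx)) h
  simpa [Algebra.smul_def] using h_lift

theorem prod_one_add_smul_add_smul_eq_one {A : Type*} [CommRing A] [Algebra R A] {u v : A}
    (hu : u * u = 0) (hv : v * v = 0)
    (h : ∏ i, Ideal.Quotient.mk (variableSquaresIdeal σ R) (1 + ∑ j, C (a i j) * X j) = 1)
    {p q : σ} (hpq : p ≠ q) : ∏ i, (1 + (a i p • u + a i q • v)) = 1 := by
  classical
  let x : σ → A := Pi.single p u + Pi.single q v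
  have hx (j : σ) : x j * x j = 0 := by
    by_cases hp : j = p
    · simp [x, hp, hpq, hu]
    · by_cases hq : j = q <;> simp [x, hp, hq, hpq.symm, hv]
  have h_sum (i : ι) : ∑ j, a i j • x j = a i p • u + a i q • v := by
    simp [x, Pi.single_apply, Finset.sum_add_distrib]
  simpa only [h_sum] using prod_one_add_sum_smul_eq_one hx h

theorem dotProduct_col_eq_zero_of_prod_eq_one
    (h : ∏ i, Ideal.Quotient.mk (variableSquaresIdeal σ R) (1 + ∑ j, C (a i j) * X j) = 1)
    {p q : σ} (hpq : p ≠ q) : aᵀ p ⬝ᵥ aᵀ q = 0 :=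
  sum_mul_eq_zero_of_prod_one_add_smul_eps_eq_one <|
    prod_one_add_smul_add_smul_eq_one (A := R[ε][ε]) innerEps_mul_innerEps
      DualNumber.eps_mul_eps h hpq

end Quotient

section Orthogonal

variable {R ι σ : Type*} [CommRing R] [Fintype ι] {w : σ → ι → R}

theorem linearIndependent_of_pairwise_dotProduct_eq_zero [NoZeroDivisors R]
    (hw : ∀ j, w j ⬝ᵥ w j ≠ 0) (h_orth : Pairwise fun p q => w p ⬝ᵥ w q = 0) :
    LinearIndependent R w := by
  rw [linearIndependent_iff']
  intro s c hc j hj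
  have h_coeff : c j * (w j ⬝ᵥ w j) = 0 := calc
    c j * (w j ⬝ᵥ w j) = ∑ i ∈ s, c i * (w i ⬝ᵥ w j) := by
      rw [Finset.sum_eq_single_of_mem j hj fun i _ hij => by rw [h_orth hij, mul_zero]]
    _ = (∑ i ∈ s, c i • w i) ⬝ᵥ w j := by
      simp_rw [sum_dotProduct, smul_dotProduct, smul_eq_mul]
    _ = 0 := by rw [hc, zero_dotProduct]
  exact (mul_eq_zero.mp h_coeff).resolve_right (hw j)

theorem exists_eq_zero_of_pairwise_dotProduct_eq_zero [LinearOrder R] [IsStrictOrderedRing R]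
    [Fintype σ] (h_card : Fintype.card ι < Fintype.card σ)
    (h_orth : Pairwise fun p q => w p ⬝ᵥ w q = 0) : ∃ j, w j = 0 := by
  by_contra! hw
  have h_indep : LinearIndependent R w :=
    linearIndependent_of_pairwise_dotProduct_eq_zero
      (fun j => dotProduct_self_eq_zero.not.mpr (hw j)) h_orth
  have h_le := h_indep.fintype_card_le_finrank
  rw [Module.finrank_fintype_fun_eq_card] at h_le
  exact h_le.not_gt h_card

end Orthogonal

theorem stmt8_general {R ι σ : Type*} [CommRing R] [LinearOrder R] [IsStrictOrderedRing R]
    [Fintype ι] [Fintype σ] (h_card : Fintype.card ι < Fintype.card σ) (a : ι → σ → R)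
    (h : ∏ i, Ideal.Quotient.mk (variableSquaresIdeal σ R) (1 + ∑ j, C (a i j) * X j) = 1) :
    ∃ j, ∀ i, a i j = 0 := by
  obtain ⟨j, hj⟩ := exists_eq_zero_of_pairwise_dotProduct_eq_zero (w := aᵀ) h_card
    fun _ _ hpq => dotProduct_col_eq_zero_of_prod_eq_one h hpq
  exact ⟨j, congrFun hj⟩

/-- Case II in the proof of Theorem 5.1: if `1 ≤ n < k` and
`∏_{i=1}^{n} (1 + ∑_j a_{ij} x̄_j) = 1` in `ℤ[x_1,…,x_k]/(x_1²,…,x_k²)`, then some column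
of exponents `(a_{1j},…,a_{nj})` vanishes. -/
theorem stmt8 (n k : ℕ) (hn : 0 < n) (hnk : n < k) (a : Fin n → Fin k → ℤ)
    (h : ∏ i : Fin n,
        Ideal.Quotient.mk (sqIdeal k) (1 + ∑ j, C (a i j) * X j) = 1) :
    ∃ j, ∀ i, a i j = 0 :=
  stmt8_general (by simpa using hnk) a h
end

section
/- Let R be a commutative ring, n ≥ 0 an integer, and ℓ_0,…,ℓ_n ∈ R. Suppose the image of the polynomial ∏_{i=0}^{n} (X + ℓ_i) in R[X]/(X^{n+1}) is zero. Then every elementary symmetric polynomial e_q(ℓ_0,…,ℓ_n) vanishes for q = 1,…,n+1, and consequently ∏_{i=0}^{n} (1 + ℓ_i) = 1 in R. -/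
section

open Polynomial

variable {R ι : Type*} [CommSemiring R] {s : Finset ι} {f : ι → R}

theorem prod_X_add_C_eq_X_pow_card_of_dvd (h : X ^ s.card ∣ ∏ i ∈ s, (X + C (f i))) :
    ∏ i ∈ s, (X + C (f i)) = X ^ s.card := by
  nontriviality R
  have hmonic : ∀ i ∈ s, (X + C (f i)).Monic := fun i _ ↦ monic_X_add_C (f i)
  have hdeg : (∏ i ∈ s, (X + C (f i))).natDegree = s.card := by
    simp only [natDegree_prod_of_monic _ _ hmonic, natDegree_X_add_C, Finset.sum_const,
      smul_eq_mul, mul_one]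
  exact eq_of_monic_of_dvd_of_natDegree_le (monic_X_pow _) (monic_prod_of_monic _ _ hmonic) h
    (by rw [hdeg, natDegree_X_pow])

theorem sum_powersetCard_prod_eq_zero_of_prod_X_add_C_eq_X_pow_card
    (h : ∏ i ∈ s, (X + C (f i)) = X ^ s.card) {q : ℕ} (hq : 1 ≤ q) (hqs : q ≤ s.card) :
    ∑ t ∈ s.powersetCard q, ∏ i ∈ t, f i = 0 :=
  calc ∑ t ∈ s.powersetCard q, ∏ i ∈ t, f i
      = (∏ i ∈ s, (X + C (f i))).coeff (s.card - q) := by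
        rw [Finset.prod_X_add_C_coeff s f (Nat.sub_le _ _), Nat.sub_sub_self hqs]
    _ = (X ^ s.card : R[X]).coeff (s.card - q) := by rw [h]
    _ = 0 := by rw [coeff_X_pow, if_neg (by lia)]

theorem prod_one_add_eq_one_of_prod_X_add_C_eq_X_pow {k : ℕ}
    (h : ∏ i ∈ s, (X + C (f i)) = X ^ k) : ∏ i ∈ s, (1 + f i) = 1 := by
  simpa only [eval_prod, eval_add, eval_X, eval_C, eval_pow, one_pow] using congrArg (eval 1) h

theorem stmt9_general (h : X ^ s.card ∣ ∏ i ∈ s, (X + C (f i))) :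
    (∀ q : ℕ, 1 ≤ q → q ≤ s.card → ∑ t ∈ s.powersetCard q, ∏ i ∈ t, f i = 0) ∧
      ∏ i ∈ s, (1 + f i) = 1 :=
  have hprod := prod_X_add_C_eq_X_pow_card_of_dvd h
  ⟨fun _ ↦ sum_powersetCard_prod_eq_zero_of_prod_X_add_C_eq_X_pow_card hprod,
    prod_one_add_eq_one_of_prod_X_add_C_eq_X_pow hprod⟩

end

/-- key algebraic step in the proof of Theorem 1.1: if
`∏_{i=0}^{n} (X + ℓᵢ)` vanishes in `R[X]/(X^{n+1})`, then every elementary symmetric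
polynomial `e_q(ℓ_0,…,ℓ_n)` vanishes for `q = 1,…,n+1`, and `∏ (1 + ℓᵢ) = 1` in `R`. -/
theorem stmt9 (R : Type*) [CommRing R] (n : ℕ) (l : Fin (n + 1) → R)
    (h : Ideal.Quotient.mk (Ideal.span {(Polynomial.X : Polynomial R) ^ (n + 1)})
      (∏ i, (Polynomial.X + Polynomial.C (l i))) = 0) :
    (∀ q : ℕ, 1 ≤ q → q ≤ n + 1 →
      ∑ t ∈ Finset.univ.powersetCard q, ∏ i ∈ t, l i = 0) ∧
    ∏ i, (1 + l i) = 1 := by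
  rw [Ideal.Quotient.eq_zero_iff_dvd] at h
  have hgeneral := stmt9_general (s := Finset.univ) (f := l) (by rwa [Finset.card_fin])
  rwa [Finset.card_fin] at hgeneral
end

section
/- Let n_1, n_2 ≥ 1 be integers and let a_1,…,a_{n_2} and a′_1,…,a′_{n_2} be integers. Set A = ℤ[x,y]/(x^{n_1+1}, y·∏_{i=1}^{n_2}(y + a_i x)) and A′ = ℤ[x,y]/(x^{n_1+1}, y·∏_{i=1}^{n_2}(y + a′_i x)). Suppose there exists a ring isomorphism φ : A′ → A mapping the ℤ-span of {x̄, ȳ} in A′ onto the ℤ-span of {x̄, ȳ} in A. Then there exist ε ∈ {1,−1} and an integer t such that (1 + ε t x̄) · ∏_{i=1}^{n_2} (1 + ε(a′_i + t) x̄) = ∏_{i=1}^{n_2} (1 + a_i x̄) in the ring ℤ[x]/(x^{n_1+1}). -/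
open MvPolynomial

/-- The ideal `(x^{n₁+1}, y ∏_{i=1}^{n₂} (y + aᵢ x))` of `ℤ[x,y]` (with `x = X 0`,
`y = X 1`), defining the cohomology ring of a 2-stage generalized Bott manifold. -/
noncomputable def twoStageIdeal (n₁ n₂ : ℕ) (a : Fin n₂ → ℤ) :
    Ideal (MvPolynomial (Fin 2) ℤ) :=
  Ideal.span {X 0 ^ (n₁ + 1), X 1 * ∏ i, (X 1 + C (a i) * X 0)}

/-- The cohomology ring `ℤ[x,y]/(x^{n₁+1}, y ∏ (y + aᵢ x))` of a 2-stage generalized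
Bott manifold. -/
abbrev TwoStage (n₁ n₂ : ℕ) (a : Fin n₂ → ℤ) : Type :=
  MvPolynomial (Fin 2) ℤ ⧸ twoStageIdeal n₁ n₂ a

/-!
In degree two, `φ` is given by a matrix in `GL₂(ℤ)`: `φ x̄ = α x̄ + β ȳ` and `φ ȳ = γ x̄ + δ ȳ`.

If `β = 0`, then `α, δ = ±1`, and the image under `φ` of the second relation of `A'` is, up to sign,
a monic polynomial of degree `n₂ + 1` in `ȳ` over `ℤ[x]/(x^{n₁+1})`. It vanishes in `A`, so it
coincides with `y ∏ᵢ (y + aᵢ x)`, and setting `y = 1` gives the identity.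

If `β ≠ 0`, then `(α x̄ + β ȳ)^{n₁+1} = 0` says that `T ∏ᵢ (T + aᵢ)` divides `(α + β T)^{n₁+1} - u`
for some integer `u`. A polynomial of the latter form has at most two real roots, at which `α + β T`
takes opposite values. Hence `n₂ = 1`, or all `aᵢ` vanish; the inverse of `φ` gives the same for the
`a'ᵢ`. For `n₂ = 1` the identity follows from `β a₁ = 2α` and `-β a'₁ = 2δ` by arithmetic.
-/

open scoped Polynomial

/-- The total Chern class of `γ^t ⊗ (ℂ ⊕ ⨁ᵢ γ^{a'ᵢ})`, or of its conjugate if `ε = -1`, agrees with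
that of `ℂ ⊕ ⨁ᵢ γ^{aᵢ}` in the cohomology ring `ℤ[x]/(x^{n+1})` of `ℂPⁿ`. -/
def ChernClassesAgree {ι : Type*} [Fintype ι] (n : ℕ) (a a' : ι → ℤ) (ε t : ℤ) : Prop :=
  Ideal.Quotient.mk (Ideal.span {(Polynomial.X : ℤ[X]) ^ (n + 1)})
      ((1 + Polynomial.C (ε * t) * Polynomial.X) *
        ∏ i, (1 + Polynomial.C (ε * (a' i + t)) * Polynomial.X)) =
    Ideal.Quotient.mk (Ideal.span {(Polynomial.X : ℤ[X]) ^ (n + 1)})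
      (∏ i, (1 + Polynomial.C (a i) * Polynomial.X))

namespace ChernClassesAgree

theorem of_forall_eq_mul {ι : Type*} [Fintype ι] {n : ℕ} {a a' : ι → ℤ} {ε : ℤ}
    (h : ∀ i, a i = ε * a' i) : ChernClassesAgree n a a' ε 0 := by
  simp [ChernClassesAgree, h]

theorem of_le_one {n : ℕ} {a a' : Fin 1 → ℤ} {t : ℤ} (hn : n ≤ 1) (h : a 0 = a' 0 + 2 * t) :
    ChernClassesAgree n a a' 1 t := by
  rw [ChernClassesAgree, Ideal.Quotient.eq, Ideal.mem_span_singleton]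
  refine (pow_dvd_pow Polynomial.X (by omega : n + 1 ≤ 2)).trans
    ⟨Polynomial.C (t * (a' 0 + t)), ?_⟩
  simp only [Fin.prod_univ_one, h, map_add, map_mul, map_one, map_ofNat]
  ring

end ChernClassesAgree

section Polynomials

theorem mk_X_pow_eq_zero (n : ℕ) :
    Ideal.Quotient.mk (Ideal.span {(Polynomial.X : ℤ[X]) ^ (n + 1)}) Polynomial.X ^ (n + 1) =
      0 := by
  rw [← map_pow, Ideal.Quotient.eq_zero_iff_mem]
  exact Ideal.mem_span_singleton_self _

theorem prod_X_add_C_eq_of_dvd {ι R : Type*} [Fintype ι] [CommRing R] {a b : ι → R}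
    (h : ∏ i, (Polynomial.X + Polynomial.C (a i)) ∣ ∏ i, (Polynomial.X + Polynomial.C (b i))) :
    ∏ i, (Polynomial.X + Polynomial.C (a i)) = ∏ i, (Polynomial.X + Polynomial.C (b i)) := by
  nontriviality R
  have monic (c : ι → R) : (∏ i, (Polynomial.X + Polynomial.C (c i))).Monic :=
    Polynomial.monic_prod_of_monic _ _ fun i _ => Polynomial.monic_X_add_C (c i)
  have natDegree (c : ι → R) :
      (∏ i, (Polynomial.X + Polynomial.C (c i))).natDegree = Fintype.card ι := by
    simp [Polynomial.natDegree_prod_of_monic _ _ fun i _ => Polynomial.monic_X_add_C (c i)]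
  exact (Polynomial.eq_of_monic_of_dvd_of_natDegree_le (monic a) (monic b) h
    (by rw [natDegree, natDegree])).symm

variable {R : Type*} [CommRing R] [LinearOrder R] [IsStrictOrderedRing R]

theorem add_mul_eq_zero_of_X_sub_C_sq_dvd {α β u r : R} {n : ℕ} (hβ : β ≠ 0)
    (h : (Polynomial.X - Polynomial.C r) ^ 2 ∣
      (Polynomial.C α + Polynomial.C β * Polynomial.X) ^ (n + 1) - Polynomial.C u) :
    α + β * r = 0 := by
  have hroot := Polynomial.dvd_iff_isRoot.1
    (by simpa using Polynomial.pow_sub_one_dvd_derivative_of_pow_dvd h)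
  have hderiv : ((n : R) + 1) * (α + β * r) ^ n * β = 0 := by
    simpa [Polynomial.derivative_pow] using hroot
  have hn : (n : R) + 1 ≠ 0 := by positivity
  simp only [mul_eq_zero, hn, hβ, or_false, false_or] at hderiv
  exact eq_zero_of_pow_eq_zero hderiv

/-- An `(n + 1)`-st power map takes each value at most twice on an ordered ring, at opposite
points, and is unramified away from zero. -/
theorem add_mul_add_add_mul_eq_zero_of_dvd {α β u r s : R} {n : ℕ} (hβ : β ≠ 0)
    (h : (Polynomial.X - Polynomial.C r) * (Polynomial.X - Polynomial.C s) ∣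
      (Polynomial.C α + Polynomial.C β * Polynomial.X) ^ (n + 1) - Polynomial.C u) :
    (α + β * r) + (α + β * s) = 0 := by
  obtain rfl | hrs := eq_or_ne r s
  · rw [← sq] at h
    rw [add_mul_eq_zero_of_X_sub_C_sq_dvd hβ h, add_zero]
  · have hr : (α + β * r) ^ (n + 1) = u := by
      simpa [sub_eq_zero] using Polynomial.dvd_iff_isRoot.1 (dvd_of_mul_right_dvd h)
    have hs : (α + β * s) ^ (n + 1) = u := by
      simpa [sub_eq_zero] using Polynomial.dvd_iff_isRoot.1 (dvd_of_mul_left_dvd h)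
    have habs : |α + β * r| = |α + β * s| :=
      (pow_left_inj₀ (abs_nonneg _) (abs_nonneg _) n.succ_ne_zero).1
        (by rw [← abs_pow, ← abs_pow, hr, hs])
    rcases abs_eq_abs.1 habs with heq | hneg
    · exact absurd (mul_left_cancel₀ hβ (add_left_cancel heq)) hrs
    · rw [hneg, neg_add_cancel]

end Polynomials

namespace TwoStage

variable {n₁ n₂ : ℕ} {a a' : Fin n₂ → ℤ} {α β γ δ : ℤ}

/-- The generator `x̄` of the cohomology ring, pulled back from the base `ℂP^{n₁}`. -/
noncomputable abbrev x (n₁ : ℕ) {n₂ : ℕ} (a : Fin n₂ → ℤ) : TwoStage n₁ n₂ a :=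
  Ideal.Quotient.mk (twoStageIdeal n₁ n₂ a) (X 0)

/-- The generator `ȳ` of the cohomology ring, restricting to a generator on the fibre `ℂP^{n₂}`. -/
noncomputable abbrev y (n₁ : ℕ) {n₂ : ℕ} (a : Fin n₂ → ℤ) : TwoStage n₁ n₂ a :=
  Ideal.Quotient.mk (twoStageIdeal n₁ n₂ a) (X 1)

theorem x_pow_eq_zero : x n₁ a ^ (n₁ + 1) = 0 := by
  rw [← map_pow, Ideal.Quotient.eq_zero_iff_mem]
  exact Ideal.subset_span (Set.mem_insert _ _)

theorem y_mul_prod_eq_zero : y n₁ a * ∏ i, (y n₁ a + a i * x n₁ a) = 0 := by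
  have h : Ideal.Quotient.mk (twoStageIdeal n₁ n₂ a) (X 1 * ∏ i, (X 1 + C (a i) * X 0)) = 0 :=
    Ideal.Quotient.eq_zero_iff_mem.2 (Ideal.subset_span (Set.mem_insert_of_mem _ rfl))
  simpa using h

section Lift

variable {R : Type*} [CommRing R] (r s : R) (hr : r ^ (n₁ + 1) = 0)
  (hs : s * ∏ i, (s + a i * r) = 0)

/-- The universal property of `TwoStage`: the ring homomorphism sending `x̄` to `r` and `ȳ` to `s`,
for a pair `r`, `s` that satisfies the two defining relations. -/
noncomputable def lift : TwoStage n₁ n₂ a →+* R :=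
  Ideal.Quotient.lift _ (aeval ![r, s] : MvPolynomial (Fin 2) ℤ →ₐ[ℤ] R).toRingHom <| by
    change twoStageIdeal n₁ n₂ a ≤ RingHom.ker _
    rw [twoStageIdeal, Ideal.span_le, Set.pair_subset_iff]
    constructor <;> simp [RingHom.mem_ker, hr, hs]

@[simp]
theorem lift_x : lift r s hr hs (x n₁ a) = r := by simp [lift, x]

@[simp]
theorem lift_y : lift r s hr hs (y n₁ a) = s := by simp [lift, y]

end Lift

theorem linearIndependent_x_y (hn₁ : 0 < n₁) (hn₂ : 0 < n₂) :
    LinearIndependent ℤ ![x n₁ a, y n₁ a] := by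
  have eps_pow {k : ℕ} (hk : 0 < k) : (DualNumber.eps : DualNumber ℤ) ^ (k + 1) = 0 :=
    pow_eq_zero_of_le (show 2 ≤ k + 1 by omega) (by rw [sq, DualNumber.eps_mul_eps])
  refine LinearIndependent.pair_iff.2 fun p q h => ⟨?_, ?_⟩
  · have := congrArg (lift (DualNumber.eps : DualNumber ℤ) 0 (eps_pow hn₁) (zero_mul _)) h
    simpa using congrArg TrivSqZeroExt.snd this
  · have := congrArg (lift 0 (DualNumber.eps : DualNumber ℤ) (by simp)
      (by simp [← pow_succ', eps_pow hn₂])) h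
    simpa using congrArg TrivSqZeroExt.snd this

theorem mem_span_x_y_iff {z : TwoStage n₁ n₂ a} :
    z ∈ Submodule.span ℤ {x n₁ a, y n₁ a} ↔ ∃ p q : ℤ, z = p * x n₁ a + q * y n₁ a := by
  simp only [Submodule.mem_span_pair, zsmul_eq_mul, eq_comm]

theorem exists_isUnit_det_map_x_map_y (hn₁ : 0 < n₁) (hn₂ : 0 < n₂)
    (φ : TwoStage n₁ n₂ a' →+* TwoStage n₁ n₂ a)
    (hφ : φ '' (Submodule.span ℤ {x n₁ a', y n₁ a'} : Set (TwoStage n₁ n₂ a')) =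
      (Submodule.span ℤ {x n₁ a, y n₁ a} : Set (TwoStage n₁ n₂ a))) :
    ∃ α β γ δ : ℤ, IsUnit (α * δ - β * γ) ∧
      φ (x n₁ a') = α * x n₁ a + β * y n₁ a ∧ φ (y n₁ a') = γ * x n₁ a + δ * y n₁ a := by
  have map_mem {z} (hz : z ∈ Submodule.span ℤ {x n₁ a', y n₁ a'}) :
      φ z ∈ Submodule.span ℤ {x n₁ a, y n₁ a} :=
    hφ.subset (Set.mem_image_of_mem φ hz)
  have exists_preimage {w} (hw : w ∈ Submodule.span ℤ {x n₁ a, y n₁ a}) :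
      ∃ p q : ℤ, φ (p * x n₁ a' + q * y n₁ a') = w := by
    obtain ⟨z, hz, rfl⟩ := hφ.superset hw
    obtain ⟨p, q, rfl⟩ := mem_span_x_y_iff.1 hz
    exact ⟨p, q, rfl⟩
  obtain ⟨α, β, hx⟩ := mem_span_x_y_iff.1 (map_mem (Submodule.subset_span (.inl rfl)))
  obtain ⟨γ, δ, hy⟩ := mem_span_x_y_iff.1 (map_mem (Submodule.subset_span (.inr rfl)))
  obtain ⟨p, q, hpq⟩ := exists_preimage (Submodule.subset_span (.inl rfl))
  obtain ⟨r, s, hrs⟩ := exists_preimage (Submodule.subset_span (.inr rfl))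
  simp only [map_add, map_mul, map_intCast, hx, hy] at hpq hrs
  have hindep := linearIndependent_x_y (a := a) hn₁ hn₂
  have hrow₁ : p * α + q * γ = 1 ∧ p * β + q * δ = 0 := hindep.eq_of_pair <| by
    simp only [zsmul_eq_mul]; push_cast; linear_combination hpq
  have hrow₂ : r * α + s * γ = 0 ∧ r * β + s * δ = 1 := hindep.eq_of_pair <| by
    simp only [zsmul_eq_mul]; push_cast; linear_combination hrs
  refine ⟨α, β, γ, δ, IsUnit.of_mul_eq_one (p * s - q * r) ?_, hx, hy⟩
  linear_combination (r * β + s * δ) * hrow₁.1 + hrow₂.2 - (r * α + s * γ) * hrow₁.2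

section FibrePreserving

theorem one_add_mul_prod_eq_of_y_add_mul_prod_eq_zero {c : ℤ} {b : Fin n₂ → ℤ}
    (h : (y n₁ a + c * x n₁ a) * ∏ i, (y n₁ a + b i * x n₁ a) = 0)
    {S : Type*} [CommRing S] {z : S} (hz : z ^ (n₁ + 1) = 0) :
    (1 + c * z) * ∏ i, (1 + b i * z) = ∏ i, (1 + a i * z) := by
  let F (d : Fin (n₂ + 1) → ℤ) : S[X] := ∏ i, (Polynomial.X + Polynomial.C (d i * z))
  let f := F (Fin.cons 0 a)
  have hroot : AdjoinRoot.root f * ∏ i, (AdjoinRoot.root f + a i * AdjoinRoot.of f z) = 0 := by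
    have := AdjoinRoot.mk_self (f := f)
    simpa [f, F, Fin.prod_univ_succ] using this
  have hdvd : f ∣ F (Fin.cons c b) := by
    have := congrArg (lift (AdjoinRoot.of f z) (AdjoinRoot.root f)
      (by rw [← map_pow, hz, map_zero]) hroot) h
    rw [← AdjoinRoot.mk_eq_zero]
    simpa [F, Fin.prod_univ_succ] using this
  have heval := congrArg (Polynomial.eval 1) (prod_X_add_C_eq_of_dvd hdvd)
  simpa [Polynomial.eval_prod, Fin.prod_univ_succ] using heval.symm

theorem chernClassesAgree_of_map_x_eq (φ : TwoStage n₁ n₂ a' →+* TwoStage n₁ n₂ a)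
    (hα : IsUnit α) (hδ : IsUnit δ) (hx : φ (x n₁ a') = α * x n₁ a)
    (hy : φ (y n₁ a') = γ * x n₁ a + δ * y n₁ a) :
    ChernClassesAgree n₁ a a' (δ * α) (α * γ) := by
  have hδ' : (δ : TwoStage n₁ n₂ a) * δ = 1 :=
    mod_cast congrArg Int.cast (Int.isUnit_mul_self hδ)
  have hrel : (y n₁ a + (δ * γ : ℤ) * x n₁ a) *
      ∏ i, (y n₁ a + (δ * (γ + α * a' i) : ℤ) * x n₁ a) = 0 := by
    have hmap := congrArg φ (y_mul_prod_eq_zero (n₁ := n₁) (a := a'))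
    simp only [map_mul, map_prod, map_add, map_intCast, map_zero, hx, hy] at hmap
    have hfirst : y n₁ a + (δ * γ : ℤ) * x n₁ a = δ * (γ * x n₁ a + δ * y n₁ a) := by
      push_cast; linear_combination -y n₁ a * hδ'
    have hfactor (i) : y n₁ a + (δ * (γ + α * a' i) : ℤ) * x n₁ a =
        δ * (γ * x n₁ a + δ * y n₁ a + a' i * (α * x n₁ a)) := by
      push_cast; linear_combination -y n₁ a * hδ'
    simp only [hfirst, hfactor, Finset.prod_mul_distrib]
    rw [mul_mul_mul_comm, hmap, mul_zero]
  have htwist : δ * α * (α * γ) = δ * γ := by linear_combination δ * γ * Int.isUnit_mul_self hα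
  have htwist' (i) : δ * α * (a' i + α * γ) = δ * (γ + α * a' i) := by
    linear_combination δ * γ * Int.isUnit_mul_self hα
  simpa [ChernClassesAgree, htwist, htwist'] using
    one_add_mul_prod_eq_of_y_add_mul_prod_eq_zero hrel (mk_X_pow_eq_zero n₁)

end FibrePreserving

section NotFibrePreserving

/-- The substitution `x ↦ X`, `y ↦ T X` into `ℤ[T][X]`. Its coefficient of `X ^ k` is the value of
the homogeneous part of degree `k` at `(1, T)`, which makes the grading of `ℤ[x,y]` accessible
through coefficients of univariate polynomials. -/
noncomputable def gradedEval : MvPolynomial (Fin 2) ℤ →ₐ[ℤ] ℤ[X][X] :=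
  aeval ![Polynomial.X, Polynomial.C Polynomial.X * Polynomial.X]

theorem coeff_zero_gradedEval (p : MvPolynomial (Fin 2) ℤ) :
    (gradedEval p).coeff 0 = Polynomial.C (constantCoeff p) := by
  have hhom : (Polynomial.constantCoeff.comp gradedEval.toRingHom : _ →+* ℤ[X]) =
      Polynomial.C.comp constantCoeff := by
    ext i
    · simp
    · fin_cases i <;> simp [gradedEval]
  exact congrArg (· p) hhom

theorem gradedEval_linear_pow (α β : ℤ) (k : ℕ) :
    gradedEval ((C α * X 0 + C β * X 1) ^ k) =
      Polynomial.C ((Polynomial.C α + Polynomial.C β * Polynomial.X) ^ k) * Polynomial.X ^ k := by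
  simp only [gradedEval, map_pow, map_add, map_mul, eq_intCast, map_intCast, aeval_X,
    Matrix.cons_val_zero, Matrix.cons_val_one, Matrix.cons_val_fin_one, ← mul_pow]
  ring

theorem gradedEval_relation (a : Fin n₂ → ℤ) :
    gradedEval (X 1 * ∏ i, (X 1 + C (a i) * X 0)) =
      Polynomial.C (Polynomial.X * ∏ i, (Polynomial.X + Polynomial.C (a i))) *
        Polynomial.X ^ (n₂ + 1) := by
  simp only [gradedEval, map_prod, map_add, map_mul, eq_intCast, map_intCast, aeval_X,
    Matrix.cons_val_zero, Matrix.cons_val_one, Matrix.cons_val_fin_one, ← add_mul,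
    Finset.prod_mul_distrib, Finset.prod_const, Finset.card_univ, Fintype.card_fin]
  ring

theorem exists_dvd_pow_sub_C_of_pow_eq_zero
    (h : (α * x n₁ a + β * y n₁ a) ^ (n₁ + 1) = 0) :
    ∃ u : ℤ, Polynomial.X * ∏ i, (Polynomial.X + Polynomial.C (a i)) ∣
      (Polynomial.C α + Polynomial.C β * Polynomial.X) ^ (n₁ + 1) - Polynomial.C u := by
  have hmem : (C α * X 0 + C β * X 1) ^ (n₁ + 1) ∈ twoStageIdeal n₁ n₂ a := by
    rw [← Ideal.Quotient.eq_zero_iff_mem]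
    simpa using h
  obtain ⟨U, V, hUV⟩ := Ideal.mem_span_pair.1 hmem
  have hpow : gradedEval (X 0 ^ (n₁ + 1)) = Polynomial.X ^ (n₁ + 1) := by simp [gradedEval]
  refine ⟨constantCoeff U, (gradedEval V * Polynomial.X ^ (n₂ + 1)).coeff (n₁ + 1), ?_⟩
  -- In degree `n₁ + 1` only the constant term of the multiplier `U` of `x ^ (n₁ + 1)` survives.
  have hcoeff := congrArg (fun p => (gradedEval p).coeff (n₁ + 1)) hUV
  rw [map_add, map_mul _ U, map_mul _ V, gradedEval_linear_pow, hpow, gradedEval_relation,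
    Polynomial.coeff_add, Polynomial.coeff_mul_X_pow', Polynomial.coeff_C_mul_X_pow,
    mul_left_comm, Polynomial.coeff_C_mul, if_pos rfl, if_pos le_rfl, Nat.sub_self,
    coeff_zero_gradedEval] at hcoeff
  linear_combination -hcoeff

theorem mul_eq_two_mul_of_pow_eq_zero (hβ : β ≠ 0)
    (h : (α * x n₁ a + β * y n₁ a) ^ (n₁ + 1) = 0) (i : Fin n₂) :
    β * a i = 2 * α := by
  obtain ⟨u, hu⟩ := exists_dvd_pow_sub_C_of_pow_eq_zero h
  have hdvd : (Polynomial.X - Polynomial.C 0) * (Polynomial.X - Polynomial.C (-a i)) ∣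
      Polynomial.X * ∏ i, (Polynomial.X + Polynomial.C (a i)) := by
    simpa using mul_dvd_mul_left Polynomial.X (Finset.dvd_prod_of_mem
      (fun i => Polynomial.X + Polynomial.C (a i)) (Finset.mem_univ i))
  linarith [add_mul_add_add_mul_eq_zero_of_dvd hβ (hdvd.trans hu)]

theorem mul_add_eq_two_mul_of_pow_eq_zero (hβ : β ≠ 0)
    (h : (α * x n₁ a + β * y n₁ a) ^ (n₁ + 1) = 0) {i j : Fin n₂} (hij : i ≠ j) :
    β * (a i + a j) = 2 * α := by
  obtain ⟨u, hu⟩ := exists_dvd_pow_sub_C_of_pow_eq_zero h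
  have hdvd : (Polynomial.X - Polynomial.C (-a i)) * (Polynomial.X - Polynomial.C (-a j)) ∣
      Polynomial.X * ∏ i, (Polynomial.X + Polynomial.C (a i)) := by
    have := Finset.prod_dvd_prod_of_subset {i, j} Finset.univ
      (fun i => Polynomial.X + Polynomial.C (a i)) (Finset.subset_univ _)
    rw [Finset.prod_pair hij] at this
    simpa using this.mul_left Polynomial.X
  linarith [add_mul_add_add_mul_eq_zero_of_dvd hβ (hdvd.trans hu)]

theorem a_eq_zero_of_pow_eq_zero [Nontrivial (Fin n₂)] (hβ : β ≠ 0)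
    (h : (α * x n₁ a + β * y n₁ a) ^ (n₁ + 1) = 0) : a = 0 := by
  ext i
  obtain ⟨j, hji⟩ := exists_ne i
  have hj := mul_eq_two_mul_of_pow_eq_zero hβ h j
  have hij := mul_add_eq_two_mul_of_pow_eq_zero hβ h hji.symm
  have hβi : β * a i = 0 := by linarith
  simpa [hβ] using hβi

theorem map_x_pow_eq_zero (φ : TwoStage n₁ n₂ a' →+* TwoStage n₁ n₂ a)
    (hx : φ (x n₁ a') = α * x n₁ a + β * y n₁ a) :
    (α * x n₁ a + β * y n₁ a) ^ (n₁ + 1) = 0 := by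
  rw [← hx, ← map_pow, x_pow_eq_zero, map_zero]

/-- Up to the determinant, `δ x̄ - β ȳ` is the image of `x̄` under `φ⁻¹`. -/
theorem comap_x_pow_eq_zero {φ : TwoStage n₁ n₂ a' →+* TwoStage n₁ n₂ a}
    (hφ : Function.Injective φ) (hx : φ (x n₁ a') = α * x n₁ a + β * y n₁ a)
    (hy : φ (y n₁ a') = γ * x n₁ a + δ * y n₁ a) :
    (δ * x n₁ a' + (-β : ℤ) * y n₁ a') ^ (n₁ + 1) = 0 := by
  have hdet : φ (δ * x n₁ a' + (-β : ℤ) * y n₁ a') = (α * δ - β * γ : ℤ) * x n₁ a := by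
    simp only [map_add, map_mul, map_intCast, hx, hy]
    push_cast
    ring
  apply hφ
  rw [map_pow, hdet, mul_pow, x_pow_eq_zero, mul_zero, map_zero]

theorem mul_prod_eq_zero_of_map_x_map_y (hn : n₂ < n₁)
    (φ : TwoStage n₁ n₂ a' →+* TwoStage n₁ n₂ a)
    (hx : φ (x n₁ a') = α * x n₁ a + β * y n₁ a) (hy : φ (y n₁ a') = γ * x n₁ a + δ * y n₁ a) :
    γ * ∏ i, (γ + a' i * α) = 0 := by
  set z := Ideal.Quotient.mk (Ideal.span {(Polynomial.X : ℤ[X]) ^ (n₁ + 1)}) Polynomial.X with hz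
  have hrel : γ * z * ∏ i, (γ * z + a' i * (α * z)) = 0 := by
    simpa [hx, hy] using congrArg ((lift z 0 (mk_X_pow_eq_zero n₁) (zero_mul _)).comp φ)
      (y_mul_prod_eq_zero (n₁ := n₁) (a := a'))
  have hmk : Ideal.Quotient.mk (Ideal.span {(Polynomial.X : ℤ[X]) ^ (n₁ + 1)})
      (Polynomial.C (γ * ∏ i, (γ + a' i * α)) * Polynomial.X ^ (n₂ + 1)) = 0 := by
    rw [← hrel]
    simp only [map_prod, map_add, map_mul, map_pow, eq_intCast, map_intCast, ← hz, ← mul_assoc,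
      ← add_mul, Finset.prod_mul_distrib, Finset.prod_const, Finset.card_univ, Fintype.card_fin]
    ring
  rw [Ideal.Quotient.eq_zero_iff_mem, Ideal.mem_span_singleton,
    Polynomial.X_pow_dvd_iff] at hmk
  simpa only [Polynomial.coeff_C_mul_X_pow, if_true] using hmk (n₂ + 1) (by omega)

end NotFibrePreserving

section ProjectiveLineFibre

variable {b b' : ℤ}

theorem even_sub_of_mul_eq_two_mul (hdet : IsUnit (α * δ - β * γ)) (h : β * b = 2 * α)
    (h' : -β * b' = 2 * δ) : Even (b - b') := by
  have hodd : Odd (α * δ - β * γ) := by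
    rcases Int.isUnit_iff.1 hdet with h | h <;> simp [h]
  rcases Int.even_or_odd' β with ⟨k, rfl | rfl⟩
  · obtain rfl : α = k * b := by linarith
    obtain rfl : δ = -k * b' := by linarith
    have hmul : Odd (k * b * (-k * b')) := by
      simpa [mul_assoc, Int.odd_sub] using hodd
    simp only [Int.odd_mul] at hmul
    exact hmul.1.2.sub_odd hmul.2.2
  · have hb : Even ((2 * k + 1) * b) := ⟨α, by linarith⟩
    have hb' : Even ((2 * k + 1) * b') := ⟨-δ, by linarith⟩
    have hβ : ¬ Even (2 * k + 1) := by simp [parity_simps]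
    exact ((Int.even_mul.1 hb).resolve_left hβ).sub ((Int.even_mul.1 hb').resolve_left hβ)

theorem eq_or_eq_neg_of_mul_eq_two_mul (hβ : β ≠ 0) (hdet : IsUnit (α * δ - β * γ))
    (h : β * b = 2 * α) (h' : -β * b' = 2 * δ) (hγ : γ * (γ + b' * α) = 0) :
    b = b' ∨ b = -b' := by
  have hunit : IsUnit (α * δ) := by
    rcases mul_eq_zero.1 hγ with hγ | hγ
    · simpa [hγ] using hdet
    · rw [← IsUnit.neg_iff]
      convert hdet using 1
      linear_combination β * hγ + α * h'
  obtain ⟨hα, hδ⟩ := IsUnit.mul_iff.1 hunit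
  rw [← sq_eq_sq_iff_eq_or_eq_neg]
  refine mul_left_cancel₀ (pow_ne_zero 2 hβ) ?_
  calc β ^ 2 * b ^ 2 = 4 * α ^ 2 := by linear_combination (β * b + 2 * α) * h
    _ = 4 * δ ^ 2 := by rw [Int.isUnit_sq hα, Int.isUnit_sq hδ]
    _ = β ^ 2 * b' ^ 2 := by linear_combination (β * b' - 2 * δ) * h'

theorem exists_chernClassesAgree_of_ne_zero {a a' : Fin 1 → ℤ}
    {φ : TwoStage n₁ 1 a' →+* TwoStage n₁ 1 a} (hφ : Function.Injective φ)
    (hβ : β ≠ 0) (hdet : IsUnit (α * δ - β * γ))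
    (hx : φ (x n₁ a') = α * x n₁ a + β * y n₁ a) (hy : φ (y n₁ a') = γ * x n₁ a + δ * y n₁ a) :
    ∃ ε t : ℤ, (ε = 1 ∨ ε = -1) ∧ ChernClassesAgree n₁ a a' ε t := by
  have ha := mul_eq_two_mul_of_pow_eq_zero hβ (map_x_pow_eq_zero φ hx) 0
  have ha' := mul_eq_two_mul_of_pow_eq_zero (neg_ne_zero.2 hβ) (comap_x_pow_eq_zero hφ hx hy) 0
  rcases le_or_gt n₁ 1 with hn | hn
  · obtain ⟨t, ht⟩ := even_sub_of_mul_eq_two_mul hdet ha ha'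
    exact ⟨1, t, .inl rfl, .of_le_one hn (by linarith)⟩
  · have hγ : γ * (γ + a' 0 * α) = 0 := by
      simpa using mul_prod_eq_zero_of_map_x_map_y hn φ hx hy
    rcases eq_or_eq_neg_of_mul_eq_two_mul hβ hdet ha ha' hγ with h | h
    · exact ⟨1, 0, .inl rfl, .of_forall_eq_mul (by simp [h])⟩
    · exact ⟨-1, 0, .inr rfl, .of_forall_eq_mul (by simp [h])⟩

end ProjectiveLineFibre

end TwoStage

/-- implication (3) ⇒ (1) of Theorem 6.1: a graded ring isomorphism
between the cohomology rings of two 2-stage generalized Bott manifolds produces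
`ε = ±1` and an integer `t` with
`(1 + εt x̄) ∏ᵢ (1 + ε(a'ᵢ + t) x̄) = ∏ᵢ (1 + aᵢ x̄)` in `ℤ[x]/(x^{n₁+1})`. -/
theorem stmt10 (n₁ n₂ : ℕ) (hn₁ : 0 < n₁) (hn₂ : 0 < n₂) (a a' : Fin n₂ → ℤ)
    (φ : TwoStage n₁ n₂ a' ≃+* TwoStage n₁ n₂ a)
    (hφ : φ '' (Submodule.span ℤ
        {Ideal.Quotient.mk (twoStageIdeal n₁ n₂ a') (X 0),
         Ideal.Quotient.mk (twoStageIdeal n₁ n₂ a') (X 1)} : Set (TwoStage n₁ n₂ a')) =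
      (Submodule.span ℤ
        {Ideal.Quotient.mk (twoStageIdeal n₁ n₂ a) (X 0),
         Ideal.Quotient.mk (twoStageIdeal n₁ n₂ a) (X 1)} : Set (TwoStage n₁ n₂ a))) :
    ∃ ε t : ℤ, (ε = 1 ∨ ε = -1) ∧
      Ideal.Quotient.mk (Ideal.span {(Polynomial.X : Polynomial ℤ) ^ (n₁ + 1)})
        ((1 + Polynomial.C (ε * t) * Polynomial.X) *
          ∏ i, (1 + Polynomial.C (ε * (a' i + t)) * Polynomial.X)) =
      Ideal.Quotient.mk (Ideal.span {(Polynomial.X : Polynomial ℤ) ^ (n₁ + 1)})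
        (∏ i, (1 + Polynomial.C (a i) * Polynomial.X)) := by
  obtain ⟨α, β, γ, δ, hdet, hx, hy⟩ :=
    TwoStage.exists_isUnit_det_map_x_map_y hn₁ hn₂ φ.toRingHom hφ
  obtain rfl | hβ := eq_or_ne β 0
  · obtain ⟨hα, hδ⟩ : IsUnit α ∧ IsUnit δ := IsUnit.mul_iff.1 (by simpa using hdet)
    exact ⟨δ * α, α * γ, Int.isUnit_iff.1 (hδ.mul hα),
      TwoStage.chernClassesAgree_of_map_x_eq _ hα hδ (by simpa using hx) hy⟩
  obtain rfl | hn₂ : n₂ = 1 ∨ 2 ≤ n₂ := by omega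
  · exact TwoStage.exists_chernClassesAgree_of_ne_zero φ.injective hβ hdet hx hy
  · have : Nontrivial (Fin n₂) := Fin.nontrivial_iff_two_le.2 hn₂
    have ha : a = 0 := TwoStage.a_eq_zero_of_pow_eq_zero hβ (TwoStage.map_x_pow_eq_zero _ hx)
    have ha' : a' = 0 := TwoStage.a_eq_zero_of_pow_eq_zero (neg_ne_zero.2 hβ)
      (TwoStage.comap_x_pow_eq_zero φ.injective hx hy)
    exact ⟨1, 0, .inl rfl, ChernClassesAgree.of_forall_eq_mul (by simp [ha, ha'])⟩
end

section
/- Let n ≥ 2 and let a, a′ be integers. There exists a ring isomorphism φ : ℤ[x,y]/(x^{n+1}, y(y + a′x)) → ℤ[x,y]/(x^{n+1}, y(y + ax)) mapping the ℤ-span of {x̄, ȳ} onto the ℤ-span of {x̄, ȳ} if and only if a′ = a or a′ = −a. -/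
open MvPolynomial

/-- The ideal `(x^{n+1}, y(y + ax))` of `ℤ[x,y]` (with `x = X 0`, `y = X 1`), defining
the cohomology ring of the `ℂP¹`-bundle `P(ℂ ⊕ γ^{ax})` over `ℂPⁿ`. -/
noncomputable def hirzIdeal (n : ℕ) (a : ℤ) : Ideal (MvPolynomial (Fin 2) ℤ) :=
  Ideal.span {X 0 ^ (n + 1), X 1 * (X 1 + C a * X 0)}

/-!
Near the origin the relations of `ℤ[x,y]/(x^{n+1}, y(y + ax))` start in degree two, and for `n ≥ 2`
their quadratic parts are exactly the multiples of `y(y + ax)`, a binary form of discriminant `a²`.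
Lift an isomorphism of two such rings to a polynomial substitution `f`. The generators go to
elements without constant term, since `x` and `y` are nilpotent and `ℤ` is reduced, so the chain
rule at the origin applies: the Jacobian `J` of `f` is invertible over `ℤ`, and it carries the form
of `a'` to a multiple `c` of the form of `a`. Comparing discriminants, `a'² (det J)² = c² a²`, so
`a ∣ a'`, and `a' ∣ a` by symmetry. Conversely `y ↦ -y` exchanges `a` and `-a`.
-/

section TaylorAtZero

variable {R σ τ ι : Type*} [CommSemiring R]

/-- The gradient of `p` at the origin, i.e. the coefficient vector of its linear part. -/
noncomputable def gradAtZero (p : MvPolynomial σ R) : σ → R :=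
  fun i => constantCoeff (pderiv i p)

/-- The Hessian matrix `H` of `p` at the origin. It stores the quadratic part `p₂` of `p` through
`vᵀ H v = 2 p₂(v)`, so that no division by two is needed. -/
noncomputable def hessAtZero (p : MvPolynomial σ R) : Matrix σ σ R :=
  Matrix.of fun i j => constantCoeff (pderiv i (pderiv j p))

/-- The Jacobian matrix at the origin of the polynomial map with components `f`; its rows are
their gradients. -/
noncomputable def jacAtZero (f : τ → MvPolynomial σ R) : Matrix τ σ R :=
  Matrix.of fun k => gradAtZero (f k)

theorem gradAtZero_add (p q : MvPolynomial σ R) :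
    gradAtZero (p + q) = gradAtZero p + gradAtZero q := by
  ext i
  simp [gradAtZero]

theorem hessAtZero_add (p q : MvPolynomial σ R) :
    hessAtZero (p + q) = hessAtZero p + hessAtZero q := by
  ext i j
  simp [hessAtZero]

theorem gradAtZero_mul (p q : MvPolynomial σ R) :
    gradAtZero (p * q) =
      constantCoeff p • gradAtZero q + constantCoeff q • gradAtZero p := by
  ext i
  simp [gradAtZero]

theorem hessAtZero_mul (p q : MvPolynomial σ R) :
    hessAtZero (p * q) =
      constantCoeff p • hessAtZero q + constantCoeff q • hessAtZero p +
        Matrix.vecMulVec (gradAtZero p) (gradAtZero q) +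
        Matrix.vecMulVec (gradAtZero q) (gradAtZero p) := by
  ext i j
  simp only [hessAtZero, gradAtZero, Derivation.leibniz, smul_eq_mul, map_add, map_mul,
    Matrix.of_apply, Matrix.smul_of, Matrix.of_add_of, Matrix.add_apply, Pi.add_apply,
    Pi.smul_apply, Matrix.vecMulVec_apply]
  ring

theorem jacAtZero_X [DecidableEq σ] :
    jacAtZero (X : σ → MvPolynomial σ R) = 1 := by
  ext i j
  rcases eq_or_ne i j with rfl | hij
  · simp [jacAtZero, gradAtZero]
  · simp [jacAtZero, gradAtZero, pderiv_X_of_ne hij, Matrix.one_apply_ne hij]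

theorem pderiv_bind₁ [Fintype τ] (f : τ → MvPolynomial σ R) (p : MvPolynomial τ R) (i : σ) :
    pderiv i (bind₁ f p) = ∑ k, bind₁ f (pderiv k p) * pderiv i (f k) := by
  classical
  induction p using MvPolynomial.induction_on with
  | C r => simp
  | add p q hp hq => simp [hp, hq, add_mul, Finset.sum_add_distrib]
  | mul_X p l hp =>
    simp [hp, pderiv_X, Pi.single_apply, add_mul, Finset.sum_add_distrib, Finset.mul_sum,
      apply_ite, mul_assoc]

theorem constantCoeff_bind₁ {f : τ → MvPolynomial σ R} (hf : ∀ k, constantCoeff (f k) = 0)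
    (p : MvPolynomial τ R) : constantCoeff (bind₁ f p) = constantCoeff p := by
  induction p using MvPolynomial.induction_on with
  | C r => simp
  | add p q hp hq => simp [hp, hq]
  | mul_X p l _ => simp [hf]

theorem jacAtZero_bind₁ [Fintype τ] {f : τ → MvPolynomial σ R}
    (hf : ∀ k, constantCoeff (f k) = 0) (g : ι → MvPolynomial τ R) :
    jacAtZero (fun i => bind₁ f (g i)) = jacAtZero g * jacAtZero f := by
  ext i j
  simp [jacAtZero, gradAtZero, pderiv_bind₁, constantCoeff_bind₁ hf, Matrix.mul_apply]

theorem hessAtZero_bind₁ [Fintype τ] {f : τ → MvPolynomial σ R}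
    (hf : ∀ k, constantCoeff (f k) = 0) {p : MvPolynomial τ R} (hp : gradAtZero p = 0) :
    hessAtZero (bind₁ f p) = (jacAtZero f).transpose * hessAtZero p * jacAtZero f := by
  ext i j
  have hp' (k : τ) : constantCoeff (pderiv k p) = 0 := congrFun hp k
  simp [hessAtZero, jacAtZero, gradAtZero, pderiv_bind₁, constantCoeff_bind₁ hf, hp',
    Matrix.mul_apply, mul_comm]

end TaylorAtZero

theorem exists_bind₁_lift {R σ τ : Type*} [CommRing R] {I : Ideal (MvPolynomial σ R)}
    {J : Ideal (MvPolynomial τ R)} (φ : (MvPolynomial σ R ⧸ I) →ₐ[R] MvPolynomial τ R ⧸ J) :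
    ∃ f : σ → MvPolynomial τ R, ∀ p,
      φ (Ideal.Quotient.mk I p) = Ideal.Quotient.mk J (bind₁ f p) := by
  choose f hf using fun i => Ideal.Quotient.mk_surjective (φ (Ideal.Quotient.mk I (X i)))
  refine ⟨f, fun p => ?_⟩
  have hφ : φ.comp (Ideal.Quotient.mkₐ R I) = (Ideal.Quotient.mkₐ R J).comp (bind₁ f) :=
    MvPolynomial.algHom_ext fun i => by simp [hf]
  exact DFunLike.congr_fun hφ p

theorem dvd_of_transpose_mul_mul_eq_smul {a a' : ℤ} {J : Matrix (Fin 2) (Fin 2) ℤ} {c : ℤ}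
    (hJ : IsUnit J.det) (h : J.transpose * !![0, a'; a', 2] * J = c • !![0, a; a, 2]) : a ∣ a' := by
  have hdet : a' ^ 2 * J.det ^ 2 = a ^ 2 * c ^ 2 := by
    have hform := congrArg Matrix.det h
    simp only [Matrix.det_mul, Matrix.det_transpose, Matrix.det_smul, Matrix.det_fin_two_of,
      Fintype.card_fin] at hform
    linear_combination -hform
  rw [Int.isUnit_sq hJ, mul_one] at hdet
  exact (Int.pow_dvd_pow_iff two_ne_zero).1 ⟨c ^ 2, hdet⟩

section HirzRing

variable {n : ℕ} {a a' : ℤ}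

/-- The ring `ℤ[x,y]/(x^{n+1}, y(y + ax))`, the cohomology of `P(ℂ ⊕ γ^{ax})` over `ℂPⁿ`. -/
abbrev HirzRing (n : ℕ) (a : ℤ) : Type :=
  MvPolynomial (Fin 2) ℤ ⧸ hirzIdeal n a

/-- The degree-two cohomology of `P(ℂ ⊕ γ^{ax})`, spanned by the classes of `x` and `y`;
a graded isomorphism is a ring isomorphism preserving it. -/
noncomputable abbrev hirzDegTwo (n : ℕ) (a : ℤ) : Submodule ℤ (HirzRing n a) :=
  Submodule.span ℤ
    {Ideal.Quotient.mk (hirzIdeal n a) (X 0), Ideal.Quotient.mk (hirzIdeal n a) (X 1)}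

theorem X_one_mul_mem_hirzIdeal (n : ℕ) (a : ℤ) : X 1 * (X 1 + C a * X 0) ∈ hirzIdeal n a :=
  Ideal.subset_span (by simp)

theorem X_zero_pow_mem_hirzIdeal (n : ℕ) (a : ℤ) : X 0 ^ (n + 1) ∈ hirzIdeal n a :=
  Ideal.subset_span (by simp)

theorem constantCoeff_eq_zero_of_mem_hirzIdeal {p : MvPolynomial (Fin 2) ℤ}
    (hp : p ∈ hirzIdeal n a) : constantCoeff p = 0 := by
  obtain ⟨u, v, rfl⟩ := Ideal.mem_span_pair.1 hp
  simp

theorem gradAtZero_eq_zero_of_mem_hirzIdeal (hn : n ≠ 0) {p : MvPolynomial (Fin 2) ℤ}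
    (hp : p ∈ hirzIdeal n a) : gradAtZero p = 0 := by
  obtain ⟨u, v, rfl⟩ := Ideal.mem_span_pair.1 hp
  simp [gradAtZero_add, gradAtZero_mul, pow_succ, hn]

theorem hessAtZero_X_one_mul_add (a : ℤ) :
    hessAtZero (X 1 * (X 1 + C a * X 0) : MvPolynomial (Fin 2) ℤ) = !![0, a; a, 2] := by
  ext i j
  fin_cases i <;> fin_cases j <;> simp [hessAtZero, pderiv_X]

theorem exists_hessAtZero_eq_smul_of_mem_hirzIdeal (hn : 2 ≤ n) {p : MvPolynomial (Fin 2) ℤ}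
    (hp : p ∈ hirzIdeal n a) : ∃ c : ℤ, hessAtZero p = c • !![0, a; a, 2] := by
  obtain ⟨u, v, rfl⟩ := Ideal.mem_span_pair.1 hp
  obtain ⟨k, rfl⟩ := Nat.exists_eq_add_of_le' hn
  have hx : hessAtZero (X 0 ^ (k + 2 + 1) : MvPolynomial (Fin 2) ℤ) = 0 := by
    ext i j
    simp [hessAtZero]
  refine ⟨constantCoeff v, ?_⟩
  rw [hessAtZero_add, hessAtZero_mul u, hessAtZero_mul v, hx, hessAtZero_X_one_mul_add]
  simp [gradAtZero_mul, pow_succ]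

theorem map_X_eq_zero_of_hirzIdeal_le_ker {A : Type*} [Semiring A] [IsReduced A]
    {ψ : MvPolynomial (Fin 2) ℤ →+* A} (hψ : hirzIdeal n a ≤ RingHom.ker ψ) (i : Fin 2) :
    ψ (X i) = 0 := by
  have hx : ψ (X 0) = 0 := eq_zero_of_pow_eq_zero (n := n + 1) <| by
    simpa using hψ (X_zero_pow_mem_hirzIdeal n a)
  have hy : ψ (X 1) = 0 := eq_zero_of_pow_eq_zero (n := 2) <| by
    simpa [hx, sq] using RingHom.mem_ker.1 (hψ (X_one_mul_mem_hirzIdeal n a))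
  fin_cases i
  exacts [hx, hy]

theorem exists_bind₁_lift_hirzRing (φ : HirzRing n a' →+* HirzRing n a) :
    ∃ f : Fin 2 → MvPolynomial (Fin 2) ℤ, (∀ i, constantCoeff (f i) = 0) ∧
      ∀ p, φ (Ideal.Quotient.mk _ p) = Ideal.Quotient.mk _ (bind₁ f p) := by
  obtain ⟨f, hf⟩ := exists_bind₁_lift φ.toIntAlgHom
  let ε : HirzRing n a →+* ℤ :=
    Ideal.Quotient.lift _ constantCoeff fun _ => constantCoeff_eq_zero_of_mem_hirzIdeal
  have hker : hirzIdeal n a' ≤ RingHom.ker ((ε.comp φ).comp (Ideal.Quotient.mk _)) :=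
    fun p hp => by simp [Ideal.Quotient.eq_zero_iff_mem.2 hp]
  refine ⟨f, fun i => ?_, hf⟩
  have hφ : φ (Ideal.Quotient.mk _ (X i)) = Ideal.Quotient.mk _ (f i) := by
    rw [← bind₁_X_right f i]
    exact hf (X i)
  simpa [hφ, ε] using map_X_eq_zero_of_hirzIdeal_le_ker hker i

theorem jacAtZero_eq_of_sub_mem_hirzIdeal {τ : Type*} (hn : n ≠ 0)
    {f g : τ → MvPolynomial (Fin 2) ℤ} (h : ∀ k, f k - g k ∈ hirzIdeal n a) :
    jacAtZero f = jacAtZero g := by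
  ext k i
  have hk : gradAtZero (f k) = gradAtZero (g k) := by
    rw [← sub_add_cancel (f k) (g k), gradAtZero_add,
      gradAtZero_eq_zero_of_mem_hirzIdeal hn (h k), zero_add]
  exact congrFun hk i

theorem dvd_of_hirzRing_ringEquiv (hn : 2 ≤ n) (φ : HirzRing n a' ≃+* HirzRing n a) : a ∣ a' := by
  obtain ⟨f, hf₀, hf⟩ := exists_bind₁_lift_hirzRing (φ : HirzRing n a' →+* HirzRing n a)
  obtain ⟨g, -, hg⟩ := exists_bind₁_lift_hirzRing (φ.symm : HirzRing n a →+* HirzRing n a')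
  have hfg (i : Fin 2) : bind₁ f (g i) - X i ∈ hirzIdeal n a := by
    have hgX := hg (X i)
    rw [bind₁_X_right] at hgX
    rw [← Ideal.Quotient.eq, ← hf, ← hgX]
    simp
  have hJ : jacAtZero g * jacAtZero f = 1 := by
    rw [← jacAtZero_bind₁ hf₀, jacAtZero_eq_of_sub_mem_hirzIdeal (by lia) hfg, jacAtZero_X]
  have hrel := X_one_mul_mem_hirzIdeal n a'
  have hmem : bind₁ f (X 1 * (X 1 + C a' * X 0)) ∈ hirzIdeal n a := by
    rw [← Ideal.Quotient.eq_zero_iff_mem, ← hf, Ideal.Quotient.eq_zero_iff_mem.2 hrel, map_zero]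
  obtain ⟨c, hc⟩ := exists_hessAtZero_eq_smul_of_mem_hirzIdeal hn hmem
  rw [hessAtZero_bind₁ hf₀ (gradAtZero_eq_zero_of_mem_hirzIdeal (by lia) hrel),
    hessAtZero_X_one_mul_add] at hc
  exact dvd_of_transpose_mul_mul_eq_smul (Matrix.isUnit_det_of_left_inverse hJ) hc

/-- The involution `y ↦ -y` of `ℤ[x,y]`, which exchanges the ideals of `a` and `-a`. -/
noncomputable def negYEquiv : MvPolynomial (Fin 2) ℤ ≃ₐ[ℤ] MvPolynomial (Fin 2) ℤ :=
  have hinv : (aeval ![X 0, -X 1]).comp (aeval ![X 0, -X 1]) =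
      AlgHom.id ℤ (MvPolynomial (Fin 2) ℤ) :=
    MvPolynomial.algHom_ext fun i => by fin_cases i <;> simp
  AlgEquiv.ofAlgHom (aeval ![X 0, -X 1]) (aeval ![X 0, -X 1]) hinv hinv

theorem negYEquiv_X_zero : negYEquiv (X 0) = X 0 := by
  simp [negYEquiv]

theorem negYEquiv_X_one : negYEquiv (X 1) = -X 1 := by
  simp [negYEquiv]

theorem map_negYEquiv_hirzIdeal (n : ℕ) (a : ℤ) :
    (hirzIdeal n (-a)).map (negYEquiv : MvPolynomial (Fin 2) ℤ →+* MvPolynomial (Fin 2) ℤ) =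
      hirzIdeal n a := by
  have hx : negYEquiv (X 0 ^ (n + 1)) = X 0 ^ (n + 1) := by
    rw [map_pow, negYEquiv_X_zero]
  have hy : negYEquiv (X 1 * (X 1 + C (-a) * X 0)) = X 1 * (X 1 + C a * X 0) := by
    have hC : negYEquiv (C a) = C a := negYEquiv.commutes a
    simp only [map_mul, map_add, map_neg, hC, negYEquiv_X_zero, negYEquiv_X_one]
    ring
  rw [hirzIdeal, Ideal.map_span, Set.image_pair, RingHom.coe_coe, hx, hy, hirzIdeal]

/-- The graded isomorphism induced by `y ↦ -y`. -/
noncomputable def hirzRingNegEquiv (n : ℕ) (a : ℤ) : HirzRing n (-a) ≃+* HirzRing n a :=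
  Ideal.quotientEquiv _ _ negYEquiv.toRingEquiv (map_negYEquiv_hirzIdeal n a).symm

theorem hirzRingNegEquiv_image_hirzDegTwo (n : ℕ) (a : ℤ) :
    hirzRingNegEquiv n a '' hirzDegTwo n (-a) = hirzDegTwo n a := by
  have hx : hirzRingNegEquiv n a (Ideal.Quotient.mk _ (X 0)) = Ideal.Quotient.mk _ (X 0) :=
    congrArg (Ideal.Quotient.mk _) negYEquiv_X_zero
  have hy : hirzRingNegEquiv n a (Ideal.Quotient.mk _ (X 1)) = -Ideal.Quotient.mk _ (X 1) :=
    congrArg (Ideal.Quotient.mk _) negYEquiv_X_one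
  let L := (hirzRingNegEquiv n a).toAddMonoidHom.toIntLinearMap
  have hL : (hirzDegTwo n (-a)).map L = hirzDegTwo n a := by
    rw [Submodule.map_span, Set.image_pair]
    change Submodule.span ℤ {hirzRingNegEquiv n a _, hirzRingNegEquiv n a _} = _
    rw [hx, hy, Submodule.span_insert, ← Set.neg_singleton, Submodule.span_neg,
      ← Submodule.span_insert]
  exact congrArg SetLike.coe hL

end HirzRing

theorem stmt11_general (n : ℕ) (hn : 2 ≤ n) (a a' : ℤ) :
    List.TFAE [
      ∃ φ : HirzRing n a' ≃+* HirzRing n a, φ '' hirzDegTwo n a' = hirzDegTwo n a,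
      Nonempty (HirzRing n a' ≃+* HirzRing n a),
      a' = a ∨ a' = -a] := by
  tfae_have 1 → 2 := fun ⟨φ, _⟩ => ⟨φ⟩
  tfae_have 2 → 3 := fun ⟨φ⟩ => Int.associated_iff.1 <|
    associated_of_dvd_dvd (dvd_of_hirzRing_ringEquiv hn φ.symm) (dvd_of_hirzRing_ringEquiv hn φ)
  tfae_have 3 → 1 := by
    rintro (rfl | rfl)
    · exact ⟨RingEquiv.refl _, by simp⟩
    · exact ⟨hirzRingNegEquiv n a, hirzRingNegEquiv_image_hirzDegTwo n a⟩
  tfae_finish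

/-- Case 1 of Theorem 6.1, `n₁ ≥ 2`, `n₂ = 1`: the rings
`ℤ[x,y]/(x^{n+1}, y(y + a'x))` and `ℤ[x,y]/(x^{n+1}, y(y + ax))` are isomorphic as
graded rings if and only if `a' = ±a`. -/
theorem stmt11 (n : ℕ) (hn : 2 ≤ n) (a a' : ℤ) :
    (∃ φ : (MvPolynomial (Fin 2) ℤ ⧸ hirzIdeal n a') ≃+*
        (MvPolynomial (Fin 2) ℤ ⧸ hirzIdeal n a),
      φ '' (Submodule.span ℤ
          {Ideal.Quotient.mk (hirzIdeal n a') (X 0),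
           Ideal.Quotient.mk (hirzIdeal n a') (X 1)} :
            Set (MvPolynomial (Fin 2) ℤ ⧸ hirzIdeal n a')) =
        (Submodule.span ℤ
          {Ideal.Quotient.mk (hirzIdeal n a) (X 0),
           Ideal.Quotient.mk (hirzIdeal n a) (X 1)} :
            Set (MvPolynomial (Fin 2) ℤ ⧸ hirzIdeal n a))) ↔
    (a' = a ∨ a' = -a) :=
  (stmt11_general n hn a a').out 0 2
end

section
/- Let n_1 ≥ 1 and n_2 ≥ 2 be integers, and let a_1,…,a_{n_2} be integers with a_i ≠ 0 for at least one i. If α, β are integers such that (α x̄ + β ȳ)^{n_1+1} = 0 in the ring ℤ[x,y]/(x^{n_1+1}, y·∏_{i=1}^{n_2}(y + a_i x)), then β = 0. -/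
open MvPolynomial

/-!
The degree `n₁ + 1` part of the hypothesis reads `(αx + βy) ^ (n₁ + 1) = c x ^ (n₁ + 1) + B g` with
`c` a constant and `g = y ∏ (y + aᵢ x)`; setting `x = 1`, `y = t` shows that `t ∏ (t + aᵢ)` divides
`(βt + α) ^ (n₁ + 1) - c`. Suppose `β ≠ 0`. If `c ≠ 0`, this polynomial has only simple roots, and
at most two of them because `±` is the only ambiguity in extracting a root in an ordered ring; but
`t ∏ (t + aᵢ)` contributes `n₂ + 1 ≥ 3` roots. If `c = 0`, all its roots are equal, so every `-aᵢ`
equals the root `0`.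
-/

section Graded

variable {ι σ A : Type*} [DecidableEq ι] [AddRightCancelMonoid ι] [CommRing A] [SetLike σ A]
  [AddSubmonoidClass σ A] (𝒜 : ι → σ) [GradedRing 𝒜]

theorem exists_sub_mul_mem_of_mem_span_singleton_sup {I : Ideal A} (hI : I.IsHomogeneous 𝒜) {d : ι}
    {f p : A} (hf : f ∈ 𝒜 d) (hp : p ∈ 𝒜 d) (h : f ∈ Ideal.span {p} ⊔ I) :
    ∃ c ∈ 𝒜 0, f - c * p ∈ I := by
  obtain ⟨q, b, hb, hqb⟩ := Ideal.mem_span_singleton_sup.mp h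
  refine ⟨DirectSum.decompose 𝒜 q 0, SetLike.coe_mem _, ?_⟩
  have hqp : (DirectSum.decompose 𝒜 (q * p) d : A) = DirectSum.decompose 𝒜 q 0 * p := by
    rw [← DirectSum.coe_decompose_mul_add_of_right_mem 𝒜 hp, zero_add]
  have hfd : (DirectSum.decompose 𝒜 f d : A) = f := DirectSum.decompose_of_mem_same 𝒜 hf
  have hbd : (DirectSum.decompose 𝒜 b d : A) = f - DirectSum.decompose 𝒜 q 0 * p := by
    rw [← hqp, eq_sub_iff_add_eq', ← AddMemClass.coe_add, ← DirectSum.add_apply,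
      ← DirectSum.decompose_add, hqb, hfd]
  exact hbd ▸ hI d hb

end Graded

theorem exists_dvd_sub_C_mul_of_mem_span_pair {σ R : Type*} [CommRing R] {d k : ℕ}
    {f p g : MvPolynomial σ R} (hf : f.IsHomogeneous d) (hp : p.IsHomogeneous d)
    (hg : g.IsHomogeneous k) (h : f ∈ Ideal.span {p, g}) : ∃ c : R, g ∣ f - C c * p := by
  let _ : GradedAlgebra (homogeneousSubmodule σ R) := gradedAlgebra
  have hI : (Ideal.span {g}).IsHomogeneous (homogeneousSubmodule σ R) :=
    Ideal.homogeneous_span _ _ fun _ hx ↦ hx ▸ ⟨k, hg⟩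
  rw [Ideal.span_insert] at h
  obtain ⟨c, hc, hfc⟩ := exists_sub_mul_mem_of_mem_span_singleton_sup _ hI hf hp h
  rw [homogeneousSubmodule_zero, Submodule.mem_one] at hc
  obtain ⟨c, rfl⟩ := hc
  exact ⟨c, Ideal.mem_span_singleton.mp hfc⟩

section LinearForms

variable {R ι : Type*} [CommRing R] [Fintype ι] (a : ι → R)

theorem isHomogeneous_X_mul_prod_linear :
    (X 1 * ∏ i, (X 1 + C (a i) * X 0) : MvPolynomial (Fin 2) R).IsHomogeneous
      (1 + Fintype.card ι) := by
  rw [Fintype.card_eq_sum_ones]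
  exact (isHomogeneous_X R 1).mul <| .prod _ _ _ fun i _ ↦
    (isHomogeneous_X R 1).add (isHomogeneous_C_mul_X (a i) 0)

theorem exists_X_mul_prod_dvd_linear_pow_sub_C {d : ℕ} {α β : R}
    (h : (C α * X 0 + C β * X 1) ^ d ∈
      Ideal.span {(X 0 : MvPolynomial (Fin 2) R) ^ d, X 1 * ∏ i, (X 1 + C (a i) * X 0)}) :
    ∃ c : R, Polynomial.X * ∏ i, (Polynomial.X + Polynomial.C (a i)) ∣
      (Polynomial.C β * Polynomial.X + Polynomial.C α) ^ d - Polynomial.C c := by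
  have hlin : (C α * X 0 + C β * X 1 : MvPolynomial (Fin 2) R).IsHomogeneous 1 :=
    (isHomogeneous_C_mul_X α 0).add (isHomogeneous_C_mul_X β 1)
  obtain ⟨c, hc⟩ := exists_dvd_sub_C_mul_of_mem_span_pair (d := d) (by simpa using hlin.pow d)
    (isHomogeneous_X_pow 0 d) (isHomogeneous_X_mul_prod_linear a) h
  refine ⟨c, ?_⟩
  simpa [Polynomial.algebraMap_eq, add_comm] using
    map_dvd (aeval ![1, (Polynomial.X : Polynomial R)]) hc

theorem zero_cons_map_neg_le_roots_of_dvd [IsDomain R] {p : Polynomial R} (hp : p ≠ 0)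
    (h : Polynomial.X * ∏ i, (Polynomial.X + Polynomial.C (a i)) ∣ p) :
    0 ::ₘ Finset.univ.val.map (fun i ↦ -a i) ≤ p.roots := by
  rw [← Multiset.prod_X_sub_C_dvd_iff_le_roots hp]
  simpa using h

end LinearForms

section LinearPow

variable {R : Type*} [CommRing R] [IsDomain R] {a b c : R} {m : ℕ}

theorem linear_pow_sub_C_ne_zero (hb : b ≠ 0) (hm : m ≠ 0) :
    (Polynomial.C b * Polynomial.X + Polynomial.C a) ^ m - Polynomial.C c ≠ 0 := by
  intro h
  have hdeg := congrArg Polynomial.natDegree (sub_eq_zero.mp h)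
  rw [Polynomial.natDegree_pow, Polynomial.natDegree_linear hb, Polynomial.natDegree_C] at hdeg
  lia

theorem linear_pow_eq_of_mem_roots {x : R}
    (hx : x ∈ ((Polynomial.C b * Polynomial.X + Polynomial.C a) ^ m - Polynomial.C c).roots) :
    (b * x + a) ^ m = c := by
  simpa using (Polynomial.mem_roots_sub_C'.mp hx).2

theorem eq_of_linear_pow_eq_zero (hb : b ≠ 0) {x y : R} (hx : (b * x + a) ^ m = 0)
    (hy : (b * y + a) ^ m = 0) : x = y :=
  mul_left_cancel₀ hb (add_right_cancel
    ((eq_zero_of_pow_eq_zero hx).trans (eq_zero_of_pow_eq_zero hy).symm))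

theorem nodup_roots_linear_pow_sub_C [CharZero R] (hb : b ≠ 0) (hc : c ≠ 0) (hm : m ≠ 0) :
    ((Polynomial.C b * Polynomial.X + Polynomial.C a) ^ m - Polynomial.C c).roots.Nodup := by
  classical
  refine Multiset.nodup_iff_count_le_one.mpr fun x ↦ ?_
  rw [Polynomial.count_roots]
  by_contra! hmult
  obtain ⟨hroot, hderiv⟩ := (Polynomial.one_lt_rootMultiplicity_iff_isRoot
    (linear_pow_sub_C_ne_zero hb hm)).mp hmult
  have hpow : (b * x + a) ^ m = c := by simpa [sub_eq_zero] using hroot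
  have hlin : b * x + a = 0 := by
    have hprod : m * (b * x + a) ^ (m - 1) * b = 0 := by
      simpa [Polynomial.derivative_pow] using hderiv
    simp only [mul_eq_zero, Nat.cast_eq_zero, hm, hb, false_or, or_false] at hprod
    exact eq_zero_of_pow_eq_zero hprod
  exact hc (by rw [← hpow, hlin, zero_pow hm])

end LinearPow

section Ordered

variable {R : Type*} [CommRing R] [LinearOrder R] [IsStrictOrderedRing R] {a b c : R} {m : ℕ}

theorem card_le_two_of_forall_linear_pow_eq (hb : b ≠ 0) (hm : m ≠ 0)
    {s : Finset R} (hs : ∀ x ∈ s, (b * x + a) ^ m = c) : s.card ≤ 2 := by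
  by_contra! hcard
  obtain ⟨x, hx, y, hy, z, hz, hxy, hxz, hyz⟩ := Finset.two_lt_card.mp hcard
  have eq_neg_of_ne {u v : R} (hu : u ∈ s) (hv : v ∈ s) (huv : u ≠ v) :
      b * u + a = -(b * v + a) := by
    rcases (pow_eq_pow_iff_of_ne_zero hm).mp ((hs u hu).trans (hs v hv).symm) with h | h
    · exact absurd (mul_left_cancel₀ hb (add_right_cancel h)) huv
    · exact h.1
  have hneg : b * y + a = b * z + a :=
    neg_injective ((eq_neg_of_ne hx hy hxy).symm.trans (eq_neg_of_ne hx hz hxz))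
  exact hyz (mul_left_cancel₀ hb (add_right_cancel hneg))

theorem card_roots_linear_pow_sub_C_le_two (hb : b ≠ 0) (hc : c ≠ 0) (hm : m ≠ 0) :
    ((Polynomial.C b * Polynomial.X + Polynomial.C a) ^ m - Polynomial.C c).roots.card ≤ 2 := by
  rw [← Multiset.toFinset_card_of_nodup (nodup_roots_linear_pow_sub_C hb hc hm)]
  exact card_le_two_of_forall_linear_pow_eq hb hm fun x hx ↦
    linear_pow_eq_of_mem_roots (Multiset.mem_toFinset.mp hx)

end Ordered

theorem stmt13_general {R ι : Type*} [CommRing R] [LinearOrder R] [IsStrictOrderedRing R]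
    [Fintype ι] [Nontrivial ι] (n : ℕ) (a : ι → R) (ha : ∃ i, a i ≠ 0) (α β : R)
    (h : (Ideal.Quotient.mk (Ideal.span {(X 0 : MvPolynomial (Fin 2) R) ^ (n + 1),
      X 1 * ∏ i, (X 1 + C (a i) * X 0)}) (C α * X 0 + C β * X 1)) ^ (n + 1) = 0) :
    β = 0 := by
  rw [← map_pow, Ideal.Quotient.eq_zero_iff_mem] at h
  obtain ⟨c, hdvd⟩ := exists_X_mul_prod_dvd_linear_pow_sub_C a h
  by_contra hβ
  have hroots := zero_cons_map_neg_le_roots_of_dvd a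
    (linear_pow_sub_C_ne_zero hβ n.succ_ne_zero) hdvd
  rcases eq_or_ne c 0 with rfl | hc
  · obtain ⟨i, hi⟩ := ha
    have hzero : (β * 0 + α) ^ (n + 1) = 0 :=
      linear_pow_eq_of_mem_roots (Multiset.mem_of_le hroots (Multiset.mem_cons_self 0 _))
    have hneg : (β * -a i + α) ^ (n + 1) = 0 :=
      linear_pow_eq_of_mem_roots (Multiset.mem_of_le hroots
        (Multiset.mem_cons_of_mem (Multiset.mem_map_of_mem _ (Finset.mem_univ_val i))))
    exact hi (neg_eq_zero.mp (eq_of_linear_pow_eq_zero hβ hneg hzero))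
  · have hle := (Multiset.card_le_card hroots).trans
      (card_roots_linear_pow_sub_C_le_two hβ hc n.succ_ne_zero)
    have hcard : 1 < Fintype.card ι := Fintype.one_lt_card
    rw [Multiset.card_cons, Multiset.card_map, Finset.card_val, Finset.card_univ] at hle
    lia

/-- Lemma 6.2: if `n₂ ≥ 2` and some `aᵢ ≠ 0`, then
`(α x̄ + β ȳ)^{n₁+1} = 0` in `ℤ[x,y]/(x^{n₁+1}, y ∏ (y + aᵢ x))` forces `β = 0`. -/
theorem stmt13 (n₁ n₂ : ℕ) (hn₁ : 1 ≤ n₁) (hn₂ : 2 ≤ n₂) (a : Fin n₂ → ℤ)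
    (ha : ∃ i, a i ≠ 0) (α β : ℤ)
    (h : (Ideal.Quotient.mk (twoStageIdeal n₁ n₂ a) (C α * X 0 + C β * X 1)) ^ (n₁ + 1)
      = 0) :
    β = 0 := by
  have : Nontrivial (Fin n₂) := Fin.nontrivial_iff_two_le.mpr hn₂
  exact stmt13_general n₁ a ha α β h
end

section
/- Let n_1 > n_2 ≥ 1 be integers and let a_1,…,a_{n_2} be integers with a_i ≠ 0 for at least one i. Then for every pair of integers (α, β) ≠ (0, 0), one has (α x̄ + β ȳ)^{n_1} ≠ 0 in the ring ℤ[x,y]/(x^{n_1+1}, y·∏_{i=1}^{n_2}(y + a_i x)). -/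
/-! On the line `t ↦ t • v`, a form of degree `d` restricts to its value at `v` times `t ^ d`. The
form `y ∏ (y + aᵢ x)` vanishes at `v = (1, 0)` and at `v = (1, -aᵢ)`, so on each of these lines the
ideal restricts into `(t ^ (n₁ + 1))`, and a form of degree `n₁` in the ideal must vanish at `v`.
If `(α x + β y) ^ n₁` lies in the ideal, this gives `α = 0` and `α - β aᵢ = 0`, and `aᵢ ≠ 0` for
some `i` forces `β = 0`. -/

open MvPolynomial

open scoped Polynomial

section RestrictToLine

variable {σ R : Type*} [CommSemiring R]

/-- Restriction of polynomial functions to the line `t ↦ t • v` through the origin, with the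
parameter `t` as the variable of `R[X]`. It reads off values of forms at `v`, graded by degree. -/
noncomputable def restrictToLine (v : σ → R) : MvPolynomial σ R →ₐ[R] R[X] :=
  aeval fun i ↦ Polynomial.C (v i) * Polynomial.X

theorem restrictToLine_of_isHomogeneous (v : σ → R) {p : MvPolynomial σ R} {d : ℕ}
    (hp : p.IsHomogeneous d) :
    restrictToLine v p = Polynomial.C (eval v p) * Polynomial.X ^ d := by
  rw [restrictToLine, aeval_def, eval₂_eq, eval_eq, map_sum, Finset.sum_mul]
  refine Finset.sum_congr rfl fun m hm ↦ ?_
  have hm_degree : ∑ i ∈ m.support, m i = d := (hp.degree_eq_sum_deg_support hm).symm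
  simp only [mul_pow, Finset.prod_mul_distrib, Finset.prod_pow_eq_pow_sum, hm_degree, map_mul,
    map_prod, map_pow, Polynomial.algebraMap_eq, mul_assoc]

theorem X_pow_dvd_restrictToLine_of_mem_span {S : Set (MvPolynomial σ R)} {v : σ → R} {n : ℕ}
    (hS : ∀ f ∈ S, Polynomial.X ^ n ∣ restrictToLine v f) {p : MvPolynomial σ R}
    (hp : p ∈ Ideal.span S) : Polynomial.X ^ n ∣ restrictToLine v p := by
  have hle : Ideal.span S ≤ (Ideal.span {Polynomial.X ^ n}).comap (restrictToLine v) :=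
    Ideal.span_le.mpr fun f hf ↦ Ideal.mem_span_singleton.mpr (hS f hf)
  exact Ideal.mem_span_singleton.mp (hle hp)

theorem eval_eq_zero_of_isHomogeneous_of_mem_span {S : Set (MvPolynomial σ R)} {v : σ → R} {d : ℕ}
    (hS : ∀ f ∈ S, ∃ m, f.IsHomogeneous m ∧ (eval v f = 0 ∨ d < m)) {p : MvPolynomial σ R}
    (hp : p.IsHomogeneous d) (hpS : p ∈ Ideal.span S) : eval v p = 0 := by
  have hdvd : Polynomial.X ^ (d + 1) ∣ restrictToLine v p := by
    refine X_pow_dvd_restrictToLine_of_mem_span (fun f hf ↦ ?_) hpS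
    obtain ⟨m, hfm, hfv | hdm⟩ := hS f hf
    · simp [restrictToLine_of_isHomogeneous v hfm, hfv]
    · rw [restrictToLine_of_isHomogeneous v hfm]
      exact dvd_mul_of_dvd_right (pow_dvd_pow _ hdm) _
  rw [restrictToLine_of_isHomogeneous v hp] at hdvd
  simpa using Polynomial.X_pow_dvd_iff.mp hdvd d d.lt_succ_self

end RestrictToLine

section BinaryForms

variable {R : Type*} [CommSemiring R]

theorem isHomogeneous_C_mul_X_add_C_mul_X (α β : R) :
    (C α * X 0 + C β * X 1 : MvPolynomial (Fin 2) R).IsHomogeneous 1 :=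
  (isHomogeneous_C_mul_X α 0).add (isHomogeneous_C_mul_X β 1)

theorem isHomogeneous_X_mul_prod_X_add_C_mul_X {ι : Type*} [Fintype ι] (a : ι → R) :
    (X 1 * ∏ i, (X 1 + C (a i) * X 0) : MvPolynomial (Fin 2) R).IsHomogeneous
      (Fintype.card ι + 1) := by
  have hprod : (∏ i, (X 1 + C (a i) * X 0) : MvPolynomial (Fin 2) R).IsHomogeneous
      (∑ _i : ι, 1) :=
    .prod _ _ _ fun i _ ↦ (isHomogeneous_X R 1).add (isHomogeneous_C_mul_X (a i) 0)
  simpa [add_comm] using (isHomogeneous_X R 1).mul hprod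

theorem add_mul_eq_zero_of_pow_mem_span [IsReduced R] {ι : Type*} [Fintype ι] {n : ℕ} {a : ι → R}
    {α β c : R} (hc : c * ∏ i, (c + a i) = 0)
    (h : (C α * X 0 + C β * X 1 : MvPolynomial (Fin 2) R) ^ n ∈
      Ideal.span {X 0 ^ (n + 1), X 1 * ∏ i, (X 1 + C (a i) * X 0)}) :
    α + β * c = 0 := by
  have hpow : ((C α * X 0 + C β * X 1 : MvPolynomial (Fin 2) R) ^ n).IsHomogeneous n := by
    simpa only [one_mul] using (isHomogeneous_C_mul_X_add_C_mul_X α β).pow n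
  have heval : eval ![1, c] ((C α * X 0 + C β * X 1) ^ n) = 0 := by
    refine eval_eq_zero_of_isHomogeneous_of_mem_span ?_ hpow h
    rintro f (rfl | rfl)
    · exact ⟨n + 1, isHomogeneous_X_pow 0 (n + 1), .inr n.lt_succ_self⟩
    · exact ⟨_, isHomogeneous_X_mul_prod_X_add_C_mul_X a, .inl (by simpa [eval_prod] using hc)⟩
  exact eq_zero_of_pow_eq_zero (n := n) (by simpa using heval)

end BinaryForms

theorem stmt14_general {R ι : Type*} [CommRing R] [IsDomain R] [Fintype ι] (n : ℕ) (a : ι → R)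
    (ha : ∃ i, a i ≠ 0) (α β : R) (hαβ : ¬(α = 0 ∧ β = 0)) :
    (Ideal.Quotient.mk
      (Ideal.span {X 0 ^ (n + 1), X 1 * ∏ i, (X 1 + C (a i) * X 0)} :
        Ideal (MvPolynomial (Fin 2) R)) (C α * X 0 + C β * X 1)) ^ n ≠ 0 := by
  rw [← map_pow, Ne, Ideal.Quotient.eq_zero_iff_mem]
  intro hmem
  obtain ⟨i, hi⟩ := ha
  have hα : α = 0 := by
    simpa using add_mul_eq_zero_of_pow_mem_span (zero_mul _) hmem
  have hroot : -a i * ∏ j, (-a i + a j) = 0 := by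
    rw [Finset.prod_eq_zero (Finset.mem_univ i) (neg_add_cancel (a i)), mul_zero]
  have hβ : β * -a i = 0 := by
    simpa only [hα, zero_add] using add_mul_eq_zero_of_pow_mem_span hroot hmem
  exact hαβ ⟨hα, (mul_eq_zero.mp hβ).resolve_right (neg_ne_zero.mpr hi)⟩

/-- key claim in the proof of Corollary 6.3: if `n₁ > n₂ ≥ 1` and some
`aᵢ ≠ 0`, then no nonzero degree-2 element `α x̄ + β ȳ` of
`ℤ[x,y]/(x^{n₁+1}, y ∏ (y + aᵢ x))` has vanishing `n₁`-th power. -/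
theorem stmt14 (n₁ n₂ : ℕ) (hn₂ : 1 ≤ n₂) (hn : n₂ < n₁) (a : Fin n₂ → ℤ)
    (ha : ∃ i, a i ≠ 0) (α β : ℤ) (hαβ : ¬(α = 0 ∧ β = 0)) :
    (Ideal.Quotient.mk (twoStageIdeal n₁ n₂ a) (C α * X 0 + C β * X 1)) ^ n₁ ≠ 0 :=
  stmt14_general n₁ a ha α β hαβ
end

section
/- Let a, b, c be integers and let R = ℚ[y_1,y_2,y_3]/(y_1², y_2(a y_1 + y_2), y_3(b y_1 + c y_2 + y_3)). Then there exist rational numbers q_1, q_2, q_3 with q_3 ≠ 0 such that (q_1 ȳ_1 + q_2 ȳ_2 + q_3 ȳ_3)² = 0 in R if and only if c(2b − ac) = 0. -/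
/-! The relations are quadratic forms, so the degree-2 part of the ideal they generate is their
linear span. The square of a linear form `q₁ y₁ + q₂ y₂ + q₃ y₃` lies in that span if and only if
its mixed terms are the ones forced by its pure squares `qᵢ² yᵢ²`, which gives the equations
`2 q₁ q₂ = a q₂²`, `2 q₁ q₃ = b q₃²` and `2 q₂ q₃ = c q₃²`. When `q₃ ≠ 0`, the last two say that
`(q₁, q₂, q₃)` is proportional to `(b, c, 2)`, and the first one becomes `c (2 b - a c) = 0`. -/

open MvPolynomial

/-- The ideal `(y₁², y₂(a y₁ + y₂), y₃(b y₁ + c y₂ + y₃))` of `ℚ[y₁,y₂,y₃]` (with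
`yᵢ = X (i-1)`), defining the rational cohomology ring of the 3-stage Bott manifold
with twisting data `(a, b, c)`. -/
noncomputable def bott3Ideal (a b c : ℤ) : Ideal (MvPolynomial (Fin 3) ℚ) :=
  Ideal.span {X 0 ^ 2, X 1 * (C (a : ℚ) * X 0 + X 1),
    X 2 * (C (b : ℚ) * X 0 + C (c : ℚ) * X 1 + X 2)}

section HomogeneousGenerators

variable {σ R : Type*} [CommSemiring R]

attribute [local instance] MvPolynomial.gradedAlgebra

theorem homogeneousComponent_mul_of_isHomogeneous_right {n : ℕ} (p : MvPolynomial σ R)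
    {g : MvPolynomial σ R} (hg : g.IsHomogeneous n) :
    homogeneousComponent n (p * g) = C (coeff 0 p) * g := by
  have h_decompose (f : MvPolynomial σ R) (i : ℕ) :
      (DirectSum.decompose (homogeneousSubmodule σ R) f i : MvPolynomial σ R) =
        homogeneousComponent i f :=
    decomposition.decompose'_apply f i
  have h_mul := DirectSum.coe_decompose_mul_add_of_right_mem (homogeneousSubmodule σ R) (a := p)
    (i := 0) hg
  simpa only [h_decompose, zero_add, homogeneousComponent_zero] using h_mul

theorem homogeneousComponent_mem_span_of_mem_ideal_span {n : ℕ} {S : Set (MvPolynomial σ R)}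
    (hS : ∀ g ∈ S, g.IsHomogeneous n) {f : MvPolynomial σ R} (hf : f ∈ Ideal.span S) :
    homogeneousComponent n f ∈ Submodule.span R S := by
  induction hf using Submodule.closure_induction with
  | zero => simp only [map_zero, zero_mem]
  | add f g _ _ hf hg => simpa only [map_add] using add_mem hf hg
  | smul_mem p g hg =>
    rw [smul_eq_mul, homogeneousComponent_mul_of_isHomogeneous_right p (hS g hg), ← smul_eq_C_mul]
    exact Submodule.smul_mem _ _ (Submodule.mem_span_of_mem hg)

theorem mem_ideal_span_iff_mem_span_of_isHomogeneous {n : ℕ} {S : Set (MvPolynomial σ R)}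
    (hS : ∀ g ∈ S, g.IsHomogeneous n) {f : MvPolynomial σ R} (hf : f.IsHomogeneous n) :
    f ∈ Ideal.span S ↔ f ∈ Submodule.span R S := by
  refine ⟨fun h ↦ ?_, fun h ↦ Submodule.span_le_restrictScalars R (MvPolynomial σ R) S h⟩
  simpa only [homogeneousComponent_eq_self hf] using
    homogeneousComponent_mem_span_of_mem_ideal_span hS h

end HomogeneousGenerators

section BottRelations

variable {R : Type*} [CommRing R]

/-- The defining relations of the cohomology ring of the 3-stage Bott manifold with twisting data
`(a, b, c)`, over an arbitrary coefficient ring and with `yᵢ = X (i-1)`. They are kept as a set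
because both their linear span and the ideal they generate are needed. -/
def bottRelations (a b c : R) : Set (MvPolynomial (Fin 3) R) :=
  {X 0 ^ 2, X 1 * (C a * X 0 + X 1), X 2 * (C b * X 0 + C c * X 1 + X 2)}

theorem isHomogeneous_of_mem_bottRelations {a b c : R} {g : MvPolynomial (Fin 3) R}
    (hg : g ∈ bottRelations a b c) : g.IsHomogeneous 2 := by
  have hX (i : Fin 3) : (X i : MvPolynomial (Fin 3) R).IsHomogeneous 1 := isHomogeneous_X R i
  have hCX (r : R) (i : Fin 3) : (C r * X i).IsHomogeneous 1 := isHomogeneous_C_mul_X r i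
  rcases hg with rfl | rfl | rfl
  · exact (hX 0).pow 2
  · exact (hX 1).mul ((hCX a 0).add (hX 1))
  · exact (hX 2).mul (((hCX b 0).add (hCX c 1)).add (hX 2))

theorem sq_linear_mem_span_bottRelations_iff (a b c q₁ q₂ q₃ : R) :
    (C q₁ * X 0 + C q₂ * X 1 + C q₃ * X 2) ^ 2 ∈ Submodule.span R (bottRelations a b c) ↔
      2 * q₁ * q₂ = a * q₂ ^ 2 ∧ 2 * q₁ * q₃ = b * q₃ ^ 2 ∧ 2 * q₂ * q₃ = c * q₃ ^ 2 := by
  simp only [bottRelations, Submodule.mem_span_triple, smul_eq_C_mul]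
  constructor
  · rintro ⟨α, β, γ, h⟩
    have h_eval (x y z : R) :
        α * x ^ 2 + β * (y * (a * x + y)) + γ * (z * (b * x + c * y + z)) =
          (q₁ * x + q₂ * y + q₃ * z) ^ 2 := by
      simpa using congrArg (eval ![x, y, z]) h
    have hα : α = q₁ ^ 2 := by linear_combination h_eval 1 0 0
    have hβ : β = q₂ ^ 2 := by linear_combination h_eval 0 1 0
    have hγ : γ = q₃ ^ 2 := by linear_combination h_eval 0 0 1
    subst hα hβ hγ
    refine ⟨?_, ?_, ?_⟩
    · linear_combination -h_eval 1 1 0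
    · linear_combination -h_eval 1 0 1
    · linear_combination -h_eval 0 1 1
  · rintro ⟨h₁₂, h₁₃, h₂₃⟩
    refine ⟨q₁ ^ 2, q₂ ^ 2, q₃ ^ 2, ?_⟩
    have hC₁₂ := congrArg (C (σ := Fin 3)) h₁₂
    have hC₁₃ := congrArg (C (σ := Fin 3)) h₁₃
    have hC₂₃ := congrArg (C (σ := Fin 3)) h₂₃
    simp only [map_mul, map_pow, map_ofNat] at hC₁₂ hC₁₃ hC₂₃ ⊢
    linear_combination -X 0 * X 1 * hC₁₂ - X 0 * X 2 * hC₁₃ - X 1 * X 2 * hC₂₃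

theorem mk_linear_sq_eq_zero_iff (a b c q₁ q₂ q₃ : R) :
    Ideal.Quotient.mk (Ideal.span (bottRelations a b c))
        (C q₁ * X 0 + C q₂ * X 1 + C q₃ * X 2) ^ 2 = 0 ↔
      2 * q₁ * q₂ = a * q₂ ^ 2 ∧ 2 * q₁ * q₃ = b * q₃ ^ 2 ∧ 2 * q₂ * q₃ = c * q₃ ^ 2 := by
  have h_linear : (C q₁ * X 0 + C q₂ * X 1 + C q₃ * X 2 : MvPolynomial (Fin 3) R).IsHomogeneous 1 :=
    ((isHomogeneous_C_mul_X q₁ 0).add (isHomogeneous_C_mul_X q₂ 1)).add (isHomogeneous_C_mul_X q₃ 2)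
  rw [← map_pow, Ideal.Quotient.eq_zero_iff_mem, mem_ideal_span_iff_mem_span_of_isHomogeneous
    (fun _ ↦ isHomogeneous_of_mem_bottRelations) (h_linear.pow 2),
    sq_linear_mem_span_bottRelations_iff]

theorem exists_mixed_coeff_eqs_iff [NoZeroDivisors R] (h2 : (2 : R) ≠ 0) (a b c : R) :
    (∃ q₁ q₂ q₃ : R, q₃ ≠ 0 ∧
      2 * q₁ * q₂ = a * q₂ ^ 2 ∧ 2 * q₁ * q₃ = b * q₃ ^ 2 ∧ 2 * q₂ * q₃ = c * q₃ ^ 2) ↔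
    c * (2 * b - a * c) = 0 := by
  constructor
  · rintro ⟨q₁, q₂, q₃, hq₃, h₁₂, h₁₃, h₂₃⟩
    have hq₁ : 2 * q₁ = b * q₃ := mul_right_cancel₀ hq₃ (by linear_combination h₁₃)
    have hq₂ : 2 * q₂ = c * q₃ := mul_right_cancel₀ hq₃ (by linear_combination h₂₃)
    have h : q₃ ^ 2 * (c * (2 * b - a * c)) = 0 := by
      linear_combination 4 * h₁₂ - 2 * c * q₃ * hq₁ + (a * (2 * q₂ + c * q₃) - 4 * q₁) * hq₂
    exact (mul_eq_zero.mp h).resolve_left (pow_ne_zero 2 hq₃)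
  · intro h
    exact ⟨b, c, 2, h2, by linear_combination h, by ring, by ring⟩

end BottRelations

theorem stmt15_general {R : Type*} [CommRing R] [NoZeroDivisors R] (h2 : (2 : R) ≠ 0) (a b c : R) :
    (∃ q₁ q₂ q₃ : R, q₃ ≠ 0 ∧
      (Ideal.Quotient.mk (Ideal.span (bottRelations a b c))
        (C q₁ * X 0 + C q₂ * X 1 + C q₃ * X 2)) ^ 2 = 0) ↔
    c * (2 * b - a * c) = 0 := by
  simp only [mk_linear_sq_eq_zero_iff, exists_mixed_coeff_eqs_iff h2]

/-- equivalence (2) ⇔ (3) of Lemma 7.2: the rational cohomology ring of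
a 3-stage Bott manifold has a square-zero degree-2 element with nonzero `ȳ₃`-coefficient
if and only if `c(2b − ac) = 0`. -/
theorem stmt15 (a b c : ℤ) :
    (∃ q₁ q₂ q₃ : ℚ, q₃ ≠ 0 ∧
      (Ideal.Quotient.mk (bott3Ideal a b c) (C q₁ * X 0 + C q₂ * X 1 + C q₃ * X 2)) ^ 2
        = 0) ↔
    c * (2 * b - a * c) = 0 := by
  exact_mod_cast stmt15_general (R := ℚ) two_ne_zero a b c
end
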